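/- arXiv:1212.1529 — 6 statements merged into one kernel-verified Lean document; each statement's English description precedes it below -/
import Mathlib

section
/- The class na(B_u) satisfies the Ramsey property: for all structures (A, <_A), (B, <_B) in na(B_u) such that (A, <_A) embeds into (B, <_B), and every integer k ≥ 2, there exists a structure (C, <_C) in na(B_u) such that for every coloring of the copies of (A, <_A) in (C, <_C) with k colors there is a copy B' of (B, <_B) in (C, <_C) all of whose copies of (A, <_A) receive the same color. -/
/-- A finite Boolean algebra with one distinguished subset and a distinguished binary
relation (the linear ordering). -/
structure OrdAlgU : Type 1 where
  carrier : Type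
  [ba : BooleanAlgebra carrier]
  [fin : Fintype carrier]
  P : Set carrier
  lt : carrier → carrier → Prop

attribute [instance] OrdAlgU.ba OrdAlgU.fin

namespace OrdAlgU

/-- The predicate is a (nontrivial) ideal. -/
def Ideal (A : OrdAlgU) : Prop :=
  (⊤ : A.carrier) ∉ A.P ∧
  (∀ x ∈ A.P, ∀ y : A.carrier, y ≤ x → y ∈ A.P) ∧
  (∀ x ∈ A.P, ∀ y ∈ A.P, x ⊔ y ∈ A.P)

/-- The ordering is proper on atoms: every atom in `P` precedes every atom not in `P`. -/
def Proper (A : OrdAlgU) : Prop :=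
  ∀ a b : A.carrier, IsAtom a → IsAtom b → a ∈ A.P → b ∉ A.P → A.lt a b

/-- The ordering is natural: a strict total (i.e. linear) order whose restriction to the
atoms is proper, and which is the antilexicographical extension of its restriction to atoms:
for distinct `a`, `b`, `a < b` iff the `<`-greatest atom lying below exactly one of `a`, `b`
lies below `b`. -/
def Natural (A : OrdAlgU) : Prop :=
  IsStrictTotalOrder A.carrier A.lt ∧ A.Proper ∧
  ∀ a b : A.carrier, a ≠ b →
    (A.lt a b ↔ ∃ c : A.carrier, IsAtom c ∧ c ≤ b ∧ ¬ c ≤ a ∧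
      ∀ d : A.carrier, IsAtom d → ¬ (d ≤ a ↔ d ≤ b) → d = c ∨ A.lt d c)

/-- Membership in the class `na(B_u)`: a naturally ordered finite Boolean algebra with an
ideal `P` such that exactly one atom does not belong to `P`. -/
def InNaBu (A : OrdAlgU) : Prop :=
  A.Ideal ∧ A.Natural ∧ ∃! a : A.carrier, IsAtom a ∧ a ∉ A.P

/-- An embedding: an injective map preserving `⊔`, `⊓`, `ᶜ`, `⊥`, `⊤`, the linear order
and the predicate. -/
structure Emb (A B : OrdAlgU) : Type where
  toFun : A.carrier → B.carrier
  inj : Function.Injective toFun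
  map_sup : ∀ x y : A.carrier, toFun (x ⊔ y) = toFun x ⊔ toFun y
  map_inf : ∀ x y : A.carrier, toFun (x ⊓ y) = toFun x ⊓ toFun y
  map_compl : ∀ x : A.carrier, toFun xᶜ = (toFun x)ᶜ
  map_bot : toFun ⊥ = ⊥
  map_top : toFun ⊤ = ⊤
  map_lt : ∀ x y : A.carrier, A.lt x y ↔ B.lt (toFun x) (toFun y)
  map_P : ∀ x : A.carrier, x ∈ A.P ↔ toFun x ∈ B.P

/-- The copies of `A` in `C`: images of embeddings of `A` into `C`. -/
def Copies (A C : OrdAlgU) : Set (Set C.carrier) :=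
  {S | ∃ e : Emb A C, Set.range e.toFun = S}

end OrdAlgU

/-!
STATEMENT 8: The class na(B_u) satisfies the Ramsey property.
-/

/-!
An embedding of naturally ordered algebras is dual to a surjection between the sets of atoms. When
the atoms are numbered in decreasing order, so that `0` is the atom outside the ideal, preservation
of the orders says that the surjection is rigid (values first appear in increasing order), and
preservation of the ideals that it fixes `0`. Hence copies correspond to parameter words with one
constant letter, and the claim is an instance of the Graham–Rothschild theorem. If the ideal of `B`
is empty, `B` has just two elements and every copy in `B` is all of `B`.

The Graham–Rothschild theorem is proved by downward induction on the number `t` of constant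
letters. The case of `t + 1` letters makes the colour of a word depend only on the part before the
first occurrence of its first parameter; the Hales–Jewett theorem then makes it depend only on the
position of that occurrence; and the pigeonhole principle on positions makes it constant.
-/

namespace DualRamsey

universe u

/-! ### Parameter words -/

/-- `i` is a position where `f` takes the value `v` for the first time, all earlier values being
smaller than `v`. A map with such a position for every `v` is a rigid surjection. -/
structure FirstAt (f : ℕ → ℕ) (v i : ℕ) : Prop where
  eq : f i = v
  lt : ∀ j < i, f j < v

/-- `f` codes a word of length `N` over `{0, …, n - 1}` whose first `t` entries spell out the
letters `0, …, t - 1` and in which the parameters `t, …, n - 1` make their first appearances in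
increasing order, that is, a rigid surjection from `N` onto `n` fixing the numbers below `t`.
Beyond `N` the code continues as a shift, so that substituting `g` for the letters of `f` is the
composition `g ∘ f`. -/
structure IsParameterWord (t N n : ℕ) (f : ℕ → ℕ) : Prop where
  letter : ∀ i < t, f i = i
  lt : ∀ i < N, f i < n
  tail : ∀ j, f (N + j) = n + j
  first : ∀ v, t ≤ v → v < n → ∃ i, FirstAt f v i

variable {t N M m n : ℕ} {f g : ℕ → ℕ}

namespace FirstAt

variable {v i j : ℕ}

lemma unique (hi : FirstAt f v i) (hj : FirstAt f v j) : i = j := by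
  rcases lt_trichotomy i j with h | h | h
  · exact absurd hi.eq (hj.lt i h).ne
  · exact h
  · exact absurd hj.eq (hi.lt j h).ne

lemma comp (hg : FirstAt g v i) (hf : FirstAt f i j) : FirstAt (g ∘ f) v j where
  eq := by rw [Function.comp_apply, hf.eq, hg.eq]
  lt k hk := hg.lt _ (hf.lt k hk)

end FirstAt

namespace IsParameterWord

protected lemma id (t N : ℕ) : IsParameterWord t N N id where
  letter _ _ := rfl
  lt _ h := h
  tail _ := rfl
  first v _ _ := ⟨v, rfl, fun _ h => h⟩

lemma exists_firstAt (hf : IsParameterWord t N n f) (v : ℕ) : ∃ i, FirstAt f v i := by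
  rcases lt_or_ge v t with hvt | htv
  · refine ⟨v, hf.letter v hvt, fun j hj => ?_⟩
    rwa [hf.letter j (hj.trans hvt)]
  rcases lt_or_ge v n with hvn | hnv
  · exact hf.first v htv hvn
  obtain ⟨k, rfl⟩ := Nat.exists_eq_add_of_le hnv
  refine ⟨N + k, hf.tail k, fun j hj => ?_⟩
  rcases lt_or_ge j N with hjN | hNj
  · exact (hf.lt j hjN).trans_le hnv
  · obtain ⟨l, rfl⟩ := Nat.exists_eq_add_of_le hNj
    rw [hf.tail]
    omega

lemma comp (hf : IsParameterWord t N m f) (hg : IsParameterWord t m n g) :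
    IsParameterWord t N n (g ∘ f) where
  letter i hi := by rw [Function.comp_apply, hf.letter i hi, hg.letter i hi]
  lt i hi := hg.lt _ (hf.lt i hi)
  tail j := by rw [Function.comp_apply, hf.tail, hg.tail]
  first v _ _ := by
    obtain ⟨i, hi⟩ := hg.exists_firstAt v
    obtain ⟨j, hj⟩ := hf.exists_firstAt i
    exact ⟨j, hi.comp hj⟩

lemma of_succ (hf : IsParameterWord (t + 1) N n f) : IsParameterWord t N n f where
  letter i hi := hf.letter i (hi.trans t.lt_succ_self)
  lt := hf.lt
  tail := hf.tail
  first v _ _ := hf.exists_firstAt v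

lemma succ (hf : IsParameterWord t N n f) (hft : f t = t) : IsParameterWord (t + 1) N n f where
  letter i hi := by
    rcases (Nat.lt_succ_iff.1 hi).eq_or_lt with rfl | hit
    exacts [hft, hf.letter i hit]
  lt := hf.lt
  tail := hf.tail
  first v _ _ := hf.exists_firstAt v

lemma apply_length (hf : IsParameterWord t N n f) : f N = n := hf.tail 0

lemma le_of_firstAt (hf : IsParameterWord t N n f) {v i : ℕ} (hi : FirstAt f v i)
    (hv : v ≤ n) : i ≤ N := by
  by_contra! h
  exact absurd (hi.lt N h) (hf.apply_length ▸ hv.not_gt)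

lemma lt_of_firstAt (hf : IsParameterWord t N n f) {v i : ℕ} (hi : FirstAt f v i)
    (hv : v < n) : i < N := by
  refine (hf.le_of_firstAt hi hv.le).lt_of_ne ?_
  rintro rfl
  exact hv.ne (hi.eq.symm.trans hf.apply_length)

lemma ge_of_firstAt (hf : IsParameterWord t N n f) {v i : ℕ} (hi : FirstAt f v i)
    (hv : t ≤ v) : t ≤ i := by
  by_contra! h
  have := hf.letter i h
  have := hi.eq
  omega

lemma finite_setOf (t N n : ℕ) : {f | IsParameterWord t N n f}.Finite := by
  refine Set.finite_coe_iff.1 (Finite.of_injective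
    (fun f (i : Fin N) => (⟨f.1 i, f.2.lt i i.2⟩ : Fin n)) fun f g hfg => Subtype.ext ?_)
  funext i
  rcases lt_or_ge i N with hi | hi
  · exact congrArg Fin.val (congrFun hfg ⟨i, hi⟩)
  · obtain ⟨j, rfl⟩ := Nat.exists_eq_add_of_le hi
    rw [f.2.tail, g.2.tail]

end IsParameterWord

/-- The increasing enumeration of the numbers other than `t`. As a substitution, `g ∘ skip t`
drops position `t` of the word `g`. -/
def skip (t i : ℕ) : ℕ := if i < t then i else i + 1

/-- The substitution of the letter `a` for the parameter `t`; the later parameters move down by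
one. -/
def fill (t a i : ℕ) : ℕ := if i < t then i else if i = t then a else i - 1

/-- The word obtained from `f` by inserting a new parameter `t` at position `t` (the letter filled
in by `fill` is irrelevant). -/
def lift (t : ℕ) (f : ℕ → ℕ) : ℕ → ℕ := Function.update (skip t ∘ f ∘ fill t 0) t t

lemma skip_of_lt {i : ℕ} (h : i < t) : skip t i = i := if_pos h

lemma skip_of_le {i : ℕ} (h : t ≤ i) : skip t i = i + 1 := if_neg h.not_gt

lemma skip_strictMono (t : ℕ) : StrictMono (skip t) := fun i j h => by
  unfold skip
  split_ifs <;> omega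

lemma skip_ne (t i : ℕ) : skip t i ≠ t := by
  unfold skip
  split_ifs <;> omega

lemma eq_or_exists_skip (t i : ℕ) : i = t ∨ ∃ j, i = skip t j := by
  rcases lt_trichotomy i t with h | h | h
  · exact Or.inr ⟨i, (skip_of_lt h).symm⟩
  · exact Or.inl h
  · exact Or.inr ⟨i - 1, by rw [skip_of_le (by omega)]; omega⟩

lemma fill_self (t a : ℕ) : fill t a t = a := by simp [fill]

lemma fill_of_lt {a i : ℕ} (h : i < t) : fill t a i = i := if_pos h

lemma fill_skip (t a i : ℕ) : fill t a (skip t i) = i := by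
  unfold fill skip
  split_ifs <;> omega

lemma lift_self (t : ℕ) (f : ℕ → ℕ) : lift t f t = t := Function.update_self ..

lemma lift_skip (t : ℕ) (f : ℕ → ℕ) (i : ℕ) : lift t f (skip t i) = skip t (f i) := by
  rw [lift, Function.update_of_ne (skip_ne t i), Function.comp_apply, Function.comp_apply,
    fill_skip]

lemma eq_comp_skip_comp_fill {a : ℕ} (hg : ∀ i < t, g i = i) (hgt : g t = a) (ha : a < t) :
    g = g ∘ skip t ∘ fill t a := by
  funext i
  obtain rfl | ⟨j, rfl⟩ := eq_or_exists_skip t i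
  · simp only [Function.comp_apply, fill_self, skip_of_lt ha, hg a ha, hgt]
  · simp only [Function.comp_apply, fill_skip]

lemma FirstAt.comp_skip {v j : ℕ} (h : FirstAt g v (skip t j)) : FirstAt (g ∘ skip t) v j where
  eq := h.eq
  lt _ hi := h.lt _ (skip_strictMono t hi)

namespace IsParameterWord

protected lemma fill {a : ℕ} (ha : a < t) (htN : t ≤ N) :
    IsParameterWord t (N + 1) N (fill t a) where
  letter _ hi := fill_of_lt hi
  lt i hi := by
    unfold fill
    split_ifs <;> omega
  tail j := by
    unfold fill
    split_ifs <;> omega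
  first v hv _ := by
    refine ⟨v + 1, ?_, fun j hj => ?_⟩ <;> unfold fill <;> split_ifs <;> omega

protected lemma lift (hf : IsParameterWord t N n f) (htN : t ≤ N) (htn : t ≤ n) :
    IsParameterWord (t + 1) (N + 1) (n + 1) (lift t f) where
  letter i hi := by
    obtain rfl | ⟨j, rfl⟩ := eq_or_exists_skip t i
    · exact lift_self _ f
    · have hj : j < t := by
        by_contra! h
        rw [skip_of_le h] at hi
        omega
      rw [lift_skip, hf.letter j hj]
  lt i hi := by
    obtain rfl | ⟨j, rfl⟩ := eq_or_exists_skip t i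
    · rw [lift_self]
      omega
    · rw [← skip_of_le htN] at hi
      rw [lift_skip, ← skip_of_le htn]
      exact skip_strictMono t (hf.lt j ((skip_strictMono t).lt_iff_lt.1 hi))
  tail j := by
    rw [show N + 1 + j = skip t (N + j) by rw [skip_of_le (by omega)]; omega, lift_skip, hf.tail,
      skip_of_le (by omega)]
    omega
  first v hv hvn := by
    obtain ⟨w, rfl⟩ : ∃ w, v = skip t w := (eq_or_exists_skip t v).resolve_left (by omega)
    obtain ⟨i, hi⟩ := hf.exists_firstAt w
    refine ⟨skip t i, by rw [lift_skip, hi.eq], fun j hj => ?_⟩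
    obtain rfl | ⟨k, rfl⟩ := eq_or_exists_skip t j
    · rw [lift_self]
      omega
    · rw [lift_skip]
      exact skip_strictMono t (hi.lt k ((skip_strictMono t).lt_iff_lt.1 hj))

lemma comp_skip (hg : IsParameterWord t (N + 1) n g) (htN : t ≤ N) (hgt : g t < t) :
    IsParameterWord t N n (g ∘ skip t) where
  letter i hi := by rw [Function.comp_apply, skip_of_lt hi, hg.letter i hi]
  lt i hi := hg.lt _ (skip_of_le htN ▸ skip_strictMono t hi)
  tail j := by
    rw [Function.comp_apply, skip_of_le (by omega), ← hg.tail]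
    congr 1
    omega
  first v hv _ := by
    obtain ⟨i, hi⟩ := hg.exists_firstAt v
    obtain rfl | ⟨j, rfl⟩ := eq_or_exists_skip t i
    · exact absurd hi.eq (hgt.trans_le hv).ne
    · exact ⟨j, hi.comp_skip⟩

end IsParameterWord

lemma comp_lift_eq {a : ℕ} (hf : IsParameterWord t N m f) (hg : IsParameterWord t (m + 1) n g)
    (hgt : g t = a) (ha : a < t) : g ∘ lift t f = (g ∘ skip t) ∘ f ∘ fill t a := by
  have hlift : ∀ i < t, (g ∘ lift t f) i = i := fun i hi => by
    rw [Function.comp_apply, ← skip_of_lt hi, lift_skip, hf.letter i hi, skip_of_lt hi,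
      hg.letter i hi]
  rw [eq_comp_skip_comp_fill hlift (by rwa [Function.comp_apply, lift_self]) ha]
  funext i
  simp only [Function.comp_apply, lift_skip]

/-- The word `w` with the block `u` inserted at position `t`. -/
def insertBlock (t : ℕ) {p : ℕ} (u : Fin p → ℕ) (w : ℕ → ℕ) (i : ℕ) : ℕ :=
  if i < t then w i else if h : i - t < p then u ⟨i - t, h⟩ else w (i - p)

lemma comp_insertBlock {p : ℕ} (u : Fin p → ℕ) (w : ℕ → ℕ) :
    g ∘ insertBlock t u w = insertBlock t (g ∘ u) (g ∘ w) := by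
  funext i
  simp only [Function.comp_apply, insertBlock, apply_ite g, apply_dite g]

lemma IsParameterWord.insertBlock_skip {p : ℕ} {u : Fin p → ℕ} (hu : ∀ i, u i ≤ t)
    (hut : ∃ i, u i = t) (htN : t ≤ N) :
    IsParameterWord t (p + N) (N + 1) (insertBlock t u (skip t)) where
  letter i hi := by rw [insertBlock, if_pos hi, skip_of_lt hi]
  lt i hi := by
    unfold insertBlock skip
    have := fun h => hu ⟨i - t, h⟩
    grind
  tail j := by
    unfold insertBlock skip
    grind
  first v hv hvN := by
    rcases hv.eq_or_lt with rfl | hv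
    · obtain ⟨i, hi, hmin⟩ := wellFounded_lt.has_min {i | u i = t} hut
      refine ⟨t + i, by simp [insertBlock, hi.out], fun j hj => ?_⟩
      unfold insertBlock skip
      split_ifs with hjt hjp
      · exact hjt
      · refine (hu _).lt_of_ne fun h => hmin _ h ?_
        rw [Fin.lt_def]
        simp only
        omega
      all_goals omega
    · refine ⟨p + (v - 1), ?_, fun j hj => ?_⟩
      · unfold insertBlock skip
        grind
      · unfold insertBlock skip
        have := fun h => hu ⟨j - t, h⟩
        grind

/-- The Hales–Jewett theorem applied simultaneously to all words of length `N`. -/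
lemma exists_fill_invariant {κ : Type u} [Finite κ] (n : ℕ) (htN : t ≤ N) :
    ∃ M, t ≤ M ∧ ∀ χ : (ℕ → ℕ) → κ, ∃ w, IsParameterWord t M (N + 1) w ∧
      ∀ h, IsParameterWord t N n h → ∀ a < t, ∀ b < t,
        χ (h ∘ fill t a ∘ w) = χ (h ∘ fill t b ∘ w) := by
  have := (IsParameterWord.finite_setOf t N n).to_subtype
  obtain ⟨p, hp⟩ := Combinatorics.Subspace.exists_mono_in_high_dimension_fin (Fin t)
    ({h | IsParameterWord t N n h} → κ) Unit
  refine ⟨p + N, by omega, fun χ => ?_⟩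
  obtain ⟨l, c, hl⟩ := hp fun u h => χ (h.1 ∘ insertBlock t (Fin.val ∘ u) id)
  let u : Fin p → ℕ := fun i => (l.idxFun i).elim Fin.val fun _ => t
  have hu : ∀ i, u i ≤ t := fun i => by
    dsimp only [u]
    cases l.idxFun i with
    | inl b => exact b.2.le
    | inr _ => exact le_rfl
  have hut : ∃ i, u i = t := (l.proper ()).imp fun i hi => by simp only [u, hi, Sum.elim_inr]
  have fill_eq : ∀ a : Fin t,
      fill t a ∘ insertBlock t u (skip t) = insertBlock t (Fin.val ∘ l fun _ => a) id := fun a => by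
    rw [comp_insertBlock]
    congr 1
    · funext i
      simp only [Function.comp_apply, Combinatorics.Subspace.apply_def, u]
      cases l.idxFun i with
      | inl b => exact fill_of_lt b.2
      | inr _ => exact fill_self t a
    · exact funext (fill_skip t a)
  refine ⟨insertBlock t u (skip t), .insertBlock_skip hu hut htN, fun h hh a ha b hb => ?_⟩
  have color : ∀ a : Fin t, χ (h ∘ fill t a ∘ insertBlock t u (skip t)) = c ⟨h, hh⟩ := fun a => by
    rw [fill_eq, ← hl fun _ => a]
  exact (color ⟨a, ha⟩).trans (color ⟨b, hb⟩).symm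

/-! ### The Graham–Rothschild theorem -/

/-- On the words in `IsParameterWord t N n`, the colour given by `χ` depends only on the part
preceding the first occurrence of the parameter `t`. -/
def DependsOnPrefix (t N n : ℕ) {κ : Type u} (χ : (ℕ → ℕ) → κ) : Prop :=
  ∀ g g' q, IsParameterWord t N n g → IsParameterWord t N n g' → FirstAt g t q → FirstAt g' t q →
    (∀ i < q, g i = g' i) → χ g = χ g'

/-- On the words in `IsParameterWord t N n`, the colour given by `χ` depends only on the position
of the first occurrence of the parameter `t`. -/
def DependsOnPosition (t N n : ℕ) {κ : Type u} (χ : (ℕ → ℕ) → κ) : Prop :=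
  ∀ g g' q, IsParameterWord t N n g → IsParameterWord t N n g' → FirstAt g t q → FirstAt g' t q →
    χ g = χ g'

/-- The Graham–Rothschild property: in every finite colouring of the words with parameters
`t, …, n - 1` and large enough length, some word with parameters `t, …, m - 1` has only
substitution instances of one colour. -/
def GrahamRothschild (t n : ℕ) : Prop :=
  ∀ m, t ≤ m → ∀ (κ : Type u) [Finite κ], ∃ N, t ≤ N ∧ ∀ χ : (ℕ → ℕ) → κ,
    ∃ F, IsParameterWord t N m F ∧ ∀ g g', IsParameterWord t m n g → IsParameterWord t m n g' →
      χ (g ∘ F) = χ (g' ∘ F)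

section Position

variable {κ : Type u} {χ : (ℕ → ℕ) → κ}

lemma DependsOnPrefix.comp (hχ : DependsOnPrefix t N n χ) (hf : IsParameterWord t N m f) :
    DependsOnPrefix t m n fun g => χ (g ∘ f) := by
  intro g g' q hg hg' hq hq' hpre
  obtain ⟨i, hi⟩ := hf.exists_firstAt q
  exact hχ _ _ i (hf.comp hg) (hf.comp hg') (hq.comp hi) (hq'.comp hi) fun j hj =>
    hpre _ (hi.lt j hj)

lemma DependsOnPosition.exists_factor (hχ : DependsOnPosition t N n χ) :
    ∃ c : ℕ → κ, ∀ g q, IsParameterWord t N n g → FirstAt g t q → χ g = c q := by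
  suffices ∀ q, ∃ k, ∀ g, IsParameterWord t N n g → FirstAt g t q → χ g = k by
    choose c hc using this
    exact ⟨c, fun g q => hc q g⟩
  intro q
  by_cases h : ∃ g, IsParameterWord t N n g ∧ FirstAt g t q
  · obtain ⟨g, hg, hgq⟩ := h
    exact ⟨χ g, fun g' hg' hgq' => hχ g' g q hg' hg hgq' hgq⟩
  · exact ⟨χ id, fun g hg hgq => absurd ⟨g, hg, hgq⟩ h⟩

lemma DependsOnPrefix.dependsOnPosition_self (htn : t ≤ n) (hχ : DependsOnPrefix t t n χ) :
    DependsOnPosition t t n χ := by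
  intro g g' q hg hg' hq hq'
  exact hχ g g' q hg hg' hq hq' fun i hi => by
    have hit := hi.trans_le (hg.le_of_firstAt hq htn)
    rw [hg.letter i hit, hg'.letter i hit]

lemma DependsOnPosition.comp_lift {w : ℕ → ℕ}
    (hpos : DependsOnPosition t m n fun g => χ (g ∘ f ∘ fill t 0 ∘ w))
    (htN : t ≤ N) (htm : t ≤ m) (ht : 0 < t) (hw : IsParameterWord t M (N + 1) w)
    (hf : IsParameterWord t N m f) (hχ : DependsOnPrefix t M n χ)
    (hinv : ∀ h, IsParameterWord t N n h → ∀ a < t, ∀ b < t,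
      χ (h ∘ fill t a ∘ w) = χ (h ∘ fill t b ∘ w)) :
    DependsOnPosition t (m + 1) n fun g => χ (g ∘ lift t f ∘ w) := by
  have hlift := (hf.lift htN htm).of_succ
  have color_eq : ∀ g, IsParameterWord t (m + 1) n g → g t < t →
      χ (g ∘ lift t f ∘ w) = χ ((g ∘ skip t) ∘ f ∘ fill t 0 ∘ w) := fun g hg hgt => by
    rw [← Function.comp_assoc, comp_lift_eq hf hg rfl hgt]
    exact hinv _ (hf.comp (hg.comp_skip htm hgt)) _ hgt _ ht
  intro g g' q hg hg' hq hq'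
  obtain rfl | htq := (hg.ge_of_firstAt hq le_rfl).eq_or_lt
  · exact (hχ.comp (hw.comp hlift)) g g' t hg hg' hq hq' fun i hi => by
      rw [hg.letter i hi, hg'.letter i hi]
  obtain ⟨p, rfl⟩ := (eq_or_exists_skip t q).resolve_left htq.ne'
  have hgt := hq.lt t htq
  have hgt' := hq'.lt t htq
  dsimp only
  rw [color_eq g hg hgt, color_eq g' hg' hgt']
  exact hpos _ _ p (hg.comp_skip htm hgt) (hg'.comp_skip htm hgt') hq.comp_skip hq'.comp_skip

lemma exists_dependsOnPosition (ht : 0 < t) (htn : t ≤ n) (κ : Type u) [Finite κ] (hm : t ≤ m) :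
    ∃ N, t ≤ N ∧ ∀ χ : (ℕ → ℕ) → κ, DependsOnPrefix t N n χ →
      ∃ F, IsParameterWord t N m F ∧ DependsOnPosition t m n fun g => χ (g ∘ F) := by
  induction m, hm using Nat.le_induction with
  | base =>
    exact ⟨t, le_rfl, fun χ hχ => ⟨id, .id t t, hχ.dependsOnPosition_self htn⟩⟩
  | succ m htm ih =>
    obtain ⟨N, htN, hN⟩ := ih
    obtain ⟨M, htM, hM⟩ := exists_fill_invariant (κ := κ) n htN
    refine ⟨M, htM, fun χ hχ => ?_⟩
    obtain ⟨w, hw, hinv⟩ := hM χ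
    obtain ⟨f, hf, hpos⟩ := hN _ (hχ.comp (hw.comp (.fill ht htN)))
    exact ⟨lift t f ∘ w, hw.comp (hf.lift htN htm).of_succ, hpos.comp_lift htN htm ht hw hf hχ hinv⟩

end Position

lemma DependsOnPrefix.comp_lift {κ : Type u} {χ : (ℕ → ℕ) → κ} {w : ℕ → ℕ}
    (hpre : DependsOnPrefix t m n fun g (a : Fin t) => χ (g ∘ f ∘ fill t a ∘ w))
    (htN : t ≤ N) (htm : t ≤ m) (hf : IsParameterWord t N m f)
    (hconst : ∀ g g', IsParameterWord (t + 1) (N + 1) n g → IsParameterWord (t + 1) (N + 1) n g' →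
      χ (g ∘ w) = χ (g' ∘ w)) :
    DependsOnPrefix t (m + 1) n fun g => χ (g ∘ lift t f ∘ w) := by
  intro g g' q hg hg' hq hq' heq
  obtain rfl | htq := (hg.ge_of_firstAt hq le_rfl).eq_or_lt
  · exact hconst _ _ ((hf.lift htN htm).comp (hg.succ hq.eq))
      ((hf.lift htN htm).comp (hg'.succ hq'.eq))
  obtain ⟨p, rfl⟩ := (eq_or_exists_skip t q).resolve_left htq.ne'
  have hgt := hq.lt t htq
  have hgt' := hq'.lt t htq
  have hskip := hpre _ _ p (hg.comp_skip htm hgt) (hg'.comp_skip htm hgt') hq.comp_skip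
    hq'.comp_skip fun i hi => heq _ (skip_strictMono t hi)
  dsimp only
  rw [← Function.comp_assoc, ← Function.comp_assoc, comp_lift_eq hf hg rfl hgt,
    comp_lift_eq hf hg' (heq t htq).symm hgt]
  exact congrFun hskip ⟨g t, hgt⟩

lemma exists_dependsOnPrefix (htn : t < n) (H : GrahamRothschild.{u} (t + 1) n) (hm : t ≤ m)
    (κ : Type u) [Finite κ] :
    ∃ N, t ≤ N ∧ ∀ χ : (ℕ → ℕ) → κ,
      ∃ F, IsParameterWord t N m F ∧ DependsOnPrefix t m n fun g => χ (g ∘ F) := by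
  induction m, hm using Nat.le_induction generalizing κ with
  | base =>
    exact ⟨t, le_rfl, fun χ => ⟨id, .id t t, fun g _ q hg _ hq =>
      absurd (hg.ge_of_firstAt hq le_rfl) (hg.lt_of_firstAt hq htn).not_ge⟩⟩
  | succ m htm ih =>
    obtain ⟨N, htN, hN⟩ := ih (Fin t → κ)
    obtain ⟨M, htM, hM⟩ := H (N + 1) (by omega) κ
    refine ⟨M, by omega, fun χ => ?_⟩
    obtain ⟨w, hw, hconst⟩ := hM χ
    obtain ⟨f, hf, hpre⟩ := hN fun h a => χ (h ∘ fill t a ∘ w)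
    exact ⟨lift t f ∘ w, (hw.comp (hf.lift htN htm)).of_succ, hpre.comp_lift htN htm hf hconst⟩

/-- The map collapsing everything outside `S` to `0` and enumerating `S` increasingly. -/
def collapse (S : ℕ → Prop) [DecidablePred S] (i : ℕ) : ℕ := if S i then Nat.count S i else 0

section Collapse

variable {S : ℕ → Prop} [DecidablePred S]

lemma firstAt_collapse {i : ℕ} (h0 : S 0) (hi : S i) :
    FirstAt (collapse S) (Nat.count S i) i where
  eq := if_pos hi
  lt j hj := by
    unfold collapse
    split_ifs with hSj
    · exact Nat.count_strict_mono hSj hj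
    · exact Nat.count_strict_mono h0 (j.zero_le.trans_lt hj)

lemma isParameterWord_collapse (ht : 0 < t) (hlow : ∀ i < t, S i) (hhigh : ∀ i, M ≤ i → S i) :
    IsParameterWord t M (Nat.count S M) (collapse S) where
  letter i hi := by
    rw [collapse, if_pos (hlow i hi), Nat.count_iff_forall.2 fun j hj => hlow j (hj.trans hi)]
  lt i hi := by
    unfold collapse
    split_ifs with hSi
    · exact Nat.count_strict_mono hSi hi
    · exact Nat.count_strict_mono (hlow 0 ht) (i.zero_le.trans_lt hi)
  tail j := by
    rw [collapse, if_pos (hhigh _ (by omega)), Nat.count_add,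
      Nat.count_iff_forall.2 fun k _ => hhigh _ (M.le_add_right k)]
  first v _ _ := by
    have hinf : (Set.ofPred S).Infinite := (Set.Ici_infinite M).mono hhigh
    have := firstAt_collapse (hlow 0 ht) (Nat.nth_mem_of_infinite hinf v)
    rw [Nat.count_nth_of_infinite hinf] at this
    exact ⟨_, this⟩

end Collapse

lemma exists_collapse (ht : 0 < t) {T : Finset ℕ} (hT : T ⊆ Finset.Ico t M) (htM : t ≤ M) :
    ∃ H, IsParameterWord t M (t + T.card) H ∧ ∀ i, t ≤ i → i < M → H i ≠ 0 → i ∈ T := by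
  let S : ℕ → Prop := fun i => i < t ∨ i ∈ T ∨ M ≤ i
  have hcount : Nat.count S M = t + T.card := by
    have hfilter : (Finset.range M).filter S = Finset.range t ∪ T := by
      ext i
      have := @hT i
      simp only [S, Finset.mem_filter, Finset.mem_range, Finset.mem_union, Finset.mem_Ico] at this ⊢
      grind
    have hdisj : Disjoint (Finset.range t) T := Finset.disjoint_left.2 fun i hi hiT => by
      have := Finset.mem_Ico.1 (hT hiT)
      have := Finset.mem_range.1 hi
      omega
    rw [Nat.count_eq_card_filter_range, hfilter, Finset.card_union_of_disjoint hdisj,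
      Finset.card_range]
  refine ⟨collapse S, hcount ▸ isParameterWord_collapse ht (fun _ => Or.inl)
    fun _ h => Or.inr (Or.inr h), fun i hti hiM hi => ?_⟩
  have hSi : S i := of_not_not fun h => hi (if_neg h)
  exact (hSi.resolve_left hti.not_gt).resolve_right hiM.not_ge

lemma exists_constant_on_firstAt (ht : 0 < t) (htm : t ≤ m) (κ : Type u) [Finite κ] :
    ∃ M, t ≤ M ∧ ∀ c : ℕ → κ, ∃ H, IsParameterWord t M m H ∧
      ∃ k, ∀ q Q, t ≤ q → q < m → FirstAt H q Q → c Q = k := by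
  classical
  cases nonempty_fintype κ
  refine ⟨t + Fintype.card κ * (m - t), by omega, fun c => ?_⟩
  have : Nonempty κ := ⟨c 0⟩
  obtain ⟨k, -, hk⟩ := Finset.exists_le_card_fiber_of_mul_le_card_of_maps_to
    (s := Finset.Ico t (t + Fintype.card κ * (m - t))) (t := Finset.univ) (f := c) (n := m - t)
    (fun _ _ => Finset.mem_univ _) Finset.univ_nonempty (by simp)
  obtain ⟨T, hT, hTcard⟩ := Finset.exists_subset_card_eq hk
  obtain ⟨H, hH, hHT⟩ := exists_collapse ht (hT.trans (Finset.filter_subset _ _)) (by omega)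
  rw [hTcard, Nat.add_sub_cancel' htm] at hH
  refine ⟨H, hH, k, fun q Q hq hqm hQ => (Finset.mem_filter.1 (hT (hHT Q ?_ ?_ ?_))).2⟩
  · exact hH.ge_of_firstAt hQ hq
  · exact hH.lt_of_firstAt hQ hqm
  · rw [hQ.eq]
    omega

lemma IsParameterWord.firstAt_length (hg : IsParameterWord t N t g) : FirstAt g t N :=
  ⟨hg.apply_length, hg.lt⟩

lemma dependsOnPrefix_self {κ : Type u} (χ : (ℕ → ℕ) → κ) : DependsOnPrefix t N t χ := by
  intro g g' q hg hg' hq _ heq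
  obtain rfl := hq.unique hg.firstAt_length
  congr 1
  funext i
  rcases lt_or_ge i q with hi | hi
  · exact heq i hi
  · obtain ⟨j, rfl⟩ := Nat.exists_eq_add_of_le hi
    rw [hg.tail, hg'.tail]

lemma GrahamRothschild.self (ht : 0 < t) : GrahamRothschild.{u} t t := by
  intro m htm κ _
  obtain ⟨N, htN, hN⟩ := exists_dependsOnPosition ht le_rfl κ htm
  refine ⟨N, htN, fun χ => ?_⟩
  obtain ⟨F, hF, hpos⟩ := hN χ (dependsOnPrefix_self χ)
  exact ⟨F, hF, fun g g' hg hg' => hpos g g' m hg hg' hg.firstAt_length hg'.firstAt_length⟩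

lemma GrahamRothschild.of_succ (ht : 0 < t) (htn : t < n) (H : GrahamRothschild.{u} (t + 1) n) :
    GrahamRothschild.{u} t n := by
  intro m htm κ _
  obtain ⟨L, htL, hL⟩ := exists_constant_on_firstAt ht htm κ
  obtain ⟨M, htM, hM⟩ := exists_dependsOnPosition ht htn.le κ htL
  obtain ⟨N, htN, hN⟩ := exists_dependsOnPrefix htn H htM κ
  refine ⟨N, htN, fun χ => ?_⟩
  obtain ⟨F₁, hF₁, hpre⟩ := hN χ
  obtain ⟨F₂, hF₂, hposition⟩ := hM _ hpre
  obtain ⟨c, hc⟩ := hposition.exists_factor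
  obtain ⟨F₃, hF₃, k, hk⟩ := hL c
  have color_eq : ∀ g, IsParameterWord t m n g → χ (g ∘ F₃ ∘ F₂ ∘ F₁) = k := fun g hg => by
    obtain ⟨q, hq⟩ := hg.exists_firstAt t
    obtain ⟨Q, hQ⟩ := hF₃.exists_firstAt q
    exact (hc _ Q (hF₃.comp hg) (hq.comp hQ)).trans
      (hk q Q (hg.ge_of_firstAt hq le_rfl) (hg.lt_of_firstAt hq htn) hQ)
  exact ⟨F₃ ∘ F₂ ∘ F₁, hF₁.comp (hF₂.comp hF₃), fun g g' hg hg' =>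
    (color_eq g hg).trans (color_eq g' hg').symm⟩

theorem grahamRothschild (ht : 0 < t) (htn : t ≤ n) : GrahamRothschild.{u} t n := by
  induction htn using Nat.decreasingInduction with
  | self => exact .self ht
  | of_succ t htn ih => exact .of_succ ht htn (ih t.succ_pos)

end DualRamsey

namespace OrdAlgU

open DualRamsey

universe u

variable {A B C : OrdAlgU} {m n N : ℕ} {a : ℕ → A.carrier} {b : ℕ → B.carrier} {f g : ℕ → ℕ}

section Atoms

variable {α : Type*} [BooleanAlgebra α] {c x y : α}

lemma atom_le_compl_iff (hc : IsAtom c) : c ≤ xᶜ ↔ ¬ c ≤ x := by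
  rw [hc.not_le_iff_disjoint, le_compl_iff_disjoint_right]

lemma atom_le_sup_iff (hc : IsAtom c) : c ≤ x ⊔ y ↔ c ≤ x ∨ c ≤ y := by
  rw [← not_iff_not, not_or]
  simp only [hc.not_le_iff_disjoint, disjoint_sup_right]

end Atoms

/-! ### Naturally ordered algebras and their embeddings -/

/-- `a 0, …, a (n - 1)` are the atoms of `A` in decreasing order, the order in which the
antilexicographic comparison inspects them. The other values of `a` are irrelevant. -/
structure IsAtomEnum (A : OrdAlgU) (n : ℕ) (a : ℕ → A.carrier) : Prop where
  atom : ∀ i < n, IsAtom (a i)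
  surj : ∀ x, IsAtom x → ∃ i < n, a i = x
  lt_iff : ∀ i < n, ∀ j < n, (A.lt (a i) (a j) ↔ j < i)

namespace IsAtomEnum

lemma injOn (ha : A.IsAtomEnum n a) {i j : ℕ} (hi : i < n) (hj : j < n) (h : a i = a j) :
    i = j := by
  have hij := ha.lt_iff i hi j hj
  have hji := ha.lt_iff j hj i hi
  rw [h, ha.lt_iff j hj j hj] at hij hji
  omega

lemma le_iff (ha : A.IsAtomEnum n a) {i j : ℕ} (hi : i < n) (hj : j < n) :
    a i ≤ a j ↔ i = j := by
  rw [(ha.atom j hj).le_iff_eq (ha.atom i hi).1]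
  exact ⟨ha.injOn hi hj, congrArg a⟩

lemma ext (ha : A.IsAtomEnum n a) {x y : A.carrier} (h : ∀ i < n, (a i ≤ x ↔ a i ≤ y)) :
    x = y := by
  rw [BooleanAlgebra.eq_iff_atom_le_iff]
  intro c hc
  obtain ⟨i, hi, rfl⟩ := ha.surj c hc
  exact h i hi

lemma exists_greatest_atom_iff (ha : A.IsAtomEnum n a) (x y : A.carrier) :
    (∃ c, IsAtom c ∧ c ≤ y ∧ ¬ c ≤ x ∧
      ∀ d, IsAtom d → ¬ (d ≤ x ↔ d ≤ y) → d = c ∨ A.lt d c) ↔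
    ∃ v < n, a v ≤ y ∧ ¬ a v ≤ x ∧ ∀ w < v, (a w ≤ x ↔ a w ≤ y) := by
  constructor
  · rintro ⟨c, hc, hcy, hcx, hmax⟩
    obtain ⟨v, hv, rfl⟩ := ha.surj c hc
    refine ⟨v, hv, hcy, hcx, fun w hw => by_contra fun hdiff => ?_⟩
    rcases hmax (a w) (ha.atom w (hw.trans hv)) hdiff with h | h
    · exact hw.ne (ha.injOn (hw.trans hv) hv h)
    · exact hw.not_gt ((ha.lt_iff w (hw.trans hv) v hv).1 h)
  · rintro ⟨v, hv, hvy, hvx, hagree⟩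
    refine ⟨a v, ha.atom v hv, hvy, hvx, fun d hd hdiff => ?_⟩
    obtain ⟨w, hw, rfl⟩ := ha.surj d hd
    rcases lt_trichotomy w v with h | rfl | h
    · exact absurd (hagree w h) hdiff
    · exact Or.inl rfl
    · exact Or.inr ((ha.lt_iff w hw v hv).2 h)

lemma antilex (ha : A.IsAtomEnum n a) (hA : A.Natural) (x y : A.carrier) :
    A.lt x y ↔ ∃ v < n, a v ≤ y ∧ ¬ a v ≤ x ∧ ∀ w < v, (a w ≤ x ↔ a w ≤ y) := by
  rcases eq_or_ne x y with rfl | hxy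
  · have := hA.1.irrefl x
    refine iff_of_false this ?_
    rintro ⟨v, -, hv, hv', -⟩
    exact hv' hv
  · rw [hA.2.2 x y hxy, ha.exists_greatest_atom_iff]

end IsAtomEnum

lemma exists_fin_equiv_of_isStrictTotalOrder {α : Type*} [Fintype α] {r : α → α → Prop}
    (hr : IsStrictTotalOrder α r) :
    ∃ e : Fin (Fintype.card α) ≃ α, ∀ i j, r (e i) (e j) ↔ i < j := by
  classical
  let _ : LinearOrder α := linearOrderOfSTO r
  let e := Fintype.orderIsoFinOfCardEq α rfl
  exact ⟨e.toEquiv, fun _ _ => e.lt_iff_lt⟩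

lemma Natural.exists_isAtomEnum (hA : A.Natural) : ∃ n a, A.IsAtomEnum n a := by
  classical
  let T := {x : A.carrier // IsAtom x}
  have := hA.1
  have hT : IsStrictTotalOrder T fun x y => A.lt y x :=
    (⟨Function.Embedding.subtype _, Iff.rfl⟩ :
      (fun x y : T => A.lt y x) ↪r Function.swap A.lt).isStrictTotalOrder
  obtain ⟨e, he⟩ := exists_fin_equiv_of_isStrictTotalOrder hT
  let a : ℕ → A.carrier := fun i => if h : i < Fintype.card T then e ⟨i, h⟩ else ⊥
  have a_eq : ∀ i : Fin (Fintype.card T), a i = e i := fun i => dif_pos i.2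
  refine ⟨Fintype.card T, a, fun i hi => ?_, fun x hx => ?_, fun i hi j hj => ?_⟩
  · exact a_eq ⟨i, hi⟩ ▸ (e ⟨i, hi⟩).2
  · exact ⟨e.symm ⟨x, hx⟩, (e.symm ⟨x, hx⟩).2, by rw [a_eq, e.apply_symm_apply]⟩
  · exact a_eq ⟨i, hi⟩ ▸ a_eq ⟨j, hj⟩ ▸ he ⟨j, hj⟩ ⟨i, hi⟩

lemma InNaBu.pos_and_notMem_P (hB : B.InNaBu) (hb : B.IsAtomEnum m b) : 0 < m ∧ b 0 ∉ B.P := by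
  obtain ⟨-, ⟨-, hproper, -⟩, c, ⟨hc, hcP⟩, -⟩ := hB
  obtain ⟨i, hi, rfl⟩ := hb.surj c hc
  have hm : 0 < m := i.zero_le.trans_lt hi
  refine ⟨hm, fun h0 => ?_⟩
  exact absurd ((hb.lt_iff 0 hm i hi).1 (hproper _ _ (hb.atom 0 hm) hc h0 hcP)) i.not_lt_zero

lemma InNaBu.mem_P_iff (hB : B.InNaBu) (hbot : ⊥ ∈ B.P) {c : B.carrier} (hc : IsAtom c)
    (hcP : c ∉ B.P) (x : B.carrier) : x ∈ B.P ↔ ¬ c ≤ x := by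
  obtain ⟨⟨-, hdown, hsup⟩, -, hunique⟩ := hB
  refine ⟨fun hx hcx => hcP (hdown x hx c hcx), fun hcx => ?_⟩
  obtain ⟨y, ⟨hyP, hyx⟩, hmax⟩ := (Set.toFinite {y | y ∈ B.P ∧ y ≤ x}).exists_maximal
    ⟨⊥, hbot, bot_le⟩
  suffices x ≤ y from hdown y hyP x this
  refine BooleanAlgebra.le_iff_atom_le_imp.2 fun d hd hdx => ?_
  have hdP : d ∈ B.P := by_contra fun h => hcx (hunique.unique ⟨hd, h⟩ ⟨hc, hcP⟩ ▸ hdx)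
  exact le_sup_right.trans (hmax ⟨hsup y hyP d hdP, sup_le hyx hdx⟩ le_sup_left)

lemma InNaBu.eq_bot_or_eq_top (hB : B.InNaBu) (hbot : ⊥ ∉ B.P) (x : B.carrier) :
    x = ⊥ ∨ x = ⊤ := by
  obtain ⟨⟨-, hdown, -⟩, -, hunique⟩ := hB
  have notMem_P : ∀ y, y ∉ B.P := fun y hy => hbot (hdown y hy ⊥ bot_le)
  obtain rfl | ⟨c, hc, hcx⟩ := eq_bot_or_exists_atom_le x
  · exact Or.inl rfl
  obtain hx | ⟨d, hd, hdx⟩ := eq_bot_or_exists_atom_le xᶜ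
  · exact Or.inr (compl_eq_bot.1 hx)
  obtain rfl := hunique.unique ⟨hc, notMem_P c⟩ ⟨hd, notMem_P d⟩
  exact absurd hcx ((atom_le_compl_iff hc).1 hdx)

namespace Emb

lemma mono (e : Emb A B) {x y : A.carrier} (h : x ≤ y) : e.toFun x ≤ e.toFun y := by
  rw [← sup_eq_right.2 h, e.map_sup]
  exact le_sup_left

/-- Identity embedding. -/
protected def refl (A : OrdAlgU) : Emb A A where
  toFun := id
  inj := Function.injective_id
  map_sup _ _ := rfl
  map_inf _ _ := rfl
  map_compl _ := rfl
  map_bot := rfl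
  map_top := rfl
  map_lt _ _ := Iff.rfl
  map_P _ := Iff.rfl

lemma exists_factor (e' : Emb A C) (e : Emb B C) (h : Set.range e'.toFun ⊆ Set.range e.toFun) :
    ∃ d : Emb A B, ∀ x, e.toFun (d.toFun x) = e'.toFun x := by
  choose d hd using fun x => h ⟨x, rfl⟩
  exact ⟨{
    toFun := d
    inj := fun x y hxy => e'.inj (by rw [← hd, ← hd, hxy])
    map_sup := fun x y => e.inj (by simp only [hd, e.map_sup, e'.map_sup])
    map_inf := fun x y => e.inj (by simp only [hd, e.map_inf, e'.map_inf])
    map_compl := fun x => e.inj (by simp only [hd, e.map_compl, e'.map_compl])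
    map_bot := e.inj (by simp only [hd, e.map_bot, e'.map_bot])
    map_top := e.inj (by simp only [hd, e.map_top, e'.map_top])
    map_lt := fun x y => by simp only [e'.map_lt, e.map_lt, hd]
    map_P := fun x => by simp only [e'.map_P, e.map_P, hd] }, hd⟩

lemma exists_atom (e : Emb A B) {c : B.carrier} (hc : IsAtom c) :
    ∃ d, IsAtom d ∧ ∀ x, (c ≤ e.toFun x ↔ d ≤ x) := by
  obtain ⟨d, hd, hmin⟩ := (Set.toFinite {x | c ≤ e.toFun x}).exists_minimal
    ⟨⊤, by simp only [Set.mem_ofPred_eq, e.map_top, le_top]⟩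
  have le_iff : ∀ x, (c ≤ e.toFun x ↔ d ≤ x) := fun x => by
    refine ⟨fun hx => ?_, fun hx => hd.trans (e.mono hx)⟩
    have hinf : c ≤ e.toFun (d ⊓ x) := e.map_inf d x ▸ le_inf hd hx
    exact (hmin hinf inf_le_left).trans inf_le_right
  refine ⟨d, ⟨?_, fun x hx => ?_⟩, le_iff⟩
  · rintro rfl
    exact hc.1 (le_bot_iff.1 (e.map_bot ▸ (le_iff ⊥).2 le_rfl))
  · have hcompl : d ≤ xᶜ := by
      rw [← le_iff, e.map_compl, atom_le_compl_iff hc, le_iff]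
      exact hx.not_ge
    exact le_compl_self.1 (hx.le.trans hcompl)

lemma exists_dual_map (e : Emb A B) (ha : A.IsAtomEnum n a) (hb : B.IsAtomEnum m b) :
    ∃ g : ℕ → ℕ, (∀ j < m, g j < n) ∧ (∀ j, g (m + j) = n + j) ∧
      ∀ j < m, ∀ x, (b j ≤ e.toFun x ↔ a (g j) ≤ x) := by
  have hex : ∀ j < m, ∃ i < n, ∀ x, (b j ≤ e.toFun x ↔ a i ≤ x) := fun j hj => by
    obtain ⟨c, hc, hcx⟩ := e.exists_atom (hb.atom j hj)
    obtain ⟨i, hi, rfl⟩ := ha.surj c hc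
    exact ⟨i, hi, hcx⟩
  choose! g hgn hg using hex
  refine ⟨fun j => if j < m then g j else n + (j - m), fun j hj => ?_, fun j => ?_,
    fun j hj => ?_⟩
  · simpa only [if_pos hj] using hgn j hj
  · simp
  · simpa only [if_pos hj] using hg j hj

lemma exists_dual_eq (e : Emb A B) (ha : A.IsAtomEnum n a) (hb : B.IsAtomEnum m b)
    (hgn : ∀ j < m, g j < n) (hg : ∀ j < m, ∀ x, (b j ≤ e.toFun x ↔ a (g j) ≤ x)) {v : ℕ}
    (hv : v < n) : ∃ j < m, g j = v := by
  by_contra! hne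
  have map_eq_bot : e.toFun (a v) = ⊥ := hb.ext fun j hj => by
    rw [hg j hj, ha.le_iff (hgn j hj) hv, le_bot_iff]
    exact iff_of_false (hne j hj) (hb.atom j hj).1
  exact (ha.atom v hv).1 (e.inj (map_eq_bot.trans e.map_bot.symm))

lemma exists_firstAt (e : Emb A B) (hB : B.Natural) (ha : A.IsAtomEnum n a)
    (hb : B.IsAtomEnum m b) (hgn : ∀ j < m, g j < n)
    (hg : ∀ j < m, ∀ x, (b j ≤ e.toFun x ↔ a (g j) ≤ x)) {v : ℕ} (hv : v < n) :
    ∃ i, FirstAt g v i := by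
  have hex := e.exists_dual_eq ha hb hgn hg hv
  classical
  obtain ⟨hjm, hjv⟩ := Nat.find_spec hex
  refine ⟨Nat.find hex, hjv, fun i hi => ?_⟩
  have him := hi.trans hjm
  have hne : g i ≠ v := fun h => Nat.find_min hex hi ⟨him, h⟩
  refine hne.lt_of_le (not_lt.1 fun hvi => ?_)
  have hlt := (e.map_lt _ _).1 ((ha.lt_iff (g i) (hgn i him) v hv).2 hvi)
  obtain ⟨k, hk, hkv, -, hagree⟩ := (hb.antilex hB _ _).1 hlt
  rw [hg k hk, ha.le_iff (hgn k hk) hv] at hkv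
  have hi_agree := hagree i (hi.trans_le (Nat.find_min' hex ⟨hk, hkv⟩))
  rw [hg i him, hg i him, ha.le_iff (hgn i him) hv] at hi_agree
  exact hne (hi_agree.1 le_rfl)

lemma exists_isParameterWord (e : Emb A B) (hB : B.Natural) (ha : A.IsAtomEnum n a)
    (hb : B.IsAtomEnum m b) :
    ∃ g, IsParameterWord 1 m n g ∧ ∀ j < m, ∀ x, (b j ≤ e.toFun x ↔ a (g j) ≤ x) := by
  obtain ⟨g, hgn, htail, hg⟩ := e.exists_dual_map ha hb
  have hword : IsParameterWord 0 m n g :=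
    ⟨fun i hi => absurd hi i.not_lt_zero, hgn, htail,
      fun v _ hv => e.exists_firstAt hB ha hb hgn hg hv⟩
  obtain ⟨i, hi⟩ := hword.exists_firstAt 0
  obtain rfl : i = 0 := Nat.eq_zero_of_not_pos fun h => absurd (hi.lt 0 h) (g 0).not_lt_zero
  exact ⟨g, hword.succ hi.eq, hg⟩

end Emb

/-! ### Power set algebras -/

/-- The power set of `{0, …, N}`, ordered lexicographically (so that `{0}` is the greatest atom),
with the sets omitting `0` as distinguished ideal. -/
noncomputable def canon (N : ℕ) : OrdAlgU where
  carrier := Set (Fin (N + 1))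
  fin := Fintype.ofFinite _
  P := {s | 0 ∉ s}
  lt s t := toLex (fun i => i ∈ s) < toLex (fun i => i ∈ t)

section Canon

variable {s t : Set (Fin (N + 1))}

lemma canon_lt_iff :
    (canon N).lt s t ↔ ∃ i, i ∈ t ∧ i ∉ s ∧ ∀ j < i, (j ∈ s ↔ j ∈ t) := by
  refine exists_congr fun i => ?_
  simp only [Pi.toLex_apply, eq_iff_iff, lt_iff_le_not_ge, le_Prop_eq]
  tauto

lemma canon_isStrictTotalOrder (N : ℕ) : IsStrictTotalOrder (canon N).carrier (canon N).lt :=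
  (⟨⟨fun s : Set (Fin (N + 1)) => toLex fun i => i ∈ s, fun _ _ h =>
      Set.ext fun i => (congrFun (toLex.injective h) i).to_iff⟩, Iff.rfl⟩ :
    (canon N).lt ↪r ((· < ·) : Lex (Fin (N + 1) → Prop) → _ → Prop)).isStrictTotalOrder

/-- The `i`-th largest atom `{i}` of `canon N`, as a set empty for `i > N`. -/
def canonAtom (N i : ℕ) : Set (Fin (N + 1)) := {j | (j : ℕ) = i}

lemma canonAtom_val (i : Fin (N + 1)) : canonAtom N i = {i} :=
  Set.ext fun _ => Fin.val_inj

lemma canonAtom_le_iff (i : Fin (N + 1)) : canonAtom N i ≤ s ↔ i ∈ s :=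
  canonAtom_val i ▸ Set.singleton_subset_iff

lemma canon_lt_singleton_iff (i j : Fin (N + 1)) :
    (canon N).lt ({i} : Set (Fin (N + 1))) ({j} : Set (Fin (N + 1))) ↔ j < i := by
  simp only [canon_lt_iff, Set.mem_singleton_iff, exists_eq_left]
  refine ⟨fun ⟨hne, h⟩ => ?_, fun h => ⟨h.ne, fun k hk => ?_⟩⟩
  · exact (Ne.lt_or_gt hne).resolve_right fun hij => hij.ne ((h i hij).1 rfl)
  · exact iff_of_false (hk.trans h).ne hk.ne

lemma canon_isAtomEnum (N : ℕ) : (canon N).IsAtomEnum (N + 1) (canonAtom N) where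
  atom i hi := canonAtom_val ⟨i, hi⟩ ▸ Set.isAtom_singleton _
  surj s hs := by
    obtain ⟨i, rfl⟩ := Set.isAtom_iff.1 hs
    exact ⟨i, i.2, canonAtom_val i⟩
  lt_iff i hi j hj := by
    lift i to Fin (N + 1) using hi
    lift j to Fin (N + 1) using hj
    rw [canonAtom_val, canonAtom_val, canon_lt_singleton_iff, Fin.lt_def]

lemma canon_natural (N : ℕ) : (canon N).Natural := by
  refine ⟨canon_isStrictTotalOrder N, fun s t _ _ hs ht => ?_, fun s t _ => ?_⟩
  · exact canon_lt_iff.2 ⟨0, not_not.1 ht, hs, fun j hj => absurd hj j.not_lt_zero⟩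
  · rw [(canon_isAtomEnum N).exists_greatest_atom_iff]
    refine canon_lt_iff.trans ⟨?_, ?_⟩
    · rintro ⟨i, hit, his, hagree⟩
      refine ⟨i, i.2, (canonAtom_le_iff i).2 hit, (canonAtom_le_iff i).not.2 his, fun w hw => ?_⟩
      lift w to Fin (N + 1) using hw.trans i.2
      exact (canonAtom_le_iff w).trans ((hagree w hw).trans (canonAtom_le_iff w).symm)
    · rintro ⟨v, hv, hvt, hvs, hagree⟩
      lift v to Fin (N + 1) using hv
      refine ⟨v, (canonAtom_le_iff v).1 hvt, (canonAtom_le_iff v).not.1 hvs, fun j hj => ?_⟩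
      exact (canonAtom_le_iff j).symm.trans ((hagree j hj).trans (canonAtom_le_iff j))

lemma canon_inNaBu (N : ℕ) : (canon N).InNaBu := by
  refine ⟨⟨fun h => h (Set.mem_univ _), fun s hs t hts h0 => hs (hts h0),
    fun s hs t ht h0 => h0.elim hs ht⟩, canon_natural N, ({0} : Set (Fin (N + 1))),
    ⟨Set.isAtom_singleton _, fun h => h rfl⟩, ?_⟩
  rintro s ⟨hs, hsP⟩
  obtain ⟨i, rfl⟩ := Set.isAtom_iff.1 hs
  exact congrArg _ (not_not.1 hsP : (0 : Fin (N + 1)) = i).symm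

end Canon

/-- The dual of the word `f`: a join of atoms is sent to the set of positions carrying the indices
of these atoms. -/
def wordMap (N : ℕ) (a : ℕ → A.carrier) (f : ℕ → ℕ) (x : A.carrier) : Set (Fin (N + 1)) :=
  {i | a (f i) ≤ x}

lemma wordMap_injective (hb : B.IsAtomEnum m b) (hf : IsParameterWord 1 (N + 1) m f) :
    Function.Injective (wordMap N b f) := fun x y hxy => hb.ext fun v hv => by
  obtain ⟨i, hi⟩ := hf.exists_firstAt v
  have := Set.ext_iff.1 hxy ⟨i, hf.lt_of_firstAt hi hv⟩
  simpa only [wordMap, Set.mem_ofPred_eq, hi.eq] using this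

lemma canon_lt_wordMap_iff (hB : B.Natural) (hb : B.IsAtomEnum m b)
    (hf : IsParameterWord 1 (N + 1) m f) (x y : B.carrier) :
    B.lt x y ↔ (canon N).lt (wordMap N b f x) (wordMap N b f y) := by
  rw [hb.antilex hB, canon_lt_iff]
  constructor
  · rintro ⟨v, hv, hvy, hvx, hagree⟩
    obtain ⟨i, rfl, hlt⟩ := hf.exists_firstAt v
    exact ⟨⟨i, hf.lt_of_firstAt ⟨rfl, hlt⟩ hv⟩, hvy, hvx, fun j hj => hagree _ (hlt j hj)⟩
  · rintro ⟨i, hiy, hix, hagree⟩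
    refine ⟨f i, hf.lt _ i.2, hiy, hix, fun w hw => ?_⟩
    obtain ⟨j, rfl, hlt⟩ := hf.exists_firstAt w
    have hji : j < i := by
      by_contra! h
      obtain h | h := h.eq_or_lt
      · exact hw.ne (congrArg f h.symm)
      · exact hw.not_gt (hlt _ h)
    exact hagree ⟨j, hji.trans i.2⟩ hji

lemma exists_emb_canon (hB : B.InNaBu) (hbot : ⊥ ∈ B.P) (hb : B.IsAtomEnum m b)
    (hf : IsParameterWord 1 (N + 1) m f) : ∃ e : Emb B (canon N), e.toFun = wordMap N b f := by
  have atom : ∀ i : Fin (N + 1), IsAtom (b (f i)) := fun i => hb.atom _ (hf.lt _ i.2)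
  obtain ⟨hm, hb0⟩ := hB.pos_and_notMem_P hb
  exact ⟨{
    toFun := wordMap N b f
    inj := wordMap_injective hb hf
    map_sup := fun x y => Set.ext fun i => atom_le_sup_iff (atom i)
    map_inf := fun x y => Set.ext fun i => le_inf_iff
    map_compl := fun x => Set.ext fun i => atom_le_compl_iff (atom i)
    map_bot := Set.ext fun i => iff_of_false (fun h => (atom i).1 (le_bot_iff.1 h)) id
    map_top := Set.ext fun i => iff_of_true le_top trivial
    map_lt := canon_lt_wordMap_iff hB.2.1 hb hf
    map_P := fun x => by
      rw [hB.mem_P_iff hbot (hb.atom 0 hm) hb0, ← hf.letter 0 one_pos]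
      rfl }, rfl⟩

lemma eq_range_wordMap_of_subset (hB : B.Natural) (ha : A.IsAtomEnum n a)
    (hb : B.IsAtomEnum m b) (hf : IsParameterWord 1 (N + 1) m f) {e : Emb B (canon N)}
    (he : e.toFun = wordMap N b f) {S : Set (canon N).carrier} (hS : S ∈ Copies A (canon N))
    (hSe : S ⊆ Set.range e.toFun) :
    ∃ g, IsParameterWord 1 m n g ∧ S = Set.range (wordMap N a (g ∘ f)) := by
  obtain ⟨e', rfl⟩ := hS
  obtain ⟨d, hd⟩ := e'.exists_factor e hSe
  obtain ⟨g, hg, hdual⟩ := d.exists_isParameterWord hB ha hb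
  refine ⟨g, hg, congrArg Set.range (funext fun x => ?_)⟩
  rw [← hd, he]
  exact Set.ext fun i => hdual _ (hf.lt _ i.2) x

/-- The partition relation `C → (B)^A`, for colourings with colours in `κ`. -/
def Arrows (C B A : OrdAlgU) (κ : Type u) : Prop :=
  ∀ χ : Set C.carrier → κ, ∃ e : Emb B C, ∀ S₁ ∈ Copies A C, ∀ S₂ ∈ Copies A C,
    S₁ ⊆ Set.range e.toFun → S₂ ⊆ Set.range e.toFun → χ S₁ = χ S₂

lemma arrows_self_of_bot_notMem (hB : B.InNaBu) (hbot : ⊥ ∉ B.P) (A : OrdAlgU) (κ : Type u) :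
    Arrows B B A κ := by
  have copy_eq_univ : ∀ S ∈ Copies A B, S = Set.univ := by
    rintro _ ⟨e, rfl⟩
    refine Set.eq_univ_of_forall fun x => ?_
    obtain rfl | rfl := hB.eq_bot_or_eq_top hbot x
    exacts [⟨⊥, e.map_bot⟩, ⟨⊤, e.map_top⟩]
  exact fun χ => ⟨.refl B, fun S₁ h₁ S₂ h₂ _ _ => by
    rw [copy_eq_univ S₁ h₁, copy_eq_univ S₂ h₂]⟩

lemma exists_canon_arrows (hA : A.InNaBu) (hB : B.InNaBu) (hbot : ⊥ ∈ B.P) (κ : Type u)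
    [Finite κ] : ∃ N, Arrows (canon N) B A κ := by
  obtain ⟨n, a, ha⟩ := hA.2.1.exists_isAtomEnum
  obtain ⟨m, b, hb⟩ := hB.2.1.exists_isAtomEnum
  obtain ⟨M, hM, hramsey⟩ := grahamRothschild one_pos (hA.pos_and_notMem_P ha).1 m
    (hB.pos_and_notMem_P hb).1 κ
  obtain ⟨N, rfl⟩ := Nat.exists_eq_add_of_le' hM
  refine ⟨N, fun χ => ?_⟩
  obtain ⟨F, hF, hconst⟩ := hramsey fun f => χ (Set.range (wordMap N a f))
  obtain ⟨e, he⟩ := exists_emb_canon hB hbot hb hF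
  refine ⟨e, fun S₁ h₁ S₂ h₂ hS₁ hS₂ => ?_⟩
  obtain ⟨g₁, hg₁, rfl⟩ := eq_range_wordMap_of_subset hB.2.1 ha hb hF he h₁ hS₁
  obtain ⟨g₂, hg₂, rfl⟩ := eq_range_wordMap_of_subset hB.2.1 ha hb hF he h₂ hS₂
  exact hconst g₁ g₂ hg₁ hg₂

end OrdAlgU

theorem naBu_ramsey_property
    (A B : OrdAlgU) (hA : A.InNaBu) (hB : B.InNaBu)
    (hAB : Nonempty (OrdAlgU.Emb A B))
    (k : ℕ) (hk : 2 ≤ k) :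
    ∃ C : OrdAlgU, C.InNaBu ∧
      ∀ χ : Set C.carrier → Fin k,
        ∃ e : OrdAlgU.Emb B C,
          ∀ S₁ ∈ OrdAlgU.Copies A C, ∀ S₂ ∈ OrdAlgU.Copies A C,
            S₁ ⊆ Set.range e.toFun → S₂ ⊆ Set.range e.toFun → χ S₁ = χ S₂ := by
  by_cases hbot : ⊥ ∈ B.P
  · obtain ⟨N, hN⟩ := OrdAlgU.exists_canon_arrows hA hB hbot (Fin k)
    exact ⟨OrdAlgU.canon N, OrdAlgU.canon_inNaBu N, hN⟩
  · exact ⟨B, hB, OrdAlgU.arrows_self_of_bot_notMem hB hbot A (Fin k)⟩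
end

section
/- The class na(B_J^u) satisfies the Ramsey property: for all structures (A, <_A), (B, <_B) in na(B_J^u) such that (A, <_A) embeds into (B, <_B), and every integer k ≥ 2, there exists a structure (C, <_C) in na(B_J^u) such that for every coloring of the copies of (A, <_A) in (C, <_C) with k colors there is a copy B' of (B, <_B) in (C, <_C) all of whose copies of (A, <_A) receive the same color. -/
/-- A finite Boolean algebra with a `J`-indexed family of distinguished subsets
and a distinguished binary relation (the linear ordering). -/
structure OrdAlg (J : Type) [LinearOrder J] : Type 1 where
  carrier : Type
  [ba : BooleanAlgebra carrier]
  [fin : Fintype carrier]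
  P : J → Set carrier
  lt : carrier → carrier → Prop

attribute [instance] OrdAlg.ba OrdAlg.fin

namespace OrdAlg

variable {J : Type} [LinearOrder J]

/-- The predicates form an increasing family of (nontrivial) ideals: this makes
the structure a `J`-algebra. -/
def IdealFam (A : OrdAlg J) : Prop :=
  (∀ j : J, (⊤ : A.carrier) ∉ A.P j) ∧
  (∀ j : J, ∀ x ∈ A.P j, ∀ y : A.carrier, y ≤ x → y ∈ A.P j) ∧
  (∀ j : J, ∀ x ∈ A.P j, ∀ y ∈ A.P j, x ⊔ y ∈ A.P j) ∧
  (∀ i j : J, i ≤ j → A.P i ⊆ A.P j)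

/-- The ordering is proper on atoms: atoms in some ideal `P i` come before atoms not in `P i`. -/
def Proper (A : OrdAlg J) : Prop :=
  ∀ a b : A.carrier, IsAtom a → IsAtom b → (∃ i : J, a ∈ A.P i ∧ b ∉ A.P i) → A.lt a b

/-- The ordering is natural: a strict total (i.e. linear) order whose restriction to the
atoms is proper, and which is the antilexicographical extension of its restriction to atoms:
for distinct `a`, `b`, `a < b` iff the `<`-greatest atom lying below exactly one of `a`, `b`
lies below `b`. -/
def Natural (A : OrdAlg J) : Prop :=
  IsStrictTotalOrder A.carrier A.lt ∧ A.Proper ∧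
  ∀ a b : A.carrier, a ≠ b →
    (A.lt a b ↔ ∃ c : A.carrier, IsAtom c ∧ c ≤ b ∧ ¬ c ≤ a ∧
      ∀ d : A.carrier, IsAtom d → ¬ (d ≤ a ↔ d ≤ b) → d = c ∨ A.lt d c)

/-- Membership in the class `na(B_J)`: a naturally ordered `J`-algebra with at least one
atom lying in no `P j`. -/
def InNaBJ (A : OrdAlg J) : Prop :=
  A.IdealFam ∧ A.Natural ∧ ∃ a : A.carrier, IsAtom a ∧ ∀ j : J, a ∉ A.P j

/-- Membership in the class `na(B_J^u)`: a naturally ordered `J`-algebra in which all atoms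
except exactly one belong to some `P j`. -/
def InNaBJu (A : OrdAlg J) : Prop :=
  A.IdealFam ∧ A.Natural ∧ ∃! a : A.carrier, IsAtom a ∧ ∀ j : J, a ∉ A.P j

/-- An embedding of ordered `J`-algebras: an injective map preserving `⊔`, `⊓`, `ᶜ`,
`⊥`, `⊤`, the linear order and each predicate. -/
structure Emb (A B : OrdAlg J) : Type where
  toFun : A.carrier → B.carrier
  inj : Function.Injective toFun
  map_sup : ∀ x y : A.carrier, toFun (x ⊔ y) = toFun x ⊔ toFun y
  map_inf : ∀ x y : A.carrier, toFun (x ⊓ y) = toFun x ⊓ toFun y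
  map_compl : ∀ x : A.carrier, toFun xᶜ = (toFun x)ᶜ
  map_bot : toFun ⊥ = ⊥
  map_top : toFun ⊤ = ⊤
  map_lt : ∀ x y : A.carrier, A.lt x y ↔ B.lt (toFun x) (toFun y)
  map_P : ∀ (j : J) (x : A.carrier), x ∈ A.P j ↔ toFun x ∈ B.P j

/-- The copies of `A` in `C`: images of embeddings of `A` into `C`. -/
def Copies (A C : OrdAlg J) : Set (Set C.carrier) :=
  {S | ∃ e : Emb A C, Set.range e.toFun = S}

end OrdAlg

/-!
STATEMENT 9: The class na(B_J^u) satisfies the Ramsey property.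
-/

/-!
The argument is by duality. An embedding of `A` into a power-set algebra on `X` is dual to a
surjection from `X` onto the atoms of `A`. If atoms are listed in decreasing order, the embedding
preserves the antilexicographical order exactly when the first occurrences of the letters come in
increasing order, i.e. when the surjection is rigid, and it preserves the ideals exactly when every
first occurrence carries the label of its letter. The theorem thus becomes a labelled form of the
dual Ramsey theorem for rigid surjections `C → B → A`, proved by induction on the number of letters
of `A`: the Hales–Jewett theorem makes the colour depend only on the position in `B` at which the
last letter of `A` first occurs, and the pigeonhole principle, applied to the letters of `B` having
the right label, removes this dependence.
-/

/-! ### Labelled rigid surjections -/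

/-- A labelled rigid surjection between linear orders `X` and `Y` with labels `lX` and `lY`: every
fibre has a least element, these least elements come in the order of the letters of `Y`, and each
carries the label of its letter. The least element `first y` of the fibre over `y` is part of the
data, but is determined by the map, see `RigidSurj.first_eq_of_toFun_eq`. -/
structure RigidSurj {X Y L : Type*} [LinearOrder X] [LinearOrder Y] (lX : X → L) (lY : Y → L) where
  toFun : X → Y
  first : Y → X
  strictMono_first : StrictMono first
  apply_first' : ∀ y, toFun (first y) = y
  first_apply_le' : ∀ x, first (toFun x) ≤ x
  label_first : ∀ y, lX (first y) = lY y

namespace RigidSurj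

variable {X Y Z L : Type*} [LinearOrder X] [LinearOrder Y] [LinearOrder Z]
  {lX : X → L} {lY : Y → L} {lZ : Z → L}

theorem first_eq_of_toFun_eq {u v : RigidSurj lX lY} (h : u.toFun = v.toFun) :
    u.first = v.first := by
  funext y
  have hu := u.first_apply_le' (v.first y)
  have hv := v.first_apply_le' (u.first y)
  rw [h, v.apply_first'] at hu
  rw [← h, u.apply_first'] at hv
  exact le_antisymm hu hv

instance : FunLike (RigidSurj lX lY) X Y where
  coe := toFun
  coe_injective u v h := by
    have hfirst := first_eq_of_toFun_eq h
    cases u; cases v; congr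

@[simp]
theorem apply_first (u : RigidSurj lX lY) (y : Y) : u (u.first y) = y :=
  u.apply_first' y

theorem first_apply_le (u : RigidSurj lX lY) (x : X) : u.first (u x) ≤ x :=
  u.first_apply_le' x

theorem apply_lt_of_lt_first (u : RigidSurj lX lY) {x : X} {y : Y} (h : x < u.first y) :
    u x < y :=
  u.strictMono_first.lt_iff_lt.1 ((u.first_apply_le x).trans_lt h)

/-- The identity as a rigid surjection. -/
protected def id (lX : X → L) : RigidSurj lX lX :=
  ⟨id, id, strictMono_id, fun _ => rfl, fun _ => le_rfl, fun _ => rfl⟩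

/-- The composite of rigid surjections. -/
def comp (u : RigidSurj lY lZ) (v : RigidSurj lX lY) : RigidSurj lX lZ where
  toFun := u ∘ v
  first := v.first ∘ u.first
  strictMono_first := v.strictMono_first.comp u.strictMono_first
  apply_first' z := by simp
  first_apply_le' x := (v.strictMono_first.monotone (u.first_apply_le (v x))).trans
    (v.first_apply_le x)
  label_first z := by simp [u.label_first, v.label_first]

@[simp]
theorem coe_comp (u : RigidSurj lY lZ) (v : RigidSurj lX lY) : ⇑(u.comp v) = u ∘ v :=
  rfl

theorem comp_assoc {W : Type*} [LinearOrder W] {lW : W → L} (w : RigidSurj lZ lW)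
    (u : RigidSurj lY lZ) (v : RigidSurj lX lY) : (w.comp u).comp v = w.comp (u.comp v) :=
  rfl

theorem exists_comp_eq (v : RigidSurj lX lY) (s : RigidSurj lX lZ)
    (h : ∀ x x', v x = v x' → s x = s x') : ∃ u : RigidSurj lY lZ, u.comp v = s := by
  have apply_first_apply (x : X) : s (v.first (v x)) = s x := h _ _ (v.apply_first _)
  have first_apply_first (z : Z) : v.first (v (s.first z)) = s.first z := by
    refine (v.first_apply_le _).antisymm ?_
    simpa [apply_first_apply] using s.first_apply_le (v.first (v (s.first z)))
  refine ⟨⟨s ∘ v.first, v ∘ s.first, fun z z' hz => ?_, fun z => ?_, fun y => ?_, fun z => ?_⟩,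
    DFunLike.coe_injective (funext apply_first_apply)⟩
  · rw [← v.strictMono_first.lt_iff_lt]
    simpa [first_apply_first] using s.strictMono_first hz
  · simp [first_apply_first]
  · rw [← v.strictMono_first.le_iff_le]
    simpa [first_apply_first] using s.first_apply_le (v.first y)
  · rw [Function.comp_apply, ← v.label_first, first_apply_first, s.label_first]

/-- The rigid surjection with prescribed first occurrences `p` that sends all other elements to the
least letter `y₀`. -/
noncomputable def ofFirst (p : Y → X) (hp : StrictMono p) (hl : ∀ y, lX (p y) = lY y) (y₀ : Y)
    (hy₀ : ∀ x, p y₀ ≤ x) : RigidSurj lX lY where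
  toFun := Function.extend p id fun _ => y₀
  first := p
  strictMono_first := hp
  apply_first' := hp.injective.extend_apply _ _
  first_apply_le' x := by
    by_cases hx : ∃ y, p y = x
    · obtain ⟨y, rfl⟩ := hx
      rw [hp.injective.extend_apply, id]
    · rw [Function.extend_apply' _ _ _ hx]
      exact hy₀ x
  label_first := hl

/-- The rigid surjection `w` between suborders of `X` and `Y` induced by `u`. -/
def restrict {X' Y' : Type*} [LinearOrder X'] [LinearOrder Y'] (u : RigidSurj lX lY)
    (i : X' ↪o X) (k : Y' ↪o Y) (w : X' → Y') (p : Y' → X') (hw : ∀ x, k (w x) = u (i x))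
    (hp : ∀ y, i (p y) = u.first (k y)) : RigidSurj (lX ∘ i) (lY ∘ k) where
  toFun := w
  first := p
  strictMono_first y y' hy := by
    rw [← i.lt_iff_lt, hp, hp]
    exact u.strictMono_first (k.lt_iff_lt.2 hy)
  apply_first' y := by
    rw [← k.eq_iff_eq, hw, hp, u.apply_first]
  first_apply_le' x := by
    rw [← i.le_iff_le, hp, hw]
    exact u.first_apply_le (i x)
  label_first y := by
    rw [Function.comp_apply, hp, u.label_first, Function.comp_apply]

end RigidSurj

/-! ### Words -/

/-- A word `l` with letters in `S` that is increasing and contains `⊥` exactly once. If the atoms of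
an algebra in `na(B_J^u)` are listed in decreasing order, the sets `{j | a ∈ P j}` form such a
word. -/
structure IsAdmissible {X L : Type*} [LinearOrder X] [PartialOrder L] [OrderBot L] (S : Set L)
    (l : X → L) : Prop where
  monotone : Monotone l
  existsUnique_eq_bot : ∃! x, l x = ⊥
  mem : ∀ x, l x ∈ S

namespace IsAdmissible

variable {X L : Type*} [LinearOrder X] [PartialOrder L] [OrderBot L] {S : Set L}

theorem le_of_eq_bot {l : X → L} (h : IsAdmissible S l) {x : X} (hx : l x = ⊥) (y : X) :
    x ≤ y := by
  by_contra! hy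
  have hly : l y = ⊥ := le_bot_iff.1 (hx ▸ h.monotone hy.le)
  exact hy.ne (h.existsUnique_eq_bot.unique hly hx)

theorem ne_bot_of_lt {l : X → L} (h : IsAdmissible S l) {x y : X} (hxy : x < y) : l y ≠ ⊥ :=
  fun hy => (h.le_of_eq_bot hy x).not_gt hxy

theorem comp_castSucc {b : ℕ} {l : Fin (b + 1) → L} (h : IsAdmissible S l)
    (hlast : l (Fin.last b) ≠ ⊥) :
    IsAdmissible (S ∩ Set.Iic (l (Fin.last b))) (l ∘ Fin.castSucc) where
  monotone := h.monotone.comp Fin.strictMono_castSucc.monotone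
  existsUnique_eq_bot := by
    obtain ⟨x, hx, hunique⟩ := h.existsUnique_eq_bot
    obtain ⟨y, rfl⟩ := Fin.exists_castSucc_eq.2 fun hx' : x = Fin.last b => hlast (hx' ▸ hx)
    exact ⟨y, hx, fun z hz => Fin.castSucc_injective _ (hunique _ hz)⟩
  mem x := ⟨h.mem _, h.monotone (Fin.le_last _)⟩

theorem append {m : ℕ} {l : Fin m → L} {r : L} (h : IsAdmissible (S ∩ Set.Iic r) l) (hr : r ∈ S)
    (hbot : r ≠ ⊥) (N : ℕ) : IsAdmissible S (Fin.append l fun _ : Fin N => r) where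
  monotone x y hxy := by
    induction x using Fin.addCases with
    | left x =>
      induction y using Fin.addCases with
      | left y => simpa using h.monotone hxy
      | right y => simpa using (h.mem x).2
    | right x =>
      induction y using Fin.addCases with
      | left y => exact absurd hxy (by simp [Fin.lt_def]; omega)
      | right y => simp
  existsUnique_eq_bot := by
    obtain ⟨x, hx, hunique⟩ := h.existsUnique_eq_bot
    refine ⟨Fin.castAdd N x, by simpa using hx, fun y hy => ?_⟩
    induction y using Fin.addCases with
    | left y => rw [hunique y (by simpa using hy)]
    | right y => exact absurd (by simpa using hy) hbot
  mem x := by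
    induction x using Fin.addCases with
    | left x => simpa using (h.mem x).1
    | right x => simpa using hr

end IsAdmissible

/-! ### The Hales–Jewett step -/

theorem exists_isLeast {X : Type*} [LinearOrder X] [WellFoundedLT X] {s : Set X}
    (hs : s.Nonempty) : ∃ x, IsLeast s x :=
  ⟨wellFounded_lt.min s hs, wellFounded_lt.min_mem s hs, fun _ => wellFounded_lt.min_le⟩

namespace RigidSurj

open Combinatorics

variable {L : Type*} {m n b N : ℕ} {lM : Fin m → L} {r : L}

instance {X Y : Type*} [LinearOrder X] [LinearOrder Y] [Finite X] [Finite Y] {lX : X → L}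
    {lY : Y → L} : Finite (RigidSurj lX lY) :=
  DFunLike.finite _

/-- The rigid surjection that is the identity on an initial segment `Fin m` and sends the remaining
`N` elements, all labelled `r`, to letters in `Fin m` as prescribed by `W`. -/
def collapse (lM : Fin m → L) (r : L) (W : Fin N → Fin m) :
    RigidSurj (Fin.append lM fun _ : Fin N => r) lM where
  toFun := Fin.append id W
  first := Fin.castAdd N
  strictMono_first := Fin.strictMono_castAdd N
  apply_first' y := by simp
  first_apply_le' x := by
    induction x using Fin.addCases with
    | left x => simp
    | right i => simp [Fin.le_def]; omega
  label_first y := by simp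

@[simp]
theorem coe_collapse (W : Fin N → Fin m) : ⇑(collapse lM r W) = Fin.append id W :=
  rfl

theorem exists_isLeast_idxFun_eq_none {α : Type*} (line : Line α (Fin N)) :
    ∃ i, IsLeast {i | line.idxFun i = none} i :=
  exists_isLeast line.proper

/-- Extends a rigid surjection `v` onto `Fin b` by the values on a combinatorial line: the active
coordinates are sent to the new letter `Fin.last b`, and a coordinate fixed at `x` is sent to
`v x`. -/
noncomputable def extend {lB : Fin (b + 1) → L} (v : RigidSurj lM (lB ∘ Fin.castSucc))
    (hr : lB (Fin.last b) = r) (line : Line (Fin m) (Fin N)) :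
    RigidSurj (Fin.append lM fun _ : Fin N => r) lB where
  toFun := Fin.append (Fin.castSucc ∘ v)
    fun i => (line.idxFun i).elim (Fin.last b) (Fin.castSucc ∘ v)
  first := Fin.snoc (Fin.castAdd N ∘ v.first)
    (Fin.natAdd m (exists_isLeast_idxFun_eq_none line).choose)
  strictMono_first y y' hy := by
    induction y' using Fin.lastCases with
    | last =>
      obtain ⟨y, rfl⟩ := Fin.exists_castSucc_eq.2 hy.ne
      rw [Fin.snoc_castSucc, Fin.snoc_last, Function.comp_apply, Fin.lt_def, Fin.val_castAdd,
        Fin.val_natAdd]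
      omega
    | cast y' =>
      obtain ⟨y, rfl⟩ := Fin.exists_castSucc_eq.2 (hy.trans (Fin.castSucc_lt_last y')).ne
      simpa using Fin.strictMono_castAdd N (v.strictMono_first hy)
  apply_first' y := by
    have hnone : line.idxFun (exists_isLeast_idxFun_eq_none line).choose = none :=
      (exists_isLeast_idxFun_eq_none line).choose_spec.1
    induction y using Fin.lastCases with
    | last => simp [hnone]
    | cast y => simp
  first_apply_le' x := by
    have hle := (exists_isLeast_idxFun_eq_none line).choose_spec.2
    induction x using Fin.addCases with
    | left x => simpa using (Fin.strictMono_castAdd N).monotone (v.first_apply_le x)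
    | right i =>
      cases hi : line.idxFun i with
      | none => simpa [hi] using hle hi
      | some x => simp [hi, Fin.le_def]; omega
  label_first y := by
    induction y using Fin.lastCases with
    | last => simp [hr]
    | cast y => simpa using v.label_first y

@[simp]
theorem coe_extend {lB : Fin (b + 1) → L} (v : RigidSurj lM (lB ∘ Fin.castSucc))
    (hr : lB (Fin.last b) = r) (line : Line (Fin m) (Fin N)) :
    ⇑(v.extend hr line) = Fin.append (Fin.castSucc ∘ v)
      fun i => (line.idxFun i).elim (Fin.last b) (Fin.castSucc ∘ v) :=
  rfl

/-- As `u` uses the last letter of `lA` before `Fin.last b`, the letter `u (Fin.last b)` is also a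
value of `w ∘ v`; the active coordinates of the line may be fixed at a point with this value. -/
theorem exists_comp_extend_eq_comp_collapse {lB : Fin (b + 1) → L} {lA : Fin (n + 1) → L}
    (u : RigidSurj lB lA) (hu : u.first (Fin.last n) ≠ Fin.last b) :
    ∃ w : RigidSurj (lB ∘ Fin.castSucc) lA,
      Fin.castSucc (w.first (Fin.last n)) = u.first (Fin.last n) ∧
      ∀ {m N : ℕ} {lM : Fin m → L} {r : L} (v : RigidSurj lM (lB ∘ Fin.castSucc))
        (hr : lB (Fin.last b) = r) (line : Line (Fin m) (Fin N)),
        ∃ x, u.comp (v.extend hr line) = (w.comp v).comp (collapse lM r (line x)) := by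
  have hlast : u.first (Fin.last n) < Fin.last b := Fin.lt_last_iff_ne_last.2 hu
  have hlt (y) : u.first y < Fin.last b :=
    (u.strictMono_first.monotone (Fin.le_last y)).trans_lt hlast
  let w : RigidSurj (lB ∘ Fin.castSucc) lA :=
    u.restrict Fin.castSuccOrderEmb (RelEmbedding.refl _) (u ∘ Fin.castSucc)
      (fun y => (u.first y).castLT (hlt y)) (fun _ => rfl) fun _ => rfl
  refine ⟨w, rfl, fun {m N lM r} v hr line => ?_⟩
  have hcast (x) : w x = u x.castSucc := rfl
  obtain ⟨x₀, hx₀⟩ : ∃ x₀, w (v x₀) = u (Fin.last b) := ⟨_, (w.comp v).apply_first _⟩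
  refine ⟨x₀, DFunLike.ext _ _ fun z => ?_⟩
  induction z using Fin.addCases with
  | left z => simp [hcast]
  | right i =>
    cases hi : line.idxFun i with
    | none => simpa [hi] using hx₀.symm
    | some x => simp [hcast, hi]

theorem exists_comp_extend_eq_extend_comp {lB : Fin (b + 1) → L} {lA : Fin (n + 1) → L}
    (u : RigidSurj lB lA) (hu : u.first (Fin.last n) = Fin.last b) :
    ∃ w : RigidSurj (lB ∘ Fin.castSucc) (lA ∘ Fin.castSucc),
      ∀ {m N : ℕ} {lM : Fin m → L} {r : L} (v : RigidSurj lM (lB ∘ Fin.castSucc))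
        (hrB : lB (Fin.last b) = r) (hrA : lA (Fin.last n) = r) (line : Line (Fin m) (Fin N)),
        u.comp (v.extend hrB line) = (w.comp v).extend hrA line := by
  have hlast : u (Fin.last b) = Fin.last n := hu ▸ u.apply_first _
  have hw (x : Fin b) : u x.castSucc < Fin.last n :=
    u.apply_lt_of_lt_first (hu ▸ Fin.castSucc_lt_last x)
  have hp (y : Fin n) : u.first y.castSucc < Fin.last b :=
    hu ▸ u.strictMono_first (Fin.castSucc_lt_last y)
  let w : RigidSurj (lB ∘ Fin.castSucc) (lA ∘ Fin.castSucc) :=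
    u.restrict Fin.castSuccOrderEmb Fin.castSuccOrderEmb (fun x => (u x.castSucc).castLT (hw x))
      (fun y => (u.first y.castSucc).castLT (hp y)) (fun _ => rfl) fun _ => rfl
  refine ⟨w, fun {m N lM r} v hrB hrA line => DFunLike.ext _ _ fun z => ?_⟩
  have hcast (x) : Fin.castSucc (w x) = u x.castSucc := rfl
  induction z using Fin.addCases with
  | left z => simp [hcast]
  | right i =>
    cases hi : line.idxFun i with
    | none => simpa [hi] using hlast
    | some x => simp [hi, hcast]

end RigidSurj

theorem exists_line_isMono_fin (α : Type*) [Finite α] (κ : Type*) [Finite κ] :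
    ∃ N, ∀ C : (Fin N → α) → κ, ∃ line : Combinatorics.Line α (Fin N), line.IsMono C := by
  obtain ⟨ι, _, hι⟩ := Combinatorics.Line.exists_mono_in_high_dimension α κ
  let e := Fintype.equivFin ι
  refine ⟨Fintype.card ι, fun C => ?_⟩
  obtain ⟨line, c, hc⟩ := hι fun W => C (W ∘ e.symm)
  obtain ⟨i, hi⟩ := line.proper
  exact ⟨⟨line.idxFun ∘ e.symm, e i, by simpa using hi⟩, c, hc⟩

section Arrows

variable {L : Type*} (κ : Type*)

/-- Every colouring of the rigid surjections from `lC` onto `lA` admits a rigid surjection `v` from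
`lC` onto `lB` such that all composites `u.comp v` have the same colour. -/
def Arrows {X Y Z : Type*} [LinearOrder X] [LinearOrder Y] [LinearOrder Z] (lC : X → L)
    (lB : Y → L) (lA : Z → L) : Prop :=
  ∀ χ : RigidSurj lC lA → κ, ∃ v : RigidSurj lC lB, ∀ u₁ u₂ : RigidSurj lB lA,
    χ (u₁.comp v) = χ (u₂.comp v)

/-- A weakening of `Arrows`: the colour of `u.comp v` only depends on the position in `lB` of the
first occurrence of the last letter of `lA`. -/
def PositionArrows {X Y : Type*} [LinearOrder X] [LinearOrder Y] {n : ℕ} (lC : X → L)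
    (lB : Y → L) (lA : Fin (n + 1) → L) : Prop :=
  ∀ χ : RigidSurj lC lA → κ, ∃ v : RigidSurj lC lB, ∀ u₁ u₂ : RigidSurj lB lA,
    u₁.first (Fin.last n) = u₂.first (Fin.last n) → χ (u₁.comp v) = χ (u₂.comp v)

/-- The Ramsey property of the word `lA` within the admissible words over each set of letters. -/
def HasRamsey [PartialOrder L] [OrderBot L] {n : ℕ} (lA : Fin n → L) : Prop :=
  ∀ (S : Set L) {b : ℕ} (lB : Fin b → L), IsAdmissible S lB →
    ∃ (c : ℕ) (lC : Fin c → L), IsAdmissible S lC ∧ Arrows κ lC lB lA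

theorem arrows_self_of_subsingleton {X Y : Type*} [LinearOrder X] [LinearOrder Y] (lB : X → L)
    (lA : Y → L) [Subsingleton (RigidSurj lB lA)] : Arrows κ lB lB lA :=
  fun _ => ⟨RigidSurj.id lB, fun u u' => by rw [Subsingleton.elim u u']⟩

variable {κ}

theorem Arrows.positionArrows {X Y : Type*} [LinearOrder X] [LinearOrder Y] {n : ℕ} {lC : X → L}
    {lB : Y → L} {lA : Fin (n + 1) → L} (h : Arrows κ lC lB lA) : PositionArrows κ lC lB lA :=
  fun χ => (h χ).imp fun _ hv u u' _ => hv u u'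

theorem exists_line_forall_apply_comp_collapse_eq [Finite κ] {m : ℕ} {Y : Type*} [LinearOrder Y]
    [Finite Y] (lM : Fin m → L) (r : L) (lA : Y → L) :
    ∃ N, ∀ χ : RigidSurj (Fin.append lM fun _ : Fin N => r) lA → κ,
      ∃ (line : Combinatorics.Line (Fin m) (Fin N)) (χ' : RigidSurj lM lA → κ),
        ∀ w x, χ (w.comp (RigidSurj.collapse lM r (line x))) = χ' w := by
  obtain ⟨N, hN⟩ := exists_line_isMono_fin (Fin m) (RigidSurj lM lA → κ)
  refine ⟨N, fun χ => ?_⟩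
  obtain ⟨line, χ', h⟩ := hN fun W w => χ (w.comp (RigidSurj.collapse lM r W))
  exact ⟨line, χ', fun w x => congrFun (h x) w⟩

/-- For a line on which the colour of `w ∘ collapse` only depends on `w`, the word `lE` handles the
surjections whose last letter first occurs before `Fin.last b`, and the word `lM` the others. -/
theorem PositionArrows.exists_append [Finite κ] [Nonempty κ] {m e b n : ℕ} {lM : Fin m → L}
    {lE : Fin e → L} {lB : Fin (b + 1) → L} {lA : Fin (n + 1) → L}
    (hE : PositionArrows κ lE (lB ∘ Fin.castSucc) lA) (hM : Arrows κ lM lE (lA ∘ Fin.castSucc)) :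
    ∃ N, PositionArrows κ (Fin.append lM fun _ : Fin N => lB (Fin.last b)) lB lA := by
  classical
  obtain ⟨N, hN⟩ := exists_line_forall_apply_comp_collapse_eq (κ := κ) lM (lB (Fin.last b)) lA
  refine ⟨N, fun χ => ?_⟩
  obtain ⟨line, χ', hχ'⟩ := hN χ
  obtain ⟨v₂, hv₂⟩ := hM fun s =>
    if h : lA (Fin.last n) = lB (Fin.last b) then χ (s.extend h line) else Classical.arbitrary κ
  obtain ⟨v₁, hv₁⟩ := hE fun s => χ' (s.comp v₂)
  refine ⟨(v₁.comp v₂).extend rfl line, fun u u' huu' => ?_⟩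
  by_cases hu : u.first (Fin.last n) = Fin.last b
  · have hlabel : lA (Fin.last n) = lB (Fin.last b) := by rw [← u.label_first, hu]
    obtain ⟨w, hw⟩ := u.exists_comp_extend_eq_extend_comp hu
    obtain ⟨w', hw'⟩ := u'.exists_comp_extend_eq_extend_comp (huu' ▸ hu)
    rw [hw _ _ hlabel, hw' _ _ hlabel]
    simpa [hlabel, RigidSurj.comp_assoc] using hv₂ (w.comp v₁) (w'.comp v₁)
  · obtain ⟨w, hwu, hw⟩ := u.exists_comp_extend_eq_comp_collapse hu
    obtain ⟨w', hwu', hw'⟩ := u'.exists_comp_extend_eq_comp_collapse (huu' ▸ hu)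
    obtain ⟨x, hx⟩ := hw (v₁.comp v₂) rfl line
    obtain ⟨x', hx'⟩ := hw' (v₁.comp v₂) rfl line
    rw [hx, hx', hχ', hχ']
    exact hv₁ w w' (Fin.castSucc_injective _ (by rw [hwu, hwu', huu']))

theorem HasRamsey.exists_positionArrows [PartialOrder L] [OrderBot L] [Finite κ] [Nonempty κ]
    {n : ℕ} {lA : Fin (n + 2) → L} (hA : HasRamsey κ (lA ∘ Fin.castSucc)) (S : Set L) {b : ℕ}
    (lB : Fin b → L) (hB : IsAdmissible S lB) :
    ∃ (c : ℕ) (lC : Fin c → L), IsAdmissible S lC ∧ PositionArrows κ lC lB lA := by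
  induction b generalizing S with
  | zero => exact hB.existsUnique_eq_bot.exists.choose.elim0
  | succ b ih =>
    by_cases hlast : lB (Fin.last b) = ⊥
    · have : IsEmpty (RigidSurj lB lA) := ⟨fun u => hB.ne_bot_of_lt
        ((u.strictMono_first Fin.last_pos).trans_le (Fin.le_last _)) hlast⟩
      exact ⟨_, lB, hB, (arrows_self_of_subsingleton κ lB lA).positionArrows⟩
    · obtain ⟨e, lE, hlE, hE⟩ := ih _ _ (hB.comp_castSucc hlast)
      obtain ⟨m, lM, hlM, hM⟩ := hA _ lE hlE
      obtain ⟨N, hN⟩ := hE.exists_append hM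
      exact ⟨_, _, hlM.append (hB.mem _) hlast N, hN⟩

end Arrows

/-! ### The pigeonhole step -/

theorem exists_orderEmb_forall_apply_eq (κ : Type*) [Finite κ] [Nonempty κ] (b : ℕ) :
    ∃ K, ∀ χ : Fin K → κ, ∃ g : Fin b ↪o Fin K, ∀ i i', χ (g i) = χ (g i') := by
  classical
  have := Fintype.ofFinite κ
  refine ⟨Fintype.card κ * b, fun χ => ?_⟩
  obtain ⟨y, hy⟩ := Fintype.exists_le_card_fiber_of_mul_le_card χ (n := b) (by simp)
  obtain ⟨F, hF, hcard⟩ := Finset.exists_subset_card_eq hy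
  have hg (i : Fin b) : χ (F.orderEmbOfFin hcard i) = y := by
    simpa using hF (F.orderEmbOfFin_mem hcard i)
  exact ⟨F.orderEmbOfFin hcard, fun i i' => by rw [hg, hg]⟩

section Stretch

variable {L : Type*} {b K : ℕ}

/-- The increasing surjection `Fin (b + K) → Fin b` whose fibre over `j₀` is `[j₀, j₀ + K]` and
whose other fibres are singletons. -/
def stretch (j₀ : Fin b) (K : ℕ) (i : Fin (b + K)) : Fin b :=
  ⟨max (min i j₀) (i - K), by omega⟩

theorem monotone_stretch (j₀ : Fin b) (K : ℕ) : Monotone (stretch j₀ K) := by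
  intro i i' hi
  simp only [stretch, Fin.le_def] at hi ⊢
  omega

theorem stretch_eq_iff_of_lt {j₀ x : Fin b} (hx : x < j₀) (i : Fin (b + K)) :
    stretch j₀ K i = x ↔ i = Fin.castAdd K x := by
  simp only [stretch, Fin.ext_iff, Fin.lt_def, Fin.val_castAdd] at hx ⊢
  omega

theorem IsAdmissible.comp_stretch [PartialOrder L] [OrderBot L] {S : Set L} {l : Fin b → L}
    (h : IsAdmissible S l) {j₀ : Fin b} (hj₀ : l j₀ ≠ ⊥) (K : ℕ) :
    IsAdmissible S (l ∘ stretch j₀ K) where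
  monotone := h.monotone.comp (monotone_stretch j₀ K)
  existsUnique_eq_bot := by
    obtain ⟨x, hx, hunique⟩ := h.existsUnique_eq_bot
    have hlt : x < j₀ := (h.le_of_eq_bot hx j₀).lt_of_ne fun h' => hj₀ (h' ▸ hx)
    refine ⟨Fin.castAdd K x, ?_, fun i hi => (stretch_eq_iff_of_lt hlt i).1 (hunique _ hi)⟩
    simpa [(stretch_eq_iff_of_lt hlt _).2 rfl] using hx
  mem x := h.mem _

open Classical in
/-- A right inverse of `stretch j₀ K` up to labels: the letters with the same label as `j₀` are sent
into the fibre over `j₀`, at the places prescribed by `g`. -/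
noncomputable def spread (l : Fin b → L) (j₀ : Fin b) (g : Fin b → Fin K) (j : Fin b) :
    Fin (b + K) :=
  if l j = l j₀ then ⟨j₀ + g j, by omega⟩
  else if j < j₀ then Fin.castAdd K j else Fin.addNat j K

theorem apply_stretch_spread (l : Fin b → L) (j₀ : Fin b) (g : Fin b → Fin K) (j : Fin b) :
    l (stretch j₀ K (spread l j₀ g j)) = l j := by
  unfold spread
  split_ifs with hlabel hj
  · rw [hlabel]
    congr 1
    simp [stretch]
  · rw [(stretch_eq_iff_of_lt hj _).2 rfl]
  · congr 1
    simp only [stretch, Fin.ext_iff, Fin.lt_def, Fin.val_addNat] at hj ⊢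
    omega

theorem strictMono_spread [PartialOrder L] {l : Fin b → L} (hl : Monotone l) (j₀ : Fin b)
    {g : Fin b → Fin K} (hg : StrictMono g) : StrictMono (spread l j₀ g) := by
  intro j j' hj
  by_cases hlabel : l j = l j'
  · have hgj := hg hj
    simp only [spread, hlabel, Fin.lt_def] at hj hgj ⊢
    split_ifs <;> grind [Fin.val_castAdd, Fin.val_addNat]
  · have hlt : l j < l j' := (hl hj.le).lt_of_ne hlabel
    rw [← apply_stretch_spread l j₀ g j, ← apply_stretch_spread l j₀ g j'] at hlt
    exact (hl.comp (monotone_stretch j₀ K)).reflect_lt hlt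

theorem IsAdmissible.exists_rigidSurj_comp_stretch [PartialOrder L] [OrderBot L] {S : Set L}
    {l : Fin b → L} (h : IsAdmissible S l) {j₀ : Fin b} (hj₀ : l j₀ ≠ ⊥) (g : Fin b ↪o Fin K) :
    ∃ v : RigidSurj (l ∘ stretch j₀ K) l, v.first = spread l j₀ g := by
  obtain ⟨x, hx, -⟩ := h.existsUnique_eq_bot
  have hleast : l (stretch j₀ K (spread l j₀ g x)) = ⊥ := (apply_stretch_spread ..).trans hx
  exact ⟨.ofFirst (spread l j₀ g) (strictMono_spread h.monotone j₀ g.strictMono)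
    (apply_stretch_spread l j₀ g) x ((h.comp_stretch hj₀ K).le_of_eq_bot hleast), rfl⟩

theorem IsAdmissible.exists_forall_exists_first_apply_eq [PartialOrder L] [OrderBot L] {S : Set L}
    {l : Fin b → L} (h : IsAdmissible S l) {r : L} (hr : r ≠ ⊥) (κ : Type*) [Finite κ]
    [Nonempty κ] :
    ∃ (d : ℕ) (lD : Fin d → L), IsAdmissible S lD ∧ ∀ χ : Fin d → κ,
      ∃ v : RigidSurj lD l, ∀ j j', l j = r → l j' = r → χ (v.first j) = χ (v.first j') := by
  by_cases hj₀ : ∃ j₀, l j₀ = r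
  · obtain ⟨j₀, rfl⟩ := hj₀
    obtain ⟨K, hK⟩ := exists_orderEmb_forall_apply_eq κ b
    refine ⟨b + K, l ∘ stretch j₀ K, h.comp_stretch hr K, fun χ => ?_⟩
    obtain ⟨g, hg⟩ := hK fun i => χ ⟨j₀ + i, by omega⟩
    obtain ⟨v, hv⟩ := h.exists_rigidSurj_comp_stretch hr g
    exact ⟨v, fun j j' hj hj' => by simpa [hv, spread, hj, hj'] using hg j j'⟩
  · exact ⟨b, l, h, fun _ => ⟨.id l, fun j _ hj => (hj₀ ⟨j, hj⟩).elim⟩⟩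

end Stretch

/-! ### The Ramsey theorem for admissible words -/

theorem PositionArrows.arrows {L κ : Type*} [Nonempty κ] {c d b n : ℕ} {lC : Fin c → L}
    {lD : Fin d → L} {lB : Fin b → L} {lA : Fin (n + 1) → L} (hC : PositionArrows κ lC lD lA)
    (hD : ∀ χ : Fin d → κ, ∃ v : RigidSurj lD lB, ∀ j j', lB j = lA (Fin.last n) →
      lB j' = lA (Fin.last n) → χ (v.first j) = χ (v.first j')) :
    Arrows κ lC lB lA := by
  classical
  intro χ
  obtain ⟨v, hv⟩ := hC χ
  let colour (i : Fin d) : κ :=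
    if h : ∃ u : RigidSurj lD lA, u.first (Fin.last n) = i then χ (h.choose.comp v)
    else Classical.arbitrary κ
  have hcolour (u : RigidSurj lD lA) : χ (u.comp v) = colour (u.first (Fin.last n)) := by
    have h : ∃ u' : RigidSurj lD lA, u'.first (Fin.last n) = u.first (Fin.last n) := ⟨u, rfl⟩
    simp only [colour, dif_pos h]
    exact hv _ _ h.choose_spec.symm
  obtain ⟨v', hv'⟩ := hD colour
  refine ⟨v'.comp v, fun u u' => ?_⟩
  rw [← RigidSurj.comp_assoc, ← RigidSurj.comp_assoc, hcolour, hcolour]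
  exact hv' _ _ (u.label_first _) (u'.label_first _)

theorem hasRamsey {L : Type*} [PartialOrder L] [OrderBot L] (κ : Type*) [Finite κ] [Nonempty κ] :
    ∀ {n : ℕ} (lA : Fin n → L), HasRamsey κ lA
  | 0, lA, S, b, lB, hB =>
    have : Subsingleton (RigidSurj lB lA) := DFunLike.subsingleton_cod
    ⟨b, lB, hB, arrows_self_of_subsingleton κ lB lA⟩
  | 1, lA, S, b, lB, hB =>
    have : Subsingleton (RigidSurj lB lA) := DFunLike.subsingleton_cod
    ⟨b, lB, hB, arrows_self_of_subsingleton κ lB lA⟩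
  | n + 2, lA, S, b, lB, hB => by
    by_cases hlast : lA (Fin.last (n + 1)) = ⊥
    · have : IsEmpty (RigidSurj lB lA) := ⟨fun u =>
        hB.ne_bot_of_lt (u.strictMono_first Fin.last_pos) ((u.label_first _).trans hlast)⟩
      exact ⟨b, lB, hB, arrows_self_of_subsingleton κ lB lA⟩
    · obtain ⟨d, lD, hlD, hD⟩ := hB.exists_forall_exists_first_apply_eq hlast κ
      obtain ⟨c, lC, hlC, hC⟩ :=
        (hasRamsey κ (lA ∘ Fin.castSucc)).exists_positionArrows S lD hlD
      exact ⟨c, lC, hlC, hC.arrows hD⟩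

/-! ### Coordinates in ordered algebras -/

section BooleanAlgebra

variable {α : Type*} [BooleanAlgebra α] {a : α}

theorem atom_le_compl_iff (ha : IsAtom a) {x : α} : a ≤ xᶜ ↔ ¬a ≤ x := by
  rw [ha.not_le_iff_disjoint, le_compl_iff_disjoint_right]

theorem atom_le_sup_iff (ha : IsAtom a) {x y : α} : a ≤ x ⊔ y ↔ a ≤ x ∨ a ≤ y := by
  simpa only [← ha.not_le_iff_disjoint, ← not_or, not_iff_not] using
    (disjoint_sup_right (a := a) (b := x) (c := y))

end BooleanAlgebra

theorem exists_fin_equiv_forall_lt_iff {S : Type*} [Finite S] (r : S → S → Prop)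
    [IsStrictTotalOrder S r] : ∃ (n : ℕ) (e : Fin n ≃ S), ∀ i i', r (e i) (e i') ↔ i < i' := by
  classical
  have := Fintype.ofFinite S
  let := linearOrderOfSTO r
  let e := monoEquivOfFin S rfl
  exact ⟨_, e.toEquiv, fun _ _ => e.lt_iff_lt⟩

namespace OrdAlg

variable {J : Type} [LinearOrder J]

/-- The indices of the nonempty ideals. -/
def idealSupport (A : OrdAlg J) : Set J :=
  {j | ⊥ ∈ A.P j}

/-- The sets that can occur as labels of atoms when `U` indexes the nonempty ideals. -/
def labelSets (U : Set J) : Set (Set J) :=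
  {s | IsUpperSet s ∧ s ⊆ U}

/-- The set of indices of the ideals containing the element `f x`, usually an atom. -/
def label {X : Type*} (A : OrdAlg J) (f : X → A.carrier) (x : X) : Set J :=
  {j | f x ∈ A.P j}

/-- `f` enumerates the atoms in decreasing order. -/
structure IsAtomEnum {X : Type*} [LinearOrder X] (A : OrdAlg J) (f : X → A.carrier) : Prop where
  isAtom : ∀ x, IsAtom (f x)
  exists_eq : ∀ a, IsAtom a → ∃ x, f x = a
  lt_iff : ∀ {x y}, A.lt (f y) (f x) ↔ x < y

theorem exists_isAtomEnum (A : OrdAlg J) [IsStrictTotalOrder A.carrier A.lt] :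
    ∃ (n : ℕ) (f : Fin n → A.carrier), A.IsAtomEnum f := by
  let r (a b : {a : A.carrier // IsAtom a}) : Prop := A.lt b a
  have : IsStrictTotalOrder _ r :=
    (RelEmbedding.preimage (Function.Embedding.subtype IsAtom)
      (Function.swap A.lt)).isStrictTotalOrder
  obtain ⟨n, e, he⟩ := exists_fin_equiv_forall_lt_iff r
  exact ⟨n, fun i => e i, fun i => (e i).2, fun a ha => ⟨e.symm ⟨a, ha⟩, by simp⟩, he _ _⟩

theorem isUpperSet_idealSupport {A : OrdAlg J} (hA : A.IdealFam) : IsUpperSet A.idealSupport :=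
  fun _ _ hij hi => hA.2.2.2 _ _ hij hi

namespace IsAtomEnum

variable {A : OrdAlg J} {X : Type*} [LinearOrder X] {f : X → A.carrier}

theorem injective (hf : A.IsAtomEnum f) : Function.Injective f := by
  refine .of_lt_imp_ne fun x y hxy heq => hxy.not_gt (hf.lt_iff.1 ?_)
  simpa only [heq] using hf.lt_iff.2 hxy

theorem le_iff_eq (hf : A.IsAtomEnum f) {x y : X} : f x ≤ f y ↔ x = y := by
  rw [(hf.isAtom y).le_iff_eq (hf.isAtom x).ne_bot, hf.injective.eq_iff]

theorem le_of_forall (hf : A.IsAtomEnum f) {a b : A.carrier} (h : ∀ x, f x ≤ a → f x ≤ b) :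
    a ≤ b := by
  refine BooleanAlgebra.le_iff_atom_le_imp.2 fun c hc => ?_
  obtain ⟨x, rfl⟩ := hf.exists_eq c hc
  exact h x

open Classical in
theorem sup_filter_le_eq [Fintype X] (hf : A.IsAtomEnum f) (a : A.carrier) :
    (Finset.univ.filter fun x => f x ≤ a).sup f = a := by
  refine le_antisymm (Finset.sup_le fun x hx => (Finset.mem_filter.1 hx).2)
    (hf.le_of_forall fun x hx => Finset.le_sup (Finset.mem_filter.2 ⟨Finset.mem_univ x, hx⟩))

theorem mem_P_of_forall (hA : A.IdealFam) (hf : A.IsAtomEnum f) {j : J}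
    (hj : j ∈ A.idealSupport) {a : A.carrier} (h : ∀ x, f x ≤ a → j ∈ A.label f x) :
    a ∈ A.P j := by
  classical
  have := Fintype.ofInjective f hf.injective
  rw [← hf.sup_filter_le_eq a]
  exact Finset.sup_induction hj (hA.2.2.1 j) fun x hx => h x (Finset.mem_filter.1 hx).2

theorem isAdmissible_label (hA : A.InNaBJu) (hf : A.IsAtomEnum f) :
    IsAdmissible (labelSets A.idealSupport) (A.label f) where
  monotone x y hxy j hx := by
    by_contra hy
    exact (hf.lt_iff.1 (hA.2.1.2.1 _ _ (hf.isAtom x) (hf.isAtom y) ⟨j, hx, hy⟩)).not_ge hxy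
  existsUnique_eq_bot := by
    obtain ⟨a, ⟨ha, haP⟩, hunique⟩ := hA.2.2
    obtain ⟨x, rfl⟩ := hf.exists_eq a ha
    refine ⟨x, Set.eq_empty_of_forall_notMem haP, fun y hy => hf.injective (hunique _ ?_)⟩
    exact ⟨hf.isAtom y, fun j => Set.eq_empty_iff_forall_notMem.1 hy j⟩
  mem x := ⟨fun _ _ hij hi => hA.1.2.2.2 _ _ hij hi, fun j hj => hA.1.2.1 j _ hj _ bot_le⟩

theorem exists_greatest_atom_diff_iff (hf : A.IsAtomEnum f) (a b : A.carrier) :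
    (∃ c, IsAtom c ∧ c ≤ b ∧ ¬c ≤ a ∧
        ∀ d, IsAtom d → ¬(d ≤ a ↔ d ≤ b) → d = c ∨ A.lt d c) ↔
      ∃ x, f x ≤ b ∧ ¬f x ≤ a ∧ ∀ y < x, (f y ≤ a ↔ f y ≤ b) := by
  constructor
  · rintro ⟨c, hc, hcb, hca, hgreatest⟩
    obtain ⟨x, rfl⟩ := hf.exists_eq c hc
    refine ⟨x, hcb, hca, fun y hy => ?_⟩
    by_contra hdiff
    rcases hgreatest (f y) (hf.isAtom y) hdiff with heq | hlt
    · exact hy.ne (hf.injective heq)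
    · exact hy.not_gt (hf.lt_iff.1 hlt)
  · rintro ⟨x, hxb, hxa, hleast⟩
    refine ⟨f x, hf.isAtom x, hxb, hxa, fun d hd hdiff => ?_⟩
    obtain ⟨y, rfl⟩ := hf.exists_eq d hd
    have hxy : x ≤ y := not_lt.1 fun hyx => hdiff (hleast y hyx)
    exact hxy.eq_or_lt.imp (fun h => by rw [h]) hf.lt_iff.2

theorem lt_iff_exists (hA : A.Natural) (hf : A.IsAtomEnum f) {a b : A.carrier} :
    A.lt a b ↔ ∃ x, f x ≤ b ∧ ¬f x ≤ a ∧ ∀ y < x, (f y ≤ a ↔ f y ≤ b) := by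
  have := hA.1
  rcases eq_or_ne a b with rfl | hab
  · exact iff_of_false (irrefl a) fun ⟨_, hx, hx', _⟩ => hx' hx
  · rw [hA.2.2 a b hab, hf.exists_greatest_atom_diff_iff]

end IsAtomEnum

/-! ### Power-set algebras -/

section OfLabels

variable {X : Type} [LinearOrder X] [Finite X] {U : Set J} {l : X → Set J}

/-- The power-set algebra on `X`, ordered antilexicographically with respect to the decreasing
enumeration `x ↦ {x}` of its atoms, in which the atom `{x}` has label `l x` and exactly the ideals
with index in `U` are nonempty. -/
noncomputable abbrev ofLabels (U : Set J) (l : X → Set J) : OrdAlg J where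
  carrier := Set X
  fin := Fintype.ofFinite _
  P j := {a | j ∈ U ∧ ∀ x ∈ a, j ∈ l x}
  lt a b := toLex (fun x => x ∈ a) < toLex fun x => x ∈ b

theorem ofLabels_lt_iff {a b : Set X} :
    (ofLabels U l).lt a b ↔ ∃ x, x ∈ b ∧ x ∉ a ∧ ∀ y < x, (y ∈ a ↔ y ∈ b) :=
  exists_congr fun x => by
    simp only [lt_iff_le_not_ge, le_Prop_eq, eq_iff_iff, Pi.toLex_apply]
    tauto

instance isStrictTotalOrder_ofLabels_lt :
    IsStrictTotalOrder (ofLabels U l).carrier (ofLabels U l).lt :=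
  (RelEmbedding.preimage (⟨fun a => toLex fun x => x ∈ a, fun _ _ h => h⟩ : Set X ↪ Lex (X → Prop))
    (· < ·)).isStrictTotalOrder

theorem isAtomEnum_singleton : (ofLabels U l).IsAtomEnum fun x : X => ({x} : Set X) where
  isAtom := Set.isAtom_singleton
  exists_eq a ha := (Set.isAtom_iff.1 ha).imp fun _ h => h.symm
  lt_iff {x y} := by
    rw [ofLabels_lt_iff]
    simp only [Set.mem_singleton_iff, exists_eq_left]
    refine ⟨fun ⟨hne, h⟩ => (not_lt.1 fun hyx => hyx.ne ((h y hyx).1 rfl)).lt_of_ne hne,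
      fun h => ⟨h.ne, fun z hz => iff_of_false (hz.trans h).ne hz.ne⟩⟩

theorem idealFam_ofLabels (hU : IsUpperSet U) (hl : IsAdmissible (labelSets U) l) :
    (ofLabels U l).IdealFam := by
  obtain ⟨x, hx, -⟩ := hl.existsUnique_eq_bot
  refine ⟨fun j hj => ?_, fun j a ha b hba => ⟨ha.1, fun x hx => ha.2 x (hba hx)⟩,
    fun j a ha b hb => ⟨ha.1, fun x hx => hx.elim (ha.2 x) (hb.2 x)⟩,
    fun i j hij a ha => ⟨hU hij ha.1, fun x hx => (hl.mem x).1 hij (ha.2 x hx)⟩⟩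
  have hjx := hj.2 x (Set.mem_univ x)
  rwa [hx] at hjx

theorem natural_ofLabels (hl : Monotone l) : (ofLabels U l).Natural := by
  have hf := isAtomEnum_singleton (U := U) (l := l)
  refine ⟨inferInstance, fun a b ha hb ⟨i, hia, hib⟩ => ?_, fun a b _ => ?_⟩
  · obtain ⟨x, rfl⟩ := hf.exists_eq a ha
    obtain ⟨y, rfl⟩ := hf.exists_eq b hb
    have hx : i ∈ l x := hia.2 x rfl
    have hy : i ∉ l y := fun hy => hib ⟨hia.1, fun _ hz => hz ▸ hy⟩
    exact hf.lt_iff.2 (lt_of_not_ge fun hxy => hy (hl hxy hx))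
  · rw [hf.exists_greatest_atom_diff_iff]
    simpa only [Set.singleton_subset_iff] using ofLabels_lt_iff (U := U) (l := l)

theorem inNaBJu_ofLabels (hU : IsUpperSet U) (hl : IsAdmissible (labelSets U) l) :
    (ofLabels U l).InNaBJu := by
  have hf := isAtomEnum_singleton (U := U) (l := l)
  have mem_P_iff (x : X) (j : J) : ({x} : Set X) ∈ (ofLabels U l).P j ↔ j ∈ l x := by
    simpa using @(hl.mem x).2 j
  obtain ⟨x, hx, hunique⟩ := hl.existsUnique_eq_bot
  refine ⟨idealFam_ofLabels hU hl, natural_ofLabels hl.monotone, {x},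
    ⟨hf.isAtom x, fun j => ?_⟩, ?_⟩
  · simp [mem_P_iff, hx]
  · rintro a ⟨ha, haP⟩
    obtain ⟨y, rfl⟩ := hf.exists_eq a ha
    rw [hunique y (Set.eq_empty_of_forall_notMem fun j => (mem_P_iff y j).not.1 (haP j))]

end OfLabels

/-! ### Duality -/

/-- The map dual to `s`, viewed as a map from `X` to the atoms of `A`. -/
def pull {X Y : Type*} (A : OrdAlg J) (f : Y → A.carrier) (s : X → Y) (a : A.carrier) : Set X :=
  {x | f (s x) ≤ a}

section Duality

variable {A : OrdAlg J} {X : Type} [LinearOrder X] [Finite X] {Y : Type*} [LinearOrder Y]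
  {f : Y → A.carrier} {U : Set J} {l : X → Set J}

theorem lt_iff_ofLabels_lt_pull (hA : A.Natural) (hf : A.IsAtomEnum f)
    (s : RigidSurj l (A.label f)) (a b : A.carrier) :
    A.lt a b ↔ (ofLabels U l).lt (A.pull f s a) (A.pull f s b) := by
  rw [hf.lt_iff_exists hA, ofLabels_lt_iff]
  constructor
  · rintro ⟨y, hyb, hya, hlt⟩
    exact ⟨s.first y, by simpa [pull] using hyb, by simpa [pull] using hya,
      fun x hx => hlt _ (s.apply_lt_of_lt_first hx)⟩
  · rintro ⟨x, hxb, hxa, hlt⟩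
    refine ⟨s x, hxb, hxa, fun y hy => ?_⟩
    simpa [pull] using hlt (s.first y) ((s.strictMono_first hy).trans_le (s.first_apply_le x))

theorem mem_P_iff_pull_mem_P (hA : A.IdealFam) (hf : A.IsAtomEnum f) (hl : Monotone l)
    (s : RigidSurj l (A.label f)) (j : J) (a : A.carrier) :
    a ∈ A.P j ↔ A.pull f s a ∈ (ofLabels A.idealSupport l).P j := by
  refine ⟨fun ha => ⟨hA.2.1 j a ha _ bot_le, fun x hx => ?_⟩, fun ⟨hj, h⟩ =>
    hf.mem_P_of_forall hA hj fun y hy => ?_⟩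
  · apply hl (s.first_apply_le x)
    rw [s.label_first]
    exact hA.2.1 j a ha _ hx
  · rw [← s.label_first]
    exact h _ (by simpa [pull] using hy)

/-- The embedding dual to a labelled rigid surjection. -/
noncomputable def Emb.ofRigidSurj (s : RigidSurj l (A.label f)) (hA : A.IdealFam)
    (hA' : A.Natural) (hf : A.IsAtomEnum f) (hl : Monotone l) :
    Emb A (ofLabels A.idealSupport l) where
  toFun := A.pull f s
  inj a b hab := by
    have mem_iff (y : Y) : f y ≤ a ↔ f y ≤ b := by
      simpa [pull] using Set.ext_iff.1 hab (s.first y)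
    exact (hf.le_of_forall fun y => (mem_iff y).1).antisymm (hf.le_of_forall fun y => (mem_iff y).2)
  map_sup a b := Set.ext fun x => atom_le_sup_iff (hf.isAtom (s x))
  map_inf a b := Set.ext fun x => le_inf_iff
  map_compl a := Set.ext fun x => atom_le_compl_iff (hf.isAtom (s x))
  map_bot := Set.eq_empty_of_forall_notMem fun x hx => (hf.isAtom (s x)).ne_bot (le_bot_iff.1 hx)
  map_top := Set.eq_univ_of_forall fun _ => le_top
  map_lt := lt_iff_ofLabels_lt_pull hA' hf s
  map_P := mem_P_iff_pull_mem_P hA hf hl s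

theorem Emb.monotone {B : OrdAlg J} (e : Emb A B) : Monotone e.toFun := fun a b hab => by
  rw [← sup_eq_right, ← e.map_sup, sup_eq_right.2 hab]

theorem Emb.exists_mem (hf : A.IsAtomEnum f) (e : Emb A (ofLabels U l)) (x : X) :
    ∃ y, x ∈ (e.toFun (f y) : Set X) := by
  classical
  have := Fintype.ofInjective f hf.injective
  have map_sup :=
    Finset.apply_sup_eq_sup_comp (s := {y | f y ≤ ⊤}) (f := f) e.toFun e.map_sup e.map_bot
  rw [hf.sup_filter_le_eq, e.map_top] at map_sup
  have hx : x ∈ (⊤ : Set X) := trivial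
  rw [map_sup] at hx
  simpa [Finset.sup_eq_iSup] using hx

theorem Emb.exists_toFun_eq_pull (hf : A.IsAtomEnum f) (e : Emb A (ofLabels U l)) :
    ∃ s : X → Y, e.toFun = A.pull f s := by
  choose s hs using e.exists_mem hf
  refine ⟨s, funext fun a => Set.ext fun x => ⟨fun hx => ?_, fun hx => e.monotone hx (hs x)⟩⟩
  by_contra hxa
  have hx' : x ∈ (e.toFun aᶜ : Set X) :=
    e.monotone ((atom_le_compl_iff (hf.isAtom (s x))).2 hxa) (hs x)
  rw [e.map_compl] at hx'
  exact hx' hx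

theorem Emb.exists_rigidSurj (hf : A.IsAtomEnum f) (hl : Monotone l) (hlU : ∀ x, l x ⊆ U)
    (e : Emb A (ofLabels U l)) :
    ∃ s : RigidSurj l (A.label f), e.toFun = A.pull f s := by
  obtain ⟨s, hs⟩ := e.exists_toFun_eq_pull hf
  have pull_apply (y : Y) : A.pull f s (f y) = s ⁻¹' {y} := Set.ext fun x => hf.le_iff_eq
  have fibre_nonempty (y : Y) : (s ⁻¹' {y}).Nonempty := by
    rw [← pull_apply, ← hs, Set.nonempty_iff_ne_empty]
    exact fun h => (hf.isAtom y).ne_bot (e.inj (h.trans e.map_bot.symm))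
  choose p hp using fun y => exists_isLeast (fibre_nonempty y)
  refine ⟨⟨s, p, fun y y' hy => ?_, fun y => (hp y).1, fun x => (hp (s x)).2 rfl, fun y => ?_⟩, hs⟩
  · have hlt := (e.map_lt _ _).1 (hf.lt_iff.2 hy)
    rw [hs, pull_apply, pull_apply, ofLabels_lt_iff] at hlt
    obtain ⟨x, hxy, hxy', hx⟩ := hlt
    refine ((hp y).2 hxy).trans_lt (lt_of_not_ge fun hpx => ?_)
    rcases hpx.eq_or_lt with rfl | hpx
    · exact hxy' (hp y').1
    · exact hy.ne (((hx _ hpx).1 (hp y').1).symm.trans (hp y').1)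
  · ext j
    have hP := e.map_P j (f y)
    rw [hs, pull_apply] at hP
    exact ⟨fun hj => hP.2 ⟨hlU _ hj, fun x hx => hl ((hp y).2 hx) hj⟩,
      fun hj => (hP.1 hj).2 _ (hp y).1⟩

theorem Emb.exists_range_eq {B : OrdAlg J} {Z : Type*} [LinearOrder Z] {g : Z → B.carrier}
    (hf : A.IsAtomEnum f) (hl : Monotone l) (hlU : ∀ x, l x ⊆ U) (v : RigidSurj l (B.label g))
    (e : Emb A (ofLabels U l)) (he : Set.range e.toFun ⊆ Set.range (B.pull g v)) :
    ∃ u : RigidSurj (B.label g) (A.label f),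
      Set.range e.toFun = Set.range (A.pull f (u.comp v)) := by
  obtain ⟨s, hs⟩ := e.exists_rigidSurj hf hl hlU
  obtain ⟨u, rfl⟩ := v.exists_comp_eq s fun x x' hx => by
    obtain ⟨b, hb⟩ := he ⟨f (s x), rfl⟩
    have mem_iff (z : X) : g (v z) ≤ b ↔ s z = s x := by
      rw [← hf.le_iff_eq]
      exact Set.ext_iff.1 (hb.trans (congrFun hs _)) z
    exact ((mem_iff x').1 (hx ▸ (mem_iff x).2 rfl)).symm
  exact ⟨u, by rw [hs]⟩

end Duality

end OrdAlg

theorem naBJu_ramsey_property {J : Type} [LinearOrder J]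
    (A B : OrdAlg J) (hA : A.InNaBJu) (hB : B.InNaBJu)
    (hAB : Nonempty (OrdAlg.Emb A B))
    (k : ℕ) (hk : 2 ≤ k) :
    ∃ C : OrdAlg J, C.InNaBJu ∧
      ∀ χ : Set C.carrier → Fin k,
        ∃ e : OrdAlg.Emb B C,
          ∀ S₁ ∈ OrdAlg.Copies A C, ∀ S₂ ∈ OrdAlg.Copies A C,
            S₁ ⊆ Set.range e.toFun → S₂ ⊆ Set.range e.toFun → χ S₁ = χ S₂ := by
  have := hA.2.1.1
  have := hB.2.1.1
  have : Nonempty (Fin k) := ⟨⟨0, by omega⟩⟩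
  obtain ⟨n, f, hf⟩ := A.exists_isAtomEnum
  obtain ⟨b, g, hg⟩ := B.exists_isAtomEnum
  obtain ⟨c, l, hl, harrows⟩ :=
    hasRamsey (Fin k) (A.label f) _ (B.label g) (hg.isAdmissible_label hB)
  refine ⟨OrdAlg.ofLabels B.idealSupport l,
    OrdAlg.inNaBJu_ofLabels (OrdAlg.isUpperSet_idealSupport hB.1) hl, fun χ => ?_⟩
  obtain ⟨v, hv⟩ := harrows fun s => χ (Set.range (A.pull f s))
  refine ⟨.ofRigidSurj v hB.1 hB.2.1 hg hl.monotone, ?_⟩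
  rintro _ ⟨e₁, rfl⟩ _ ⟨e₂, rfl⟩ h₁ h₂
  have hlU (x : Fin c) : l x ⊆ B.idealSupport := (hl.mem x).2
  obtain ⟨u₁, hu₁⟩ := e₁.exists_range_eq hf hl.monotone hlU v h₁
  obtain ⟨u₂, hu₂⟩ := e₂.exists_range_eq hf hl.monotone hlU v h₂
  rw [hu₁, hu₂]
  exact hv u₁ u₂
end

section
/- The class na(B_J) is order forgetful: if (A, (P_j^A)) and (B, (P_j^B)) are members of B_J that are isomorphic as Boolean algebras with predicates (there is a Boolean algebra isomorphism h : A → B with x ∈ P_j^A ⟺ h(x) ∈ P_j^B for all j ∈ J), then for any natural ordering <_A on A and any natural ordering <_B on B there exists an isomorphism from (A, (P_j^A), <_A) to (B, (P_j^B), <_B) that additionally preserves the linear orders. -/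
/-!
A natural order on a finite Boolean algebra is determined by its restriction to the atoms, and a
finite Boolean algebra is determined by its set of atoms. Properness says that the atoms lying in
`P j` form an initial segment of the chain of atoms. An isomorphism of algebras with predicates
shows that both chains of atoms have the same length, and that the initial segments belonging to
the same `j` have the same length. Hence the unique order isomorphism between the chains matches
the initial segments, and its extension to the algebras preserves everything.
-/

section InitialSegments

theorem eq_of_isLowerSet_of_encard_eq {α : Type*} [LinearOrder α] {s t : Set α}
    (hs : IsLowerSet s) (ht : IsLowerSet t) (hfin : s.Finite) (hcard : s.encard = t.encard) :
    s = t := by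
  have htfin : t.Finite := Set.encard_ne_top_iff.1 (hcard ▸ hfin.encard_lt_top.ne)
  rcases hs.total ht with hst | hts
  · exact hfin.eq_of_subset_of_encard_le hst hcard.ge
  · exact (htfin.eq_of_subset_of_encard_le hts hcard.le).symm

theorem preimage_eq_of_isLowerSet {α β : Type*} [LinearOrder α] [Preorder β] (f : α ≃o β)
    (g : α ≃ β) {s : Set α} {t : Set β} (hs : IsLowerSet s) (ht : IsLowerSet t) (hfin : s.Finite)
    (hg : g ⁻¹' t = s) : f ⁻¹' t = s := by
  refine (eq_of_isLowerSet_of_encard_eq hs (ht.preimage f.monotone) hfin ?_).symm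
  rw [← hg, Set.encard_preimage_of_bijective f.bijective,
    Set.encard_preimage_of_bijective g.bijective]

variable {α β : Type*} [Finite α]

theorem nonempty_orderIso_of_equiv [LinearOrder α] [LinearOrder β] (g : α ≃ β) :
    Nonempty (α ≃o β) := by
  have := Fintype.ofFinite α
  have := Fintype.ofEquiv α g
  exact ⟨(Fintype.orderIsoFinOfCardEq α rfl).symm.trans
    (Fintype.orderIsoFinOfCardEq β (Fintype.card_congr g).symm)⟩

theorem exists_relIso_preimage_eq (r : α → α → Prop) (s : β → β → Prop)
    [IsStrictTotalOrder α r] [IsStrictTotalOrder β s] (g : α ≃ β) :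
    ∃ f : r ≃r s, ∀ (S : Set α) (T : Set β), (∀ a b, r a b → b ∈ S → a ∈ S) →
      (∀ a b, s a b → b ∈ T → a ∈ T) → g ⁻¹' T = S → f ⁻¹' T = S := by
  classical
  let := linearOrderOfSTO r
  let := linearOrderOfSTO s
  obtain ⟨f⟩ := nonempty_orderIso_of_equiv g
  refine ⟨f.toRelIsoLT, fun S T hS hT hg => ?_⟩
  have hS_lower : IsLowerSet S := isLowerSet_iff_forall_lt.2 fun b a hab => hS a b hab
  have hT_lower : IsLowerSet T := isLowerSet_iff_forall_lt.2 fun b a hab => hT a b hab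
  exact preimage_eq_of_isLowerSet f g hS_lower hT_lower S.toFinite hg

end InitialSegments

section Atoms

open CompleteAtomicBooleanAlgebra

theorem toSetOfIsAtom_coe {α : Type*} [CompleteAtomicBooleanAlgebra α] (a : {a : α // IsAtom a}) :
    toSetOfIsAtom (a : α) = {a} := by
  ext b
  exact (a.2.le_iff_eq b.2.ne_bot).trans Subtype.coe_inj

theorem exists_orderIso_apply_atom_eq {α β : Type*} [CompleteAtomicBooleanAlgebra α]
    [CompleteAtomicBooleanAlgebra β] (f : {a : α // IsAtom a} ≃ {b : β // IsAtom b}) :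
    ∃ e : α ≃o β, ∀ a : {a : α // IsAtom a}, e a = f a := by
  refine ⟨toSetOfIsAtom.trans (f.toOrderIsoSet.trans toSetOfIsAtom.symm), fun a => ?_⟩
  simp only [OrderIso.trans_apply, OrderIso.symm_apply_eq, toSetOfIsAtom_coe,
    Equiv.toOrderIsoSet_apply, Set.image_singleton]

theorem mem_iff_forall_isAtom_mem {α : Type*} [SemilatticeSup α] [OrderBot α] [IsAtomistic α]
    [Finite α] {s : Set α} (hs : IsLowerSet s) (hs_sup : SupClosed s) {x : α} :
    -- The condition `⊥ ∈ s` excludes `s = ∅`, for which `x = ⊥` satisfies the rest vacuously.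
    x ∈ s ↔ ⊥ ∈ s ∧ ∀ a, IsAtom a → a ≤ x → a ∈ s := by
  refine ⟨fun hx => ⟨hs bot_le hx, fun a _ hax => hs hax hx⟩, fun ⟨hbot, hatom⟩ => ?_⟩
  let atomsBelow : Finset α := (Set.toFinite {a | IsAtom a ∧ a ≤ x}).toFinset
  have hx_le : x ≤ atomsBelow.sup id := le_iff_atom_le_imp.2 fun a ha hax =>
    Finset.le_sup (f := id) ((Set.Finite.mem_toFinset _).2 ⟨ha, hax⟩)
  refine hs hx_le (Finset.sup_mem s hbot hs_sup _ id fun a ha => ?_)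
  obtain ⟨ha_atom, hax⟩ := (Set.Finite.mem_toFinset _).1 ha
  exact hatom a ha_atom hax

theorem eq_of_forall_isAtom_mem_iff {α : Type*} [SemilatticeSup α] [OrderBot α] [IsAtomistic α]
    [Finite α] {s t : Set α} (hs : IsLowerSet s) (hs_sup : SupClosed s) (ht : IsLowerSet t)
    (ht_sup : SupClosed t) (hbot : ⊥ ∈ s ↔ ⊥ ∈ t) (hatom : ∀ a, IsAtom a → (a ∈ s ↔ a ∈ t)) :
    s = t := by
  ext x
  rw [mem_iff_forall_isAtom_mem hs hs_sup, mem_iff_forall_isAtom_mem ht ht_sup, hbot]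
  exact and_congr_right' <| forall₂_congr fun a ha => by rw [hatom a ha]

end Atoms

section NaturalOrders

variable {ι : Sort*} {α β : Type*}

/-- `r` is antilexicographical: distinct `x`, `y` are compared by the `r`-greatest atom lying below
exactly one of them, and the larger element is the one above that atom. -/
def IsAntilex [PartialOrder α] [OrderBot α] (r : α → α → Prop) : Prop :=
  ∀ x y : α, x ≠ y → (r x y ↔ ∃ c, IsAtom c ∧ c ≤ y ∧ ¬ c ≤ x ∧
    ∀ d, IsAtom d → ¬ (d ≤ x ↔ d ≤ y) → d = c ∨ r d c)

theorem IsAntilex.rel_iff_of_atoms [PartialOrder α] [OrderBot α] [PartialOrder β] [OrderBot β]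
    {r : α → α → Prop} {s : β → β → Prop} [Std.Irrefl r] [Std.Irrefl s]
    (hr : IsAntilex r) (hs : IsAntilex s) (e : α ≃o β)
    (hatom : ∀ a b, IsAtom a → IsAtom b → (r a b ↔ s (e a) (e b))) (x y : α) :
    r x y ↔ s (e x) (e y) := by
  rcases eq_or_ne x y with rfl | hxy
  · exact iff_of_false (irrefl x) (irrefl (e x))
  rw [hr x y hxy, hs _ _ (e.injective.ne hxy), e.surjective.exists]
  simp only [e.surjective.forall, e.isAtom_iff, e.le_iff_le, e.injective.eq_iff]
  exact exists_congr fun c => and_congr_right fun hc => and_congr_right' <| and_congr_right' <|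
    forall₃_congr fun d hd _ => or_congr_right (hatom d c hd hc)

/-- `r` is proper with respect to the predicates `P`: an atom in some `P i` precedes every atom
not in that `P i`. -/
def IsProperOnAtoms [PartialOrder α] [OrderBot α] (P : ι → Set α) (r : α → α → Prop) : Prop :=
  ∀ a b : α, IsAtom a → IsAtom b → (∃ i, a ∈ P i ∧ b ∉ P i) → r a b

theorem IsProperOnAtoms.mem_of_rel [PartialOrder α] [OrderBot α] {P : ι → Set α}
    {r : α → α → Prop} [Std.Asymm r] (hr : IsProperOnAtoms P r) {i : ι} {a b : α} (ha : IsAtom a)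
    (hb : IsAtom b) (hab : r a b) (hbP : b ∈ P i) : a ∈ P i := by
  by_contra haP
  exact asymm hab (hr b a hb ha ⟨i, hbP, haP⟩)

theorem IsProperOnAtoms.exists_relIso_mem_iff [PartialOrder α] [OrderBot α] [PartialOrder β]
    [OrderBot β] [Finite {a : α // IsAtom a}] {P : ι → Set α} {Q : ι → Set β}
    {r : α → α → Prop} {s : β → β → Prop} [IsStrictTotalOrder α r] [IsStrictTotalOrder β s]
    (hr : IsProperOnAtoms P r) (hs : IsProperOnAtoms Q s)
    (g : {a : α // IsAtom a} ≃ {b : β // IsAtom b})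
    (hg : ∀ i (a : {a : α // IsAtom a}), (a : α) ∈ P i ↔ (g a : β) ∈ Q i) :
    ∃ f : Subrel r IsAtom ≃r Subrel s IsAtom,
      ∀ i (a : {a : α // IsAtom a}), (a : α) ∈ P i ↔ (f a : β) ∈ Q i := by
  have := (Subrel.relEmbedding r IsAtom).isStrictTotalOrder
  have := (Subrel.relEmbedding s IsAtom).isStrictTotalOrder
  obtain ⟨f, hf⟩ := exists_relIso_preimage_eq (Subrel r IsAtom) (Subrel s IsAtom) g
  refine ⟨f, fun i a => ?_⟩
  have hf_preimage : f ⁻¹' (Subtype.val ⁻¹' Q i) = Subtype.val ⁻¹' P i :=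
    hf _ _ (fun a b => hr.mem_of_rel a.2 b.2) (fun a b => hs.mem_of_rel a.2 b.2)
      (Set.ext fun a => (hg i a).symm)
  exact (Set.ext_iff.1 hf_preimage a).symm

/-- `r` is a natural order with respect to the predicates `P`. This is `OrdAlg.Natural` for an
unbundled algebra, with no order on the index type of the predicates. -/
structure IsNaturalOrder [PartialOrder α] [OrderBot α] (P : ι → Set α) (r : α → α → Prop) :
    Prop extends IsStrictTotalOrder α r where
  proper : IsProperOnAtoms P r
  antilex : IsAntilex r

theorem naBJ_order_forgetful_general [BooleanAlgebra α] [BooleanAlgebra β] [Finite α]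
    {P : ι → Set α} {Q : ι → Set β} {r : α → α → Prop} {s : β → β → Prop}
    (hP : ∀ i, IsLowerSet (P i)) (hP_sup : ∀ i, SupClosed (P i))
    (hr : IsNaturalOrder P r) (hs : IsNaturalOrder Q s)
    (h : α ≃o β) (hPQ : ∀ i x, x ∈ P i ↔ h x ∈ Q i) :
    ∃ e : α ≃o β, (∀ i x, x ∈ P i ↔ e x ∈ Q i) ∧ ∀ x y, r x y ↔ s (e x) (e y) := by
  have := hr.toIsStrictTotalOrder
  have := hs.toIsStrictTotalOrder
  have := Fintype.ofFinite α
  have := Fintype.ofEquiv α h.toEquiv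
  let := Fintype.toCompleteAtomicBooleanAlgebra α
  let := Fintype.toCompleteAtomicBooleanAlgebra β
  obtain rfl : Q = fun i => h.symm ⁻¹' P i := by
    ext i y
    simpa using (hPQ i (h.symm y)).symm
  obtain ⟨f, hf⟩ := hr.proper.exists_relIso_mem_iff hs.proper
    (h.toEquiv.subtypeEquiv fun a => (h.isAtom_iff a).symm) fun i a => hPQ i a
  obtain ⟨e, he⟩ := exists_orderIso_apply_atom_eq f.toEquiv
  have he_lower (i) : IsLowerSet (e ⁻¹' (h.symm ⁻¹' P i)) :=
    ((hP i).preimage h.symm.monotone).preimage e.monotone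
  have he_sup (i) : SupClosed (e ⁻¹' (h.symm ⁻¹' P i)) :=
    ((hP_sup i).preimage h.symm).preimage e
  have he_mem (i) : P i = e ⁻¹' (h.symm ⁻¹' P i) :=
    eq_of_forall_isAtom_mem_iff (hP i) (hP_sup i) (he_lower i) (he_sup i) (by simp)
      fun a ha => by simpa [he ⟨a, ha⟩] using hf i ⟨a, ha⟩
  refine ⟨e, fun i x => Set.ext_iff.1 (he_mem i) x,
    hr.antilex.rel_iff_of_atoms hs.antilex e fun a b ha hb => ?_⟩
  rw [he ⟨a, ha⟩, he ⟨b, hb⟩]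
  exact (f.map_rel_iff (a := ⟨a, ha⟩) (b := ⟨b, hb⟩)).symm

end NaturalOrders

/-!
STATEMENT 10: The class na(B_J) is order forgetful: if two members of B_J are isomorphic
as Boolean algebras with predicates, then for any natural orderings on them there is an
isomorphism that additionally preserves the linear orders.
-/

theorem naBJ_order_forgetful {J : Type} [LinearOrder J]
    (A B : OrdAlg J)
    -- A and B are members of B_J (the orderings A.lt, B.lt are the given natural orderings)
    (hA : A.IdealFam ∧ (∃ a : A.carrier, IsAtom a ∧ ∀ j : J, a ∉ A.P j) ∧ A.Natural)
    (hB : B.IdealFam ∧ (∃ b : B.carrier, IsAtom b ∧ ∀ j : J, b ∉ B.P j) ∧ B.Natural)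
    -- h is an isomorphism of the Boolean algebras with predicates (ignoring the orders)
    (h : A.carrier ≃ B.carrier)
    (h_sup : ∀ x y : A.carrier, h (x ⊔ y) = h x ⊔ h y)
    (h_inf : ∀ x y : A.carrier, h (x ⊓ y) = h x ⊓ h y)
    (h_compl : ∀ x : A.carrier, h xᶜ = (h x)ᶜ)
    (h_bot : h ⊥ = ⊥) (h_top : h ⊤ = ⊤)
    (h_P : ∀ (j : J) (x : A.carrier), x ∈ A.P j ↔ h x ∈ B.P j) :
    -- then there is an isomorphism that also preserves the linear orders
    ∃ e : A.carrier ≃ B.carrier,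
      (∀ x y : A.carrier, e (x ⊔ y) = e x ⊔ e y) ∧
      (∀ x y : A.carrier, e (x ⊓ y) = e x ⊓ e y) ∧
      (∀ x : A.carrier, e xᶜ = (e x)ᶜ) ∧
      e ⊥ = ⊥ ∧ e ⊤ = ⊤ ∧
      (∀ (j : J) (x : A.carrier), x ∈ A.P j ↔ e x ∈ B.P j) ∧
      (∀ x y : A.carrier, A.lt x y ↔ B.lt (e x) (e y)) := by
  have h_le : ∀ {x y}, h x ≤ h y ↔ x ≤ y := by
    intro x y
    rw [← sup_eq_right, ← h_sup, h.apply_eq_iff_eq, sup_eq_right]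
  obtain ⟨⟨-, hP_lower, hP_sup, -⟩, -, hA_sto, hA_proper, hA_antilex⟩ := hA
  obtain ⟨-, -, hB_sto, hB_proper, hB_antilex⟩ := hB
  obtain ⟨e, he_P, he_lt⟩ := naBJ_order_forgetful_general
    (fun j x y hyx hx => hP_lower j x hx y hyx) (fun j x hx y hy => hP_sup j x hx y hy)
    ⟨hA_sto, hA_proper, hA_antilex⟩ ⟨hB_sto, hB_proper, hB_antilex⟩ ⟨h, h_le⟩ h_P
  exact ⟨e.toEquiv, map_sup e, map_inf e, map_compl e, map_bot e, map_top e, he_P, he_lt⟩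
end

section
/- Let X be the Cantor space and let M be a maximal chain of nonempty closed subsets of X. Then for every nonempty clopen subset C of X, the set M_C ∩ C is a singleton, where M_C = ⋂{M ∈ M : M ∩ C ≠ ∅}. -/
/-!
The members of `M` meeting `C` form a chain of closed sets, so by compactness of `C` their
intersection `K = M_C` still meets `C`. Choose `x ∈ K ∩ C` that is closed relative to `K ∩ C`, and
let `B = (K \ C) ∪ closure {x}`, a nonempty closed subset of `K`. A member of `M` meeting `C`
contains `K`, hence `B`; a member disjoint from `C` lies in every member meeting `C`, hence in
`K \ C ⊆ B`. By maximality `B ∈ M`. Since `B` meets `C` at `x`, this gives `K ⊆ B`, and so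
`K ∩ C ⊆ closure {x} ∩ (K ∩ C) = {x}`.
-/

/-- The Cantor space. -/
abbrev CantorSpace : Type := ℕ → Bool

/-- `M` is a maximal chain of nonempty closed subsets of `X`: a family of nonempty closed
subsets linearly ordered by inclusion, not properly contained in any other such family. -/
def IsMaxChainOfClosed {X : Type} [TopologicalSpace X] (M : Set (Set X)) : Prop :=
  (∀ A ∈ M, A.Nonempty ∧ IsClosed A) ∧ IsChain (· ⊆ ·) M ∧
  ∀ M' : Set (Set X), (∀ A ∈ M', A.Nonempty ∧ IsClosed A) → IsChain (· ⊆ ·) M' →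
    M ⊆ M' → M' = M

/-- `chainInter M C` is the set `M_C = ⋂ {A ∈ M : A ∩ C ≠ ∅}`. -/
def chainInter {X : Type} [TopologicalSpace X] (M : Set (Set X)) (C : Set X) : Set X :=
  ⋂₀ {A | A ∈ M ∧ (A ∩ C).Nonempty}

/-!
STATEMENT 12: Let X be the Cantor space and M a maximal chain of nonempty closed subsets
of X. Then for every nonempty clopen C ⊆ X, the set M_C ∩ C is a singleton.
-/

section

open Set

theorem exists_closure_singleton_inter_eq_of_isCompact {X : Type*} [TopologicalSpace X] [T0Space X]
    {S : Set X} (hS : IsCompact S) (hne : S.Nonempty) : ∃ x ∈ S, closure {x} ∩ S = {x} := by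
  have := isCompact_iff_compactSpace.mp hS
  have := hne.to_subtype
  obtain ⟨⟨x, hxS⟩, -, hx⟩ := (isClosed_univ (X := S)).exists_closed_singleton univ_nonempty
  refine ⟨x, hxS, Subset.antisymm (fun y ⟨hyx, hyS⟩ ↦ ?_) ?_⟩
  · have hmem : (⟨y, hyS⟩ : S) ∈ closure {⟨x, hxS⟩} := by
      rwa [closure_subtype, image_singleton]
    rw [hx.closure_eq] at hmem
    exact congrArg Subtype.val hmem
  · exact singleton_subset_iff.mpr ⟨subset_closure rfl, hxS⟩

theorem inter_sInter_nonempty_of_isChain {X : Type*} [TopologicalSpace X] {C : Set X}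
    {F : Set (Set X)} (hCne : C.Nonempty) (hC : IsCompact C) (hF : ∀ A ∈ F, IsClosed A)
    (hchain : IsChain (· ⊆ ·) F) (hmeet : ∀ A ∈ F, (A ∩ C).Nonempty) :
    (C ∩ ⋂₀ F).Nonempty := by
  rcases F.eq_empty_or_nonempty with rfl | hFne
  · simpa using hCne
  have := hFne.to_subtype
  by_contra! hempty
  rw [sInter_eq_iInter] at hempty
  have hdirected : DirectedOn (fun A B : Set X ↦ A ⊇ B) F := IsChain.directedOn hchain.symm
  obtain ⟨⟨A, hA⟩, hCA⟩ := hC.elim_directed_family_closed (fun A : F ↦ (A : Set X))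
    (fun A ↦ hF A A.2) hempty hdirected.directed_val
  exact (hmeet A hA).ne_empty (inter_comm C A ▸ hCA)

section ChainInter

variable {X : Type} [TopologicalSpace X] {M : Set (Set X)} {A C : Set X}

theorem chainInter_subset (hA : A ∈ M) (hAC : (A ∩ C).Nonempty) : chainInter M C ⊆ A :=
  sInter_subset_of_mem ⟨hA, hAC⟩

theorem isClosed_chainInter (hM : ∀ A ∈ M, IsClosed A) : IsClosed (chainInter M C) :=
  isClosed_sInter fun A hA ↦ hM A hA.1

theorem chainInter_inter_nonempty (hM : ∀ A ∈ M, IsClosed A) (hchain : IsChain (· ⊆ ·) M)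
    (hCne : C.Nonempty) (hC : IsCompact C) : (chainInter M C ∩ C).Nonempty := by
  rw [inter_comm]
  exact inter_sInter_nonempty_of_isChain hCne hC (fun A hA ↦ hM A hA.1)
    (hchain.mono fun A hA ↦ hA.1) fun A hA ↦ hA.2

theorem subset_chainInter_of_disjoint (hchain : IsChain (· ⊆ ·) M) (hA : A ∈ M)
    (hAC : Disjoint A C) : A ⊆ chainInter M C := by
  refine subset_sInter fun D ⟨hD, hDC⟩ ↦ (hchain.total hA hD).resolve_right fun hDA ↦ ?_
  exact not_disjoint_iff_nonempty_inter.mpr hDC (hAC.mono_left hDA)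

end ChainInter

namespace IsMaxChainOfClosed

variable {X : Type} [TopologicalSpace X] {M : Set (Set X)} {B C F : Set X}

theorem isClosed_of_mem (hM : IsMaxChainOfClosed M) : ∀ A ∈ M, IsClosed A :=
  fun A hA ↦ (hM.1 A hA).2

theorem isChain (hM : IsMaxChainOfClosed M) : IsChain (· ⊆ ·) M :=
  hM.2.1

theorem mem_of_forall_subset_or_subset (hM : IsMaxChainOfClosed M) (hne : B.Nonempty)
    (hB : IsClosed B) (hcomp : ∀ A ∈ M, B ⊆ A ∨ A ⊆ B) : B ∈ M := by
  have hinsert : insert B M = M :=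
    hM.2.2 (insert B M) (forall_mem_insert.mpr ⟨⟨hne, hB⟩, hM.1⟩)
      (hM.isChain.insert fun A hA _ ↦ hcomp A hA) (subset_insert B M)
  exact hinsert ▸ mem_insert B M

theorem chainInter_sdiff_union_mem (hM : IsMaxChainOfClosed M) (hC : IsOpen C) (hFne : F.Nonempty)
    (hF : IsClosed F) (hFM : F ⊆ chainInter M C) : (chainInter M C \ C) ∪ F ∈ M := by
  have hclosed : IsClosed (chainInter M C) := isClosed_chainInter hM.isClosed_of_mem
  refine hM.mem_of_forall_subset_or_subset (hFne.mono subset_union_right)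
    ((hclosed.sdiff hC).union hF) fun A hA ↦ ?_
  by_cases hAC : Disjoint A C
  · right
    exact subset_union_of_subset_left
      (subset_sdiff.mpr ⟨subset_chainInter_of_disjoint hM.isChain hA hAC, hAC⟩) F
  · left
    exact (union_subset sdiff_subset hFM).trans
      (chainInter_subset hA (not_disjoint_iff_nonempty_inter.mp hAC))

theorem chainInter_inter_subset (hM : IsMaxChainOfClosed M) (hC : IsOpen C) (hF : IsClosed F)
    (hFM : F ⊆ chainInter M C) (hFC : (F ∩ C).Nonempty) : chainInter M C ∩ C ⊆ F := by
  have hmem : (chainInter M C \ C) ∪ F ∈ M := hM.chainInter_sdiff_union_mem hC hFC.left hF hFM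
  have hsub : chainInter M C ⊆ (chainInter M C \ C) ∪ F :=
    chainInter_subset hmem (hFC.mono (inter_subset_inter_left C subset_union_right))
  exact fun y ⟨hyM, hyC⟩ ↦ (hsub hyM).resolve_left fun hy ↦ hy.2 hyC

end IsMaxChainOfClosed

theorem maxChain_inter_clopen_singleton_general {X : Type} [TopologicalSpace X] [T0Space X]
    {M : Set (Set X)} (hM : IsMaxChainOfClosed M) {C : Set X} (hCne : C.Nonempty)
    (hC : IsCompact C) (hCo : IsOpen C) : ∃ x, chainInter M C ∩ C = {x} := by
  have hclosed : IsClosed (chainInter M C) := isClosed_chainInter hM.isClosed_of_mem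
  obtain ⟨x, hx, hxcl⟩ := exists_closure_singleton_inter_eq_of_isCompact (hC.inter_left hclosed)
    (chainInter_inter_nonempty hM.isClosed_of_mem hM.isChain hCne hC)
  have hsub : chainInter M C ∩ C ⊆ closure {x} :=
    hM.chainInter_inter_subset hCo isClosed_closure
      (hclosed.closure_subset_iff.mpr (singleton_subset_iff.mpr hx.1))
      ⟨x, subset_closure rfl, hx.2⟩
  exact ⟨x, by rw [← hxcl, inter_eq_right.mpr hsub]⟩

end

theorem maxChain_inter_clopen_singleton
    (M : Set (Set CantorSpace)) (hM : IsMaxChainOfClosed M)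
    (C : Set CantorSpace) (hC : C.Nonempty) (hCclopen : IsClopen C) :
    ∃ x : CantorSpace, chainInter M C ∩ C = {x} := by
  exact maxChain_inter_clopen_singleton_general hM hC hCclopen.isClosed.isCompact hCclopen.isOpen
end

section
/- Let X be the Cantor space, let M be a maximal chain of nonempty closed subsets of X, and let E ∈ M. If a and b are nonempty clopen subsets of X with a ∩ E = ∅ and b ∩ E ≠ ∅, then M_b is a proper subset of M_a, where M_c = ⋂{M ∈ M : M ∩ c ≠ ∅}. In particular M_b ⊆ E ⊆ M_a and M_a ∩ a ≠ ∅ while M_b ∩ a = ∅. -/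
/-!
A member of the chain that meets `a` is not contained in `E`, hence contains `E`; so `E ⊆ M_a`,
while `E` is itself one of the sets intersected to form `M_b`. By compactness of `a`, the nested
nonempty traces on `a` have a common point, which lies in `M_a` but not in `E ⊇ M_b`.
-/

theorem sInter_inter_nonempty_of_directedOn_of_isCompact {X : Type*} [TopologicalSpace X]
    {S : Set (Set X)} {K : Set X} (hS : DirectedOn (· ⊇ ·) S) (hclosed : ∀ A ∈ S, IsClosed A)
    (hK : IsCompact K) (hKne : K.Nonempty) (hmeet : ∀ A ∈ S, (A ∩ K).Nonempty) :
    (⋂₀ S ∩ K).Nonempty := by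
  rcases S.eq_empty_or_nonempty with rfl | hSne
  · simpa using hKne
  · have : Nonempty S := hSne.to_subtype
    by_contra hempty
    have hinter : K ∩ ⋂ A : S, (A : Set X) = ∅ := by
      rwa [← Set.sInter_eq_iInter, Set.inter_comm, ← Set.not_nonempty_iff_eq_empty]
    obtain ⟨⟨A, hA⟩, hKA⟩ := hK.elim_directed_family_closed
      (fun A : S => (A : Set X)) (fun A => hclosed A A.2) hinter hS.directed_val
    exact (hmeet A hA).ne_empty (Set.inter_comm K A ▸ hKA)

section ChainInter

variable {X : Type} [TopologicalSpace X] {M : Set (Set X)} {C E : Set X}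

theorem chainInter_subset_of_mem (hE : E ∈ M) (hCE : (C ∩ E).Nonempty) : chainInter M C ⊆ E :=
  Set.sInter_subset_of_mem ⟨hE, Set.inter_comm C E ▸ hCE⟩

theorem subset_chainInter_of_disjoint_s14 (hM : IsChain (· ⊆ ·) M) (hE : E ∈ M)
    (hCE : Disjoint C E) : E ⊆ chainInter M C := by
  refine Set.subset_sInter ?_
  rintro A ⟨hA, x, hxA, hxC⟩
  exact (hM.total hA hE).resolve_left fun hAE => hCE.notMem_of_mem_left hxC (hAE hxA)

theorem chainInter_inter_nonempty_of_isCompact (hM : IsChain (· ⊆ ·) M)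
    (hclosed : ∀ A ∈ M, IsClosed A) (hC : IsCompact C) (hCne : C.Nonempty) :
    (chainInter M C ∩ C).Nonempty := by
  have hchain : IsChain (· ⊇ ·) {A | A ∈ M ∧ (A ∩ C).Nonempty} :=
    hM.symm.mono fun _ hA => hA.1
  exact sInter_inter_nonempty_of_directedOn_of_isCompact hchain.directedOn
    (fun A hA => hclosed A hA.1) hC hCne fun _ hA => hA.2

theorem maxChain_inter_strict_subset_general {a b : Set X} (hM : IsChain (· ⊆ ·) M)
    (hclosed : ∀ A ∈ M, IsClosed A) (hE : E ∈ M) (ha : a.Nonempty) (hacompact : IsCompact a)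
    (haE : a ∩ E = ∅) (hbE : (b ∩ E).Nonempty) :
    chainInter M b ⊂ chainInter M a ∧
    chainInter M b ⊆ E ∧ E ⊆ chainInter M a ∧
    (chainInter M a ∩ a).Nonempty ∧ chainInter M b ∩ a = ∅ := by
  have hdisj : Disjoint a E := Set.disjoint_iff_inter_eq_empty.mpr haE
  have hb_sub : chainInter M b ⊆ E := chainInter_subset_of_mem hE hbE
  have ha_sup : E ⊆ chainInter M a := subset_chainInter_of_disjoint_s14 hM hE hdisj
  have ha_meet : (chainInter M a ∩ a).Nonempty :=
    chainInter_inter_nonempty_of_isCompact hM hclosed hacompact ha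
  have hb_disj : Disjoint (chainInter M b) a := (hdisj.mono_right hb_sub).symm
  have hne : ¬ chainInter M a ⊆ chainInter M b := fun hab =>
    ha_meet.not_disjoint (hb_disj.mono_left hab)
  exact ⟨⟨hb_sub.trans ha_sup, hne⟩, hb_sub, ha_sup, ha_meet, hb_disj.inter_eq⟩

end ChainInter

/-!
STATEMENT 14: Let X be the Cantor space, M a maximal chain of nonempty closed subsets of X,
and E ∈ M. If a, b are nonempty clopen subsets of X with a ∩ E = ∅ and b ∩ E ≠ ∅, then
M_b ⊊ M_a; in particular M_b ⊆ E ⊆ M_a, (M_a ∩ a) ≠ ∅ and M_b ∩ a = ∅.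
-/

theorem maxChain_inter_strict_subset
    (M : Set (Set CantorSpace)) (hM : IsMaxChainOfClosed M)
    (E : Set CantorSpace) (hE : E ∈ M)
    (a b : Set CantorSpace)
    (ha : a.Nonempty) (haclopen : IsClopen a)
    (hb : b.Nonempty) (hbclopen : IsClopen b)
    (haE : a ∩ E = ∅) (hbE : (b ∩ E).Nonempty) :
    chainInter M b ⊂ chainInter M a ∧
    chainInter M b ⊆ E ∧ E ⊆ chainInter M a ∧
    (chainInter M a ∩ a).Nonempty ∧ chainInter M b ∩ a = ∅ :=
  maxChain_inter_strict_subset_general hM.2.1 (fun A hA => (hM.1 A hA).2) hE ha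
    haclopen.isClosed.isCompact haE hbE
end

section
/- Dual Ramsey Theorem (Graham–Rothschild): the class of finite Boolean algebras satisfies the Ramsey property: for all finite Boolean algebras A and B such that A embeds into B, and every integer k ≥ 2, there exists a finite Boolean algebra C such that for every coloring of the Boolean subalgebras of C isomorphic to A with k colors, there exists a Boolean subalgebra B' of C isomorphic to B such that all Boolean subalgebras of B' isomorphic to A receive the same color. -/
/-- A bundled finite Boolean algebra. -/
structure FiniteBoolAlg : Type 1 where
  carrier : Type
  [ba : BooleanAlgebra carrier]
  [fin : Fintype carrier]

attribute [instance] FiniteBoolAlg.ba FiniteBoolAlg.fin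

/-- An embedding of Boolean algebras: an injective map preserving `⊔`, `⊓`, `ᶜ`, `⊥`, `⊤`. -/
def IsBoolEmb {α β : Type} [BooleanAlgebra α] [BooleanAlgebra β] (f : α → β) : Prop :=
  Function.Injective f ∧
  (∀ x y : α, f (x ⊔ y) = f x ⊔ f y) ∧
  (∀ x y : α, f (x ⊓ y) = f x ⊓ f y) ∧
  (∀ x : α, f xᶜ = (f x)ᶜ) ∧
  f ⊥ = ⊥ ∧ f ⊤ = ⊤

/-- `S` is a Boolean subalgebra of `C` isomorphic to `A`, i.e. a copy of `A` in `C`: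
the image of an embedding of `A` into `C`. -/
def IsCopyOf (A : FiniteBoolAlg) {C : Type} [BooleanAlgebra C] (S : Set C) : Prop :=
  ∃ f : A.carrier → C, IsBoolEmb f ∧ Set.range f = S

/-!
STATEMENT 16 (Dual Ramsey Theorem, Graham–Rothschild): the class of finite Boolean algebras
satisfies the Ramsey property: for all finite Boolean algebras A and B such that A embeds
into B, and every integer k ≥ 2, there exists a finite Boolean algebra C such that for every
coloring of the Boolean subalgebras of C isomorphic to A with k colors, there is a Boolean
subalgebra B' of C isomorphic to B all of whose Boolean subalgebras isomorphic to A receive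
the same color.
-/

/-!
By Stone duality, the copies in `Set ι` of the Boolean algebra of subsets of `α` are the sets of all
`φ ⁻¹' T` for the surjections `φ : ι → α`, and inclusion of copies is factorization of surjections.
The claim is thus about colorings of the partitions of a finite set, and a partition is the same as
a parameter word over the empty alphabet.

The Graham–Rothschild theorem for `m`-parameter words is proved by induction on `m`, for all
alphabets at once. An `(m + 1)`-parameter word is `u ++ a :: s` with `u` a word without parameters
and `s` an `m`-parameter word over the alphabet enlarged by the letter `a`. Passing to a parameter
word, the color is made to depend first on `u` only (by the induction hypothesis), then on the
length of `u` only (by the Hales–Jewett theorem), and finally on nothing (by the pigeonhole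
principle).
-/

/-- `IsParamWord a m w`: the list `w` is an `m`-parameter word over the alphabet `{0, …, a - 1}`.
The parameters are the numbers `a, …, a + m - 1`; each of them occurs in `w`, and their first
occurrences are in increasing order. In these terms an `m`-parameter word over `{0, …, a}` is what
follows the first parameter of an `(m + 1)`-parameter word over `{0, …, a - 1}`. -/
inductive IsParamWord : ℕ → ℕ → List ℕ → Prop
  | nil (a : ℕ) : IsParamWord a 0 []
  | letter {a m x : ℕ} {w : List ℕ} : x < a → IsParamWord a m w → IsParamWord a m (x :: w)
  | param {a m : ℕ} {w : List ℕ} : IsParamWord (a + 1) m w → IsParamWord a (m + 1) (a :: w)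

/-- The order embedding of `ℕ` that omits the value `a`. It frees the name `a` in a parameter word
over `{0, …, a - 1}`, whose parameters become `a + 1, a + 2, …`. -/
def skip (a x : ℕ) : ℕ := if x < a then x else x + 1

/-- The value of the letter `x` when the parameters `a, a + 1, …` are replaced by the entries of
`v`. Parameters beyond the end of `v` get the junk value `0`. -/
def substLetter (a : ℕ) (v : List ℕ) (x : ℕ) : ℕ := if x < a then x else v.getD (x - a) 0

/-- The substitution of the entries of `v` for the parameters `a, a + 1, …` of `w`. It ends before
the first parameter of `w` for which `v` has no entry, so that a word shorter than the number of
parameters can be substituted as well. -/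
def substWord (a : ℕ) (v w : List ℕ) : List ℕ :=
  (w.takeWhile (· < a + v.length)).map (substLetter a v)

section Letters

variable {a b x : ℕ} {u v : List ℕ}

lemma skip_of_lt (h : x < a) : skip a x = x := if_pos h

lemma skip_of_le (h : a ≤ x) : skip a x = x + 1 := if_neg h.not_gt

lemma skip_lt_add_succ_iff {j : ℕ} : skip a x < a + (j + 1) ↔ x < a + j := by
  grind [skip]

lemma substLetter_of_lt (h : x < a) : substLetter a v x = x := if_pos h

lemma substLetter_add {i : ℕ} (h : i < v.length) : substLetter a v (a + i) = v[i] := by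
  simp [substLetter, h]

lemma substLetter_cons_skip : substLetter a (b :: v) (skip a x) = substLetter a v x := by
  rcases lt_or_ge x a with h | h
  · rw [skip_of_lt h, substLetter_of_lt h, substLetter_of_lt h]
  · obtain ⟨i, rfl⟩ := Nat.exists_eq_add_of_le h
    simp [skip, substLetter, add_assoc]

lemma substLetter_cons_self : substLetter a (a :: v) = substLetter (a + 1) v := by
  funext x
  rcases lt_trichotomy x a with h | rfl | h
  · rw [substLetter_of_lt h, substLetter_of_lt (by omega)]
  · simp [substLetter]
  · obtain ⟨i, rfl⟩ := Nat.exists_eq_add_of_lt h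
    simp [substLetter, show ¬a + i + 1 < a by omega, show a + i + 1 - a = i + 1 by omega]

lemma substLetter_append (h : x < a + u.length) :
    substLetter a (u ++ v) x = substLetter a u x := by
  unfold substLetter
  split
  · rfl
  · rw [List.getD_append _ _ _ _ (by omega)]

lemma substLetter_lt (hv : ∀ y ∈ v, y < b) (hab : a ≤ b) (hx : x < a + v.length) :
    substLetter a v x < b := by
  rcases lt_or_ge x a with h | h
  · exact (substLetter_of_lt h).trans_lt (h.trans_le hab)
  · obtain ⟨i, rfl⟩ := Nat.exists_eq_add_of_le h
    rw [substLetter_add (by omega)]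
    exact hv _ (List.getElem_mem _)

lemma substLetter_substLetter (hx : x < a + v.length) :
    substLetter a u (substLetter a v x) = substLetter a (v.map (substLetter a u)) x := by
  rcases lt_or_ge x a with h | h
  · simp only [substLetter_of_lt h]
  · obtain ⟨i, rfl⟩ := Nat.exists_eq_add_of_le h
    rw [substLetter_add (by omega), substLetter_add (by simpa using hx), List.getElem_map]

lemma map_substLetter_range' : (List.range' a v.length).map (substLetter a v) = v :=
  List.ext_getElem (by simp) fun i _ hi => by
    rw [List.getElem_map, List.getElem_range', one_mul, substLetter_add hi]

end Letters

namespace IsParamWord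

variable {a b m n : ℕ} {u v w : List ℕ}

lemma lt_of_mem (h : IsParamWord a m w) : ∀ x ∈ w, x < a + m := by
  induction h <;> grind

lemma zero_iff : IsParamWord a 0 w ↔ ∀ x ∈ w, x < a := by
  refine ⟨lt_of_mem, fun h => ?_⟩
  induction w with
  | nil => exact nil a
  | cons x w ih =>
    rw [List.forall_mem_cons] at h
    exact letter h.1 (ih h.2)

lemma one_of_mem (h : ∀ x ∈ w, x ≤ a) (ha : a ∈ w) : IsParamWord a 1 w := by
  induction w with
  | nil => cases ha
  | cons x w ih =>
    rw [List.forall_mem_cons] at h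
    rcases h.1.lt_or_eq with hx | rfl
    · exact letter hx (ih h.2 (List.mem_of_ne_of_mem hx.ne' ha))
    · exact param (zero_iff.2 fun y hy => Nat.lt_succ_of_le (h.2 y hy))

lemma append (hu : IsParamWord a m u) (hv : IsParamWord (a + m) n v) :
    IsParamWord a (n + m) (u ++ v) := by
  induction hu with
  | nil => exact hv
  | letter hx _ ih => exact letter hx (ih hv)
  | param _ ih => exact param (ih (by rwa [Nat.add_right_comm]))

lemma append_cons_iff (hu : IsParamWord a 0 u) :
    IsParamWord a (m + 1) (u ++ a :: v) ↔ IsParamWord (a + 1) m v := by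
  refine ⟨fun h => ?_, fun h => hu.append (param h)⟩
  rw [zero_iff] at hu
  induction u with
  | nil =>
    cases h with
    | letter ha _ => exact absurd ha (lt_irrefl a)
    | param h => exact h
  | cons x u ih =>
    rw [List.forall_mem_cons] at hu
    cases h with
    | letter _ h => exact ih hu.2 h
    | param _ => exact absurd hu.1 (lt_irrefl a)

lemma exists_eq_takeWhile_append (h : IsParamWord a m w) {j : ℕ} (hj : j < m) :
    ∃ v, w = w.takeWhile (· < a + j) ++ (a + j) :: v := by
  induction h generalizing j with
  | nil => omega
  | @letter a m x w hx _ ih =>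
    obtain ⟨v, hv⟩ := ih hj
    exact ⟨v, by simpa [List.takeWhile_cons, show x < a + j by omega] using hv⟩
  | @param a m w _ ih =>
    cases j with
    | zero => exact ⟨w, by simp⟩
    | succ j =>
      obtain ⟨v, hv⟩ := ih (Nat.lt_of_succ_lt_succ hj)
      rw [Nat.add_right_comm, add_assoc] at hv
      exact ⟨v, by simpa [List.takeWhile_cons] using hv⟩

lemma mem_of_lt (h : IsParamWord a m w) {j : ℕ} (hj : j < m) : a + j ∈ w := by
  obtain ⟨v, hv⟩ := h.exists_eq_takeWhile_append hj
  rw [hv]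
  simp

lemma exists_eq_append_cons (h : IsParamWord a (m + 1) w) :
    ∃ u v, w = u ++ a :: v ∧ IsParamWord a 0 u ∧ IsParamWord (a + 1) m v := by
  obtain ⟨v, hv⟩ := h.exists_eq_takeWhile_append m.succ_pos
  have hu : IsParamWord a 0 (w.takeWhile (· < a + 0)) :=
    zero_iff.2 fun x hx => by simpa using List.mem_takeWhile_imp hx
  rw [hv] at h
  exact ⟨_, v, hv, hu, (append_cons_iff hu).1 h⟩

lemma map_skip (h : IsParamWord b m w) (hab : a ≤ b) :
    IsParamWord (b + 1) m (w.map (skip a)) := by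
  induction h with
  | nil => exact nil _
  | letter hx _ ih => exact letter (by grind [skip]) (ih hab)
  | param _ ih =>
    rw [List.map_cons, skip_of_le hab]
    exact param (ih (by omega))

lemma map (hw : IsParamWord b n w) {f : ℕ → ℕ} (hf : ∀ x < b, f x < a)
    (h : IsParamWord a m ((List.range' b n).map f)) : IsParamWord a m (w.map f) := by
  induction hw generalizing a m with
  | nil => exact h
  | letter hx _ ih => exact letter (hf _ hx) (ih hf h)
  | @param b n w _ ih =>
    rw [List.range'_succ, List.map_cons] at h
    rw [List.map_cons]
    generalize hy : f b = y at h ⊢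
    cases h with
    | letter hya h =>
      exact letter hya (ih (Nat.forall_lt_succ_right.2 ⟨hf, hy ▸ hya⟩) h)
    | param h =>
      exact param (ih (Nat.forall_lt_succ_right.2
        ⟨fun x hx => (hf x hx).trans (Nat.lt_succ_self _), hy ▸ Nat.lt_succ_self _⟩) h)

end IsParamWord

section Words

variable {a b m : ℕ} {s u v w : List ℕ}

lemma substWord_eq_map (h : ∀ x ∈ w, x < a + v.length) :
    substWord a v w = w.map (substLetter a v) := by
  rw [substWord, List.takeWhile_eq_self_iff.2 (by simpa using h)]

lemma substWord_cons_param : substWord a (b :: v) (a :: w) = b :: substWord a (b :: v) w := by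
  simp [substWord, substLetter]

lemma substWord_cons_self : substWord a (a :: v) w = substWord (a + 1) v w := by
  rw [substWord, substWord, substLetter_cons_self, List.length_cons, add_right_comm, add_assoc]

lemma substWord_cons_cons_self :
    substWord a (a :: v) (a :: w) = a :: substWord (a + 1) v w := by
  rw [substWord_cons_param, substWord_cons_self]

lemma substWord_cons_map_skip : substWord a (b :: v) (w.map (skip a)) = substWord a v w := by
  simp [substWord, List.takeWhile_map, Function.comp_def, skip_lt_add_succ_iff,
    substLetter_cons_skip]

lemma substWord_append (h : ∀ x ∈ u, x < a + v.length) :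
    substWord a v (u ++ w) = u.map (substLetter a v) ++ substWord a v w := by
  rw [substWord, substWord, List.takeWhile_append_of_pos (by simpa using h), List.map_append]

lemma substWord_cons_append_map_skip (hu : ∀ x ∈ u, x < a + 1) :
    substWord a (b :: v) (u ++ w.map (skip a)) = substWord a [b] u ++ substWord a v w := by
  rw [substWord_append fun x hx => (hu x hx).trans_le (by simp), substWord_cons_map_skip,
    substWord_eq_map (v := [b]) hu]
  congr 1
  exact List.map_congr_left fun x hx => substLetter_append (u := [b]) (hu x hx)

lemma length_substWord (hw : IsParamWord a v.length w) :
    (substWord a v w).length = w.length := by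
  rw [substWord_eq_map hw.lt_of_mem, List.length_map]

lemma IsParamWord.subst (hw : IsParamWord a v.length w) (hv : IsParamWord a m v) :
    IsParamWord a m (substWord a v w) := by
  rw [substWord_eq_map hw.lt_of_mem]
  refine hw.map (fun x hx => (substLetter_of_lt hx).trans_lt hx) ?_
  rwa [map_substLetter_range']

lemma IsParamWord.subst_zero (hv : IsParamWord a 0 v) : IsParamWord a 0 (substWord a v w) := by
  rw [zero_iff] at hv ⊢
  simp only [substWord, List.forall_mem_map]
  exact fun x hx => substLetter_lt hv le_rfl (by simpa using List.mem_takeWhile_imp hx)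

lemma substWord_substWord (hw : IsParamWord a v.length w) (hv : IsParamWord a u.length v) :
    substWord a u (substWord a v w) = substWord a (substWord a u v) w := by
  have hvu := length_substWord hv
  rw [substWord_eq_map (hw.subst hv).lt_of_mem, substWord_eq_map hw.lt_of_mem,
    substWord_eq_map (v := substWord a u v) (by rw [hvu]; exact hw.lt_of_mem),
    substWord_eq_map hv.lt_of_mem, List.map_map]
  exact List.map_congr_left fun x hx => substLetter_substLetter (hw.lt_of_mem x hx)

lemma exists_substWord_append_cons (hw : IsParamWord a (u ++ a :: s).length w)
    (hu : IsParamWord a 0 u) (hs : IsParamWord (a + 1) m s) :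
    ∃ t, substWord a (u ++ a :: s) w = substWord a u w ++ a :: t ∧ IsParamWord (a + 1) m t := by
  have hus := hw.subst (hu.append (.param hs))
  suffices h : ∃ t, substWord a (u ++ a :: s) w = substWord a u w ++ a :: t by
    obtain ⟨t, ht⟩ := h
    rw [ht] at hus
    exact ⟨t, ht, (IsParamWord.append_cons_iff hu.subst_zero).1 hus⟩
  obtain ⟨t, ht⟩ := hw.exists_eq_takeWhile_append (j := u.length) (by simp)
  refine ⟨t.map (substLetter a (u ++ a :: s)), ?_⟩
  rw [substWord_eq_map hw.lt_of_mem]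
  nth_rw 1 [ht]
  rw [List.map_append, List.map_cons, substLetter_add (by simp), substWord]
  congr 1
  · exact List.map_congr_left fun x hx =>
      substLetter_append (by simpa using List.mem_takeWhile_imp hx)
  · simp

end Words

universe u

lemma finite_setOf_isParamWord_zero (a N : ℕ) :
    {w : List ℕ | IsParamWord a 0 w ∧ w.length = N}.Finite := by
  refine ((List.finite_length_eq (Fin a) N).image (List.map Fin.val)).subset ?_
  rintro w ⟨hw, hN⟩
  lift w to List (Fin a) using IsParamWord.zero_iff.1 hw
  exact ⟨w, by simpa using hN, rfl⟩

theorem exists_substWord_singleton_mono (a : ℕ) (K : Type u) [Finite K] :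
    ∃ N, ∀ χ : List ℕ → K, ∃ w, w.length = N ∧ IsParamWord a 1 w ∧
      ∃ k, ∀ b < a, χ (substWord a [b] w) = k := by
  obtain ⟨ι, _, hι⟩ := Combinatorics.Line.exists_mono_in_high_dimension (Fin a) K
  let e := Fintype.equivFin ι
  refine ⟨Fintype.card ι, fun χ => ?_⟩
  obtain ⟨l, k, hl⟩ := hι fun x => χ (List.ofFn fun i => (x (e.symm i) : ℕ))
  let w := List.ofFn fun i => (l.idxFun (e.symm i)).elim a Fin.val
  have hle : ∀ x ∈ w, x ≤ a := by
    simp only [w, List.forall_mem_ofFn_iff]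
    intro i
    cases l.idxFun (e.symm i) with
    | none => exact le_rfl
    | some y => exact y.2.le
  have hmem : a ∈ w := by
    obtain ⟨i, hi⟩ := l.proper
    exact List.mem_ofFn.2 ⟨e i, by simp [hi]⟩
  refine ⟨w, List.length_ofFn, .one_of_mem hle hmem, k, fun b hb => ?_⟩
  rw [← hl ⟨b, hb⟩, substWord_eq_map (fun x hx => Nat.lt_succ_of_le (hle x hx)), List.map_ofFn]
  congr 2
  funext i
  cases hi : l.idxFun (e.symm i) <;> simp [hi, substLetter]

-- The first letter of `u` only affects a block `l`, taken from the Hales–Jewett theorem for colors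
-- that record, for each content of the block, how the length of the rest determines the color.
theorem exists_color_eq_of_length (a n : ℕ) (K : Type u) [Finite K] :
    ∃ N, ∀ χ : List ℕ → K, ∃ w, w.length = N ∧ IsParamWord a n w ∧
      ∃ c : ℕ → K, ∀ u, IsParamWord a 0 u → u.length ≤ n → χ (substWord a u w) = c u.length := by
  induction n generalizing K with
  | zero => exact ⟨0, fun χ => ⟨[], rfl, .nil a, fun _ => χ [], fun u _ _ => rfl⟩⟩
  | succ n ih =>
    obtain ⟨L, hL⟩ := exists_substWord_singleton_mono a (Fin (n + 1) → K)
    let Y := {y : List ℕ | IsParamWord a 0 y ∧ y.length = L}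
    have : Finite Y := finite_setOf_isParamWord_zero a L
    obtain ⟨N, hN⟩ := ih (Y → K)
    refine ⟨N + L, fun χ => ?_⟩
    obtain ⟨w, hwN, hw, c, hc⟩ := hN fun w y => χ (y ++ w)
    obtain ⟨l, hlL, hl, k, hk⟩ := hL fun y j =>
      Function.extend Subtype.val (c j) (fun _ => χ []) y
    refine ⟨l ++ w.map (skip a), by simp [hlL, hwN, add_comm], hl.append (hw.map_skip le_rfl),
      fun j => j.casesOn (χ (substWord a [] (l ++ w.map (skip a)))) fun j => k (Fin.ofNat _ j),
      fun u hu hun => ?_⟩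
    cases u with
    | nil => rfl
    | cons b u =>
      obtain ⟨hb, hu⟩ := List.forall_mem_cons.1 (IsParamWord.zero_iff.1 hu)
      have hun : u.length < n + 1 := hun
      have hlb : IsParamWord a 0 (substWord a [b] l) := .subst_zero (.letter hb (.nil a))
      have hline : c u.length ⟨_, hlb, (length_substWord hl).trans hlL⟩ =
          k (Fin.ofNat _ u.length) := by
        rw [← hk b hb]
        simp only [Fin.val_ofNat, Nat.mod_eq_of_lt hun]
        exact (Subtype.val_injective.extend_apply _ _ _).symm
      change _ = k (Fin.ofNat _ u.length)
      rw [substWord_cons_append_map_skip hl.lt_of_mem, ← hline,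
        ← hc u (IsParamWord.zero_iff.2 hu) (Nat.le_of_lt_succ hun)]

/-- The Graham–Rothschild property of `m`-parameter words over `{0, …, a - 1}`: for each finite set
of colors there is `N` such that every coloring has an `n`-parameter word `w` of length `N`, all of
whose specializations `substWord a v w` to an `m`-parameter word have the same color. Colorings are
defined on all lists, to avoid subtypes. -/
def GrahamRothschild (a m n : ℕ) : Prop :=
  ∀ (K : Type u) [Finite K], ∃ N, ∀ χ : List ℕ → K, ∃ w, w.length = N ∧ IsParamWord a n w ∧
    ∃ k, ∀ v, v.length = n → IsParamWord a m v → χ (substWord a v w) = k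

theorem grahamRothschild_zero (a n : ℕ) : GrahamRothschild.{u} a 0 n := by
  intro K _
  obtain ⟨N, hN⟩ := exists_color_eq_of_length a n K
  refine ⟨N, fun χ => ?_⟩
  obtain ⟨w, hwN, hw, c, hc⟩ := hN χ
  exact ⟨w, hwN, hw, c n, fun v hvn hv => hvn ▸ hc v hv hvn.le⟩

-- If `u` is empty, then `hGR` makes the color of `a :: s` constant. Otherwise the first letter of
-- `u` is moved into the color of a shorter word.
theorem exists_color_eq_of_prefix {a m : ℕ} (hGR : ∀ n, GrahamRothschild.{u} (a + 1) m n)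
    (n : ℕ) (K : Type u) [Finite K] :
    ∃ N, ∀ χ : List ℕ → K, ∃ w, w.length = N ∧ IsParamWord a n w ∧
      ∃ c : List ℕ → K, ∀ u s, (u ++ a :: s).length = n → IsParamWord a 0 u →
        IsParamWord (a + 1) m s → χ (substWord a (u ++ a :: s) w) = c u := by
  induction n generalizing K with
  | zero => exact ⟨0, fun χ => ⟨[], rfl, .nil a, fun _ => χ [], fun u s h => by simp at h⟩⟩
  | succ n ih =>
    obtain ⟨N₁, hN₁⟩ := ih (Fin a → K)
    obtain ⟨N₀, hN₀⟩ := hGR N₁ K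
    refine ⟨N₀ + 1, fun χ => ?_⟩
    obtain ⟨w₀, hwN₀, hw₀, k, hk⟩ := hN₀ fun w => χ (a :: w)
    obtain ⟨w₁, hwN₁, hw₁, c, hc⟩ := hN₁ fun w b => χ (substWord a (b :: w) (a :: w₀))
    have hskip : IsParamWord (a + 1) n (w₁.map (skip a)) := hw₁.map_skip le_rfl
    have hw₀' : IsParamWord a (a :: w₁.map (skip a)).length (a :: w₀) := by
      simpa [hwN₁] using hw₀.param
    refine ⟨substWord a (a :: w₁.map (skip a)) (a :: w₀),
      by rw [length_substWord hw₀', List.length_cons, hwN₀], hw₀'.subst hskip.param,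
      fun u => u.casesOn k fun b u => if hb : b < a then c u ⟨b, hb⟩ else k,
      fun u s hn hu hs => ?_⟩
    rw [substWord_substWord hw₀' (hn ▸ hskip.param)]
    cases u with
    | nil =>
      have hsn : s.length = n := by simpa using hn
      rw [List.nil_append, substWord_cons_cons_self, substWord_cons_cons_self]
      rw [← hsn] at hskip
      exact hk _ (by rw [length_substWord hskip, List.length_map, hwN₁]) (hskip.subst hs)
    | cons b u =>
      obtain ⟨hb, hu⟩ := List.forall_mem_cons.1 (IsParamWord.zero_iff.1 hu)
      rw [List.cons_append, substWord_cons_param, substWord_cons_map_skip]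
      simp only [hb, dif_pos]
      rw [← hc u s (by simpa using hn) (IsParamWord.zero_iff.2 hu) hs]

lemma exists_isParamWord_of_le_count {a : ℕ} (ha : 0 < a) (P : ℕ → Prop) [DecidablePred P]
    {n N : ℕ} (h : n ≤ N.count P) :
    ∃ w, w.length = N ∧ IsParamWord a n w ∧ ∀ i < n, P (w.takeWhile (· < a + i)).length := by
  induction N generalizing a n P with
  | zero =>
    obtain rfl : n = 0 := by simpa using h
    exact ⟨[], rfl, .nil a, by simp⟩
  | succ N ih =>
    rw [Nat.count_succ'] at h
    by_cases hP : P 0 ∧ 0 < n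
    · obtain ⟨hP, hn⟩ := hP
      obtain ⟨n, rfl⟩ := Nat.exists_eq_add_one.2 hn
      rw [if_pos hP] at h
      obtain ⟨w, hwN, hw, hwP⟩ :=
        ih a.succ_pos (fun i => P (i + 1)) (Nat.le_of_add_le_add_right h)
      refine ⟨a :: w, by simp [hwN], .param hw, fun i hi => ?_⟩
      cases i with
      | zero => simpa using hP
      | succ i =>
        simpa [List.takeWhile_cons, add_assoc, add_comm 1 i] using
          hwP i (Nat.lt_of_succ_lt_succ hi)
    · have h : n ≤ N.count fun i => P (i + 1) := by grind
      obtain ⟨w, hwN, hw, hwP⟩ := ih ha (fun i => P (i + 1)) h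
      refine ⟨0 :: w, by simp [hwN], .letter ha hw, fun i hi => ?_⟩
      simpa [List.takeWhile_cons, ha] using hwP i hi

theorem exists_color_eq_of_position {a : ℕ} (ha : 0 < a) (n : ℕ) (K : Type u) [Finite K] :
    ∃ N, ∀ c : ℕ → K, ∃ w, w.length = N ∧ IsParamWord a n w ∧
      ∃ k, ∀ i < n, c (w.takeWhile (· < a + i)).length = k := by
  classical
  have := Fintype.ofFinite K
  refine ⟨Fintype.card K * n, fun c => ?_⟩
  have : Nonempty K := ⟨c 0⟩
  obtain ⟨k, -, hk⟩ := Finset.exists_le_card_fiber_of_mul_le_card_of_maps_to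
    (s := Finset.range (Fintype.card K * n)) (t := Finset.univ) (f := c) (n := n)
    (by simp) (by simp) (by simp)
  rw [← Nat.count_eq_card_filter_range] at hk
  obtain ⟨w, hwN, hw, hwk⟩ := exists_isParamWord_of_le_count ha (c · = k) hk
  exact ⟨w, hwN, hw, k, hwk⟩

theorem GrahamRothschild.succ_of_pos {a m : ℕ} (ha : 0 < a)
    (hGR : ∀ n, GrahamRothschild.{u} (a + 1) m n) (n : ℕ) : GrahamRothschild.{u} a (m + 1) n := by
  intro K _
  obtain ⟨N₃, h₃⟩ := exists_color_eq_of_position ha n K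
  obtain ⟨N₂, h₂⟩ := exists_color_eq_of_length a N₃ K
  obtain ⟨N₁, h₁⟩ := exists_color_eq_of_prefix hGR N₂ K
  refine ⟨N₁, fun χ => ?_⟩
  obtain ⟨w₁, hwN₁, hw₁, c₁, hc₁⟩ := h₁ χ
  obtain ⟨w₂, rfl, hw₂, c₂, hc₂⟩ := h₂ c₁
  obtain ⟨w₃, rfl, hw₃, k, hk⟩ := h₃ c₂
  have hw₂₃ : IsParamWord a n (substWord a w₃ w₂) := hw₂.subst hw₃
  rw [← length_substWord hw₂] at hw₁
  refine ⟨substWord a (substWord a w₃ w₂) w₁, (length_substWord hw₁).trans hwN₁,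
    hw₁.subst hw₂₃, k, ?_⟩
  rintro v rfl hv
  rw [substWord_substWord hw₁ hw₂₃, substWord_substWord hw₂ hw₃]
  obtain ⟨u, s, rfl, hu, hs⟩ := hv.exists_eq_append_cons
  obtain ⟨s₃, hs₃, hs₃m⟩ := exists_substWord_append_cons hw₃ hu hs
  have hlen₃ := length_substWord hw₃
  rw [hs₃] at hlen₃ ⊢
  rw [← hlen₃] at hw₂
  obtain ⟨s₂, hs₂, hs₂m⟩ := exists_substWord_append_cons hw₂ hu.subst_zero hs₃m
  have hlen₂ := length_substWord hw₂
  rw [hs₂] at hlen₂ ⊢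
  have hle : (substWord a u w₃).length ≤ w₃.length := by simp [← hlen₃]
  rw [hc₁ _ _ hlen₂ hu.subst_zero.subst_zero hs₂m, hc₂ _ hu.subst_zero hle, substWord,
    List.length_map]
  exact hk u.length (by simp)

theorem GrahamRothschild.zero_succ {m : ℕ} (hGR : ∀ n, GrahamRothschild.{u} 1 m n) (n : ℕ) :
    GrahamRothschild.{u} 0 (m + 1) n := by
  intro K _
  cases n with
  | zero =>
    refine ⟨0, fun χ => ⟨[], rfl, .nil 0, χ [], fun v _ _ => rfl⟩⟩
  | succ n =>
    obtain ⟨N, hN⟩ := hGR n K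
    refine ⟨N + 1, fun χ => ?_⟩
    obtain ⟨w, hwN, hw, k, hk⟩ := hN fun w => χ (0 :: w)
    refine ⟨0 :: w, by simp [hwN], .param hw, k, fun v hvn hv => ?_⟩
    cases hv with
    | letter h => exact absurd h (Nat.not_lt_zero _)
    | param hv =>
      rw [substWord_cons_cons_self]
      exact hk _ (by simpa using hvn) hv

theorem grahamRothschild (a m n : ℕ) : GrahamRothschild.{u} a m n := by
  induction m generalizing a n with
  | zero => exact grahamRothschild_zero a n
  | succ m ih =>
    rcases a.eq_zero_or_pos with rfl | ha
    · exact .zero_succ (ih 1) n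
    · exact .succ_of_pos ha (ih (a + 1)) n

section Relabelling

variable {α : Type*}

lemma exists_isParamWord_map_idxOf_append [DecidableEq α] (l : List α) {d : List α}
    (hd : d.Nodup) :
    ∃ d', (d ++ d').Nodup ∧ l ⊆ d ++ d' ∧
      IsParamWord d.length d'.length (l.map (d ++ d').idxOf) := by
  induction l generalizing d with
  | nil => exact ⟨[], by simpa using hd, by simp, .nil _⟩
  | cons x l ih =>
    by_cases hx : x ∈ d
    · obtain ⟨d', hdd', hl, hw⟩ := ih hd
      refine ⟨d', hdd', List.cons_subset.2 ⟨List.mem_append_left d' hx, hl⟩, .letter ?_ hw⟩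
      simpa only [List.idxOf_append_of_mem hx] using List.idxOf_lt_length_of_mem hx
    · obtain ⟨d', hdd', hl, hw⟩ := ih (hd.concat hx)
      rw [List.concat_eq_append, ← List.append_cons] at hdd' hl hw
      refine ⟨x :: d', hdd', List.cons_subset.2 ⟨by simp, hl⟩, ?_⟩
      rw [List.map_cons, List.idxOf_append_of_notMem hx, List.idxOf_cons_self, add_zero]
      exact .param (by simpa using hw)

lemma exists_injective_isParamWord_ofFn {n : ℕ} {ψ : Fin n → α} (hψ : ψ.Surjective) :
    ∃ σ : α → ℕ, σ.Injective ∧ IsParamWord 0 (Nat.card α) (List.ofFn (σ ∘ ψ)) := by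
  classical
  obtain ⟨d, hd, hψd, hw⟩ := exists_isParamWord_map_idxOf_append (List.ofFn ψ) List.nodup_nil
  rw [List.nil_append] at hd hψd hw
  have hmem (x : α) : x ∈ d := by
    obtain ⟨i, rfl⟩ := hψ x
    exact hψd (List.mem_ofFn.2 ⟨i, rfl⟩)
  refine ⟨d.idxOf, fun x y h => (List.idxOf_inj (hmem x)).1 h, ?_⟩
  rw [List.map_ofFn] at hw
  rwa [Nat.card_congr (hd.getEquivOfForallMemList d hmem).symm, Nat.card_fin]

end Relabelling

theorem exists_surjective_ker_mono (α β : Type*) [Finite β] (K : Type u) [Finite K] :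
    ∃ N, ∀ χ : Setoid (Fin N) → K, ∃ w : Fin N → β, w.Surjective ∧
      ∃ k, ∀ ψ : β → α, ψ.Surjective → χ (Setoid.ker (ψ ∘ w)) = k := by
  obtain ⟨n, ⟨e⟩⟩ := Finite.exists_equiv_fin β
  obtain ⟨N, hN⟩ := grahamRothschild 0 (Nat.card α) n K
  refine ⟨N, fun χ => ?_⟩
  obtain ⟨w, rfl, hw, k, hk⟩ := hN fun w => χ (Setoid.ker fun i => w.getD i 0)
  have hlt (i : Fin w.length) : w[i] < n := by
    simpa using hw.lt_of_mem _ (List.getElem_mem i.2)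
  refine ⟨fun i => e.symm ⟨w[i], hlt i⟩, ?_, k, fun ψ hψ => ?_⟩
  · refine e.symm.surjective.comp fun j => ?_
    obtain ⟨i, hi, hij⟩ := List.getElem_of_mem (hw.mem_of_lt j.2)
    exact ⟨⟨i, hi⟩, Fin.ext (by simpa using hij)⟩
  · obtain ⟨σ, hσ, hv⟩ := exists_injective_isParamWord_ofFn (hψ.comp e.symm.surjective)
    rw [← hk _ List.length_ofFn hv]
    congr 1
    ext i j
    have hsubst (i : Fin w.length) :
        (substWord 0 (List.ofFn (σ ∘ ψ ∘ e.symm)) w).getD i 0 = σ (ψ (e.symm ⟨w[i], hlt i⟩)) := by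
      rw [substWord_eq_map (by simpa using hw.lt_of_mem)]
      have hi : w[(i : ℕ)] < n := hlt i
      simp [substLetter, hi]
    rw [Setoid.ker_def, Setoid.ker_def, hsubst, hsubst, hσ.eq_iff]
    rfl

section Preimage

variable {α β ι : Type*}

lemma range_preimage_subset_range_preimage_iff {f : ι → α} {g : ι → β} :
    Set.range (Set.preimage g) ⊆ Set.range (Set.preimage f) ↔ g.FactorsThrough f := by
  constructor
  · intro h i j hij
    obtain ⟨T, hT⟩ := h ⟨{g j}, rfl⟩
    have hj : j ∈ f ⁻¹' T := by simp [hT]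
    have hi : i ∈ f ⁻¹' T := by rwa [Set.mem_preimage, hij]
    simpa [hT] using hi
  · rintro h _ ⟨T, rfl⟩
    refine ⟨f '' (g ⁻¹' T), Set.Subset.antisymm ?_ (Set.subset_preimage_image _ _)⟩
    rintro i ⟨j, hj, hji⟩
    rwa [Set.mem_preimage, ← h hji]

lemma range_preimage_mk_ker (f : ι → α) :
    Set.range (Set.preimage (Quotient.mk (Setoid.ker f))) = Set.range (Set.preimage f) :=
  Set.Subset.antisymm
    (range_preimage_subset_range_preimage_iff.2 fun _ _ h => Quotient.sound h)
    (range_preimage_subset_range_preimage_iff.2 fun _ _ h => Quotient.exact h)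

end Preimage

section Duality

variable {α ι : Type}

namespace IsBoolEmb

variable {A B C : Type} [BooleanAlgebra A] [BooleanAlgebra B] [BooleanAlgebra C]

lemma of_orderIso (e : A ≃o B) : IsBoolEmb e :=
  ⟨e.injective, map_sup e, map_inf e, map_compl e, map_bot e, map_top e⟩

lemma comp {g : B → C} {f : A → B} (hg : IsBoolEmb g) (hf : IsBoolEmb f) :
    IsBoolEmb (g ∘ f) := by
  obtain ⟨hg, hgsup, hginf, hgcompl, hgbot, hgtop⟩ := hg
  obtain ⟨hf, hfsup, hfinf, hfcompl, hfbot, hftop⟩ := hf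
  exact ⟨hg.comp hf, by simp [*], by simp [*], by simp [*], by simp [*], by simp [*]⟩

lemma preimage {φ : ι → α} (hφ : φ.Surjective) : IsBoolEmb (Set.preimage φ) :=
  ⟨hφ.preimage_injective, fun _ _ => rfl, fun _ _ => rfl, fun _ => rfl, rfl, rfl⟩

-- The sets `S` with `i ∈ f S` form an ultrafilter on the finite type `α`, so it is principal.
lemma exists_eq_preimage [Finite α] {f : Set α → Set ι} (hf : IsBoolEmb f) :
    ∃ φ : ι → α, φ.Surjective ∧ f = Set.preimage φ := by
  obtain ⟨hinj, -, hinf, hcompl, hbot, htop⟩ := hf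
  have hmono : Monotone f := fun S T h => by
    rw [← inf_eq_left.2 h, hinf]
    exact Set.inter_subset_right
  let F (i : ι) : Ultrafilter α := Ultrafilter.ofComplNotMemIff
    { sets := {S | i ∈ f S}
      univ_sets := by
        change i ∈ f ⊤
        rw [htop]
        trivial
      sets_of_superset := fun hS h => hmono h hS
      inter_sets := fun hS hT => by
        change i ∈ f (_ ⊓ _)
        rw [hinf]
        exact ⟨hS, hT⟩ }
    fun S => by
      change i ∉ f Sᶜ ↔ i ∈ f S
      simp [hcompl]
  choose φ hφ using fun i => (F i).eq_pure_of_finite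
  have hf : f = Set.preimage φ := by
    ext S i
    change S ∈ F i ↔ _
    rw [hφ, Ultrafilter.mem_pure, Set.mem_preimage]
  refine ⟨φ, fun t => ?_, hf⟩
  have hne : (f {t}).Nonempty := by
    rw [Set.nonempty_iff_ne_empty, ← Set.bot_eq_empty, ← hbot]
    exact hinj.ne (Set.singleton_ne_empty t)
  rwa [hf] at hne

end IsBoolEmb

lemma exists_orderIso_set (A : Type u) [BooleanAlgebra A] [Finite A] :
    ∃ α : Type u, Finite α ∧ Nonempty (A ≃o Set α) := by
  classical
  have := Fintype.ofFinite A
  let := Fintype.toCompleteAtomicBooleanAlgebra A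
  exact ⟨{a : A // IsAtom a}, inferInstance, ⟨CompleteAtomicBooleanAlgebra.toSetOfIsAtom⟩⟩

lemma IsCopyOf.exists_eq_range_preimage {A : FiniteBoolAlg} [Finite α] (e : A.carrier ≃o Set α)
    {S : Set (Set ι)} (hS : IsCopyOf A S) :
    ∃ φ : ι → α, φ.Surjective ∧ S = Set.range (Set.preimage φ) := by
  obtain ⟨f, hf, rfl⟩ := hS
  obtain ⟨φ, hφ, hfφ⟩ := (hf.comp (.of_orderIso e.symm)).exists_eq_preimage
  exact ⟨φ, hφ, by rw [← hfφ, e.symm.surjective.range_comp]⟩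

end Duality

theorem dual_ramsey
    (A B : FiniteBoolAlg) (hAB : ∃ f : A.carrier → B.carrier, IsBoolEmb f)
    (k : ℕ) (hk : 2 ≤ k) :
    ∃ C : FiniteBoolAlg,
      ∀ χ : Set C.carrier → Fin k,
        ∃ g : B.carrier → C.carrier, IsBoolEmb g ∧
          ∀ S₁ S₂ : Set C.carrier, IsCopyOf A S₁ → IsCopyOf A S₂ →
            S₁ ⊆ Set.range g → S₂ ⊆ Set.range g → χ S₁ = χ S₂ := by
  obtain ⟨α, _, ⟨eA⟩⟩ := exists_orderIso_set A.carrier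
  obtain ⟨β, _, ⟨eB⟩⟩ := exists_orderIso_set B.carrier
  obtain ⟨N, hN⟩ := exists_surjective_ker_mono α β (Fin k)
  refine ⟨⟨Set (Fin N)⟩, fun χ => ?_⟩
  obtain ⟨w, hw, c, hc⟩ := hN fun r => χ (Set.range (Set.preimage (Quotient.mk r)))
  refine ⟨Set.preimage w ∘ eB, (IsBoolEmb.preimage hw).comp (.of_orderIso eB), ?_⟩
  suffices key : ∀ S, IsCopyOf A S → S ⊆ Set.range (Set.preimage w ∘ eB) → χ S = c from
    fun S₁ S₂ h₁ h₂ hS₁ hS₂ => (key S₁ h₁ hS₁).trans (key S₂ h₂ hS₂).symm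
  intro S hS hSw
  obtain ⟨φ, hφ, rfl⟩ := hS.exists_eq_range_preimage eA
  rw [eB.surjective.range_comp, range_preimage_subset_range_preimage_iff] at hSw
  obtain ⟨ψ, rfl⟩ : ∃ ψ, φ = ψ ∘ w :=
    ⟨φ ∘ Function.surjInv hw, funext fun i => hSw (Function.surjInv_eq hw (w i)).symm⟩
  rw [← hc ψ hφ.of_comp, range_preimage_mk_ker]
end
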